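/- arXiv:0811.2806 — 3 statements merged into one kernel-verified Lean document; each statement's English description precedes it below -/
import Mathlib

section
/- Define the upper approximation exponent μ⁺(s) = sup{ν : 0 < p/q - s < q^{-ν} has infinitely many rational solutions}. For irrational s, with Λ_s = {(m, sm+n)} and h_t = [[1,t],[0,1]], limsup_{t→+∞} log α₁(h_t Λ_s)/log t = 1 - 1/μ⁺(s). -/
open MeasureTheory Filter Matrix Real ENNReal

noncomputable section

/-- `SL(n, ℝ)`. -/
abbrev SLR (n : ℕ) := Matrix.SpecialLinearGroup (Fin n) ℝ

instance (n : ℕ) : TopologicalSpace (SLR n) :=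
  TopologicalSpace.induced (fun g => (g : Matrix (Fin n) (Fin n) ℝ)) inferInstance

/-- The image of `SL(n, ℤ)` in `SL(n, ℝ)`. -/
def latticeGamma (n : ℕ) : Subgroup (SLR n) :=
  (Matrix.SpecialLinearGroup.map (n := Fin n) (Int.castRingHom ℝ)).range

/-- The space of unimodular lattices `X_n = SL(n,ℝ)/SL(n,ℤ)`. -/
abbrev LatticeSpace (n : ℕ) := SLR n ⧸ latticeGamma n

instance (n : ℕ) : MeasurableSpace (LatticeSpace n) := borel _

/-- The real vector `g · m` of the lattice `g ℤⁿ` coming from the integer vector `m`. -/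
def vecOf (n : ℕ) (g : SLR n) (m : Fin n → ℤ) : Fin n → ℝ :=
  (g : Matrix (Fin n) (Fin n) ℝ).mulVec (fun i => (m i : ℝ))

/-- Euclidean norm on `Fin n → ℝ`. -/
def eNorm {n : ℕ} (v : Fin n → ℝ) : ℝ := ‖(WithLp.equiv 2 (Fin n → ℝ)).symm v‖

/-- The lattice `Λ` contains a nonzero vector lying in `A`. -/
def Intersects (n : ℕ) (Λ : LatticeSpace n) (A : Set (Fin n → ℝ)) : Prop :=
  ∀ g : SLR n, (QuotientGroup.mk g : LatticeSpace n) = Λ →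
    ∃ m : Fin n → ℤ, m ≠ 0 ∧ vecOf n g m ∈ A

/-- `α₁(Λ) = sup_{0 ≠ v ∈ Λ} 1/‖v‖` (Euclidean norm). -/
def alpha1 (n : ℕ) (Λ : LatticeSpace n) : ℝ :=
  sSup {r : ℝ | ∃ g : SLR n, (QuotientGroup.mk g : LatticeSpace n) = Λ ∧
    ∃ m : Fin n → ℤ, m ≠ 0 ∧ r = 1 / eNorm (vecOf n g m)}

/-- The horocycle matrix `h_t = [[1,t],[0,1]]`. -/
def hMat (t : ℝ) : SLR 2 := ⟨!![1, t; 0, 1], by simp [Matrix.det_fin_two_of]⟩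

/-- The matrix `[[1,0],[s,1]]`, so that `gMat s · ℤ² = Λ_s = {(m, sm+n)}`. -/
def gMat (s : ℝ) : SLR 2 := ⟨!![1, 0; s, 1], by simp [Matrix.det_fin_two_of]⟩

/-- The point `Λ_s` of the space of lattices. -/
def LambdaS (s : ℝ) : LatticeSpace 2 := QuotientGroup.mk (gMat s)

/-- The approximation exponent `μ(s)`, valued in `[0,∞]`:
the sup of all `ν` such that `|s - p/q| < q^{-ν}` has infinitely many rational solutions. -/
def approxExp (s : ℝ) : ℝ≥0∞ :=
  ⨆ (ν : ℝ) (_ : {pq : ℤ × ℕ+ |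
    |s - (pq.1 : ℝ) / ((pq.2 : ℕ) : ℝ)| < ((pq.2 : ℕ) : ℝ) ^ (-ν)}.Infinite),
    ENNReal.ofReal ν

/-- The upper approximation exponent `μ⁺(s)`: the sup of all `ν` such that
`0 < p/q - s < q^{-ν}` has infinitely many rational solutions. -/
def upperApproxExp (s : ℝ) : ℝ≥0∞ :=
  ⨆ (ν : ℝ) (_ : {pq : ℤ × ℕ+ |
    0 < (pq.1 : ℝ) / ((pq.2 : ℕ) : ℝ) - s ∧
      (pq.1 : ℝ) / ((pq.2 : ℕ) : ℝ) - s < ((pq.2 : ℕ) : ℝ) ^ (-ν)}.Infinite),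
    ENNReal.ofReal ν

/-! A rational `p/q` with `δ = p/q - s` gives the vector `(q(1 - tδ), -qδ)` of `h_t Λ_s`. At
`t = 1/δ` it has length `qδ = q/t`; if moreover `δ < q^{-ν}`, then `q < t^{1/ν}`, so
`α₁(h_t Λ_s) ≥ t^{1 - 1/ν}`. Conversely, a vector shorter than `1/2` must come from a rational with
`|1 - tδ| < 1/2`, and then its length is at least `qδ ≥ q/(2t)`. If only finitely many rationals
satisfy `0 < δ < q^{-ν}`, all those with `δ` of order `1/t` have `q` at least of order `t^{1/ν}`
once `t` is large, so `α₁(h_t Λ_s) = O(t^{1 - 1/ν})`. -/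

section GrowthExponent

open Asymptotics

/-- The growth exponent `limsup_{t → +∞} log f(t) / log t` of a function, taken in `ℝ`; it is
meaningful when `f` lies between two powers of `t`. -/
def growthExponent (f : ℝ → ℝ) : ℝ :=
  limsup (fun t => Real.log (f t) / Real.log t) atTop

variable {f : ℝ → ℝ} {a b c : ℝ}

lemma le_log_div_log {t x : ℝ} (ht : 1 < t) (h : t ^ a ≤ x) : a ≤ Real.log x / Real.log t := by
  have ht0 : 0 < t := zero_lt_one.trans ht
  rw [le_div_iff₀ (log_pos ht), ← log_rpow ht0]
  exact log_le_log (rpow_pos_of_pos ht0 a) h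

lemma eventually_log_div_log_le (hpos : ∀ᶠ t in atTop, 0 < f t)
    (hf : f =O[atTop] fun t => t ^ b) (hc : b < c) :
    ∀ᶠ t in atTop, Real.log (f t) / Real.log t ≤ c := by
  obtain ⟨K, hK, hfK⟩ := hf.exists_pos
  have hlog : ∀ᶠ t in atTop, Real.log K / (c - b) ≤ Real.log t :=
    tendsto_log_atTop.eventually_ge_atTop _
  filter_upwards [hfK.bound, hpos, hlog, eventually_gt_atTop 1] with t hft hf0 hKt ht
  have ht0 : 0 < t := zero_lt_one.trans ht
  rw [norm_of_nonneg hf0.le, norm_of_nonneg (rpow_nonneg ht0.le b)] at hft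
  have hlogf : Real.log (f t) ≤ Real.log K + b * Real.log t := by
    rw [← log_rpow ht0, ← log_mul hK.ne' (rpow_pos_of_pos ht0 b).ne']
    exact log_le_log hf0 hft
  rw [div_le_iff₀ (sub_pos.2 hc)] at hKt
  rw [div_le_iff₀ (log_pos ht)]
  linarith

lemma growthExponent_le (ha : ∀ᶠ t in atTop, t ^ a ≤ f t)
    (hb : f =O[atTop] fun t => t ^ b) : growthExponent f ≤ b := by
  have hpos : ∀ᶠ t in atTop, 0 < f t := by
    filter_upwards [ha, eventually_gt_atTop 0] with t hft ht
    exact (rpow_pos_of_pos ht a).trans_le hft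
  have hcobdd : IsCoboundedUnder (· ≤ ·) atTop fun t => Real.log (f t) / Real.log t := by
    refine isCoboundedUnder_le_of_eventually_le atTop (x := a) ?_
    filter_upwards [ha, eventually_gt_atTop 1] with t hft ht using le_log_div_log ht hft
  exact le_of_forall_gt_imp_ge_of_dense fun c hc =>
    limsup_le_of_le hcobdd (eventually_log_div_log_le hpos hb hc)

lemma le_growthExponent (hpos : ∀ᶠ t in atTop, 0 < f t)
    (ha : ∃ᶠ t in atTop, t ^ a ≤ f t) (hb : f =O[atTop] fun t => t ^ b) :
    a ≤ growthExponent f := by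
  refine le_limsup_of_frequently_le ?_ ⟨b + 1, eventually_log_div_log_le hpos hb (lt_add_one b)⟩
  exact (ha.and_eventually (eventually_gt_atTop 1)).mono fun t h => le_log_div_log h.2 h.1

end GrowthExponent

section Lattice

variable {n : ℕ}

lemma eNorm_neg (v : Fin n → ℝ) : eNorm (-v) = eNorm v :=
  norm_neg (WithLp.toLp 2 v)

lemma abs_apply_le_eNorm (v : Fin n → ℝ) (i : Fin n) : |v i| ≤ eNorm v :=
  PiLp.norm_apply_le (WithLp.toLp 2 v) i

lemma vecOf_neg (g : SLR n) (m : Fin n → ℤ) : vecOf n g (-m) = -vecOf n g m := by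
  rw [vecOf, vecOf, ← mulVec_neg]
  congr 1
  ext i
  simp only [Pi.neg_apply, Int.cast_neg]

lemma vecOf_mul_map (g : SLR n) (γ : SpecialLinearGroup (Fin n) ℤ) (m : Fin n → ℤ) :
    vecOf n (g * SpecialLinearGroup.map (Int.castRingHom ℝ) γ) m =
      vecOf n g ((γ : Matrix (Fin n) (Fin n) ℤ) *ᵥ m) := by
  have hcoe : ((g * SpecialLinearGroup.map (Int.castRingHom ℝ) γ : SLR n) :
      Matrix (Fin n) (Fin n) ℝ) = g * (γ : Matrix (Fin n) (Fin n) ℤ).map (Int.cast : ℤ → ℝ) := rfl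
  rw [vecOf, hcoe, ← mulVec_mulVec, vecOf]
  congr 1
  ext i
  simp [mulVec, dotProduct]

lemma exists_vecOf_eq_of_mk_eq {g g' : SLR n}
    (h : (QuotientGroup.mk g' : LatticeSpace n) = QuotientGroup.mk g)
    {m : Fin n → ℤ} (hm : m ≠ 0) :
    ∃ m' : Fin n → ℤ, m' ≠ 0 ∧ vecOf n g' m = vecOf n g m' := by
  obtain ⟨γ, hγ⟩ := QuotientGroup.eq.1 h.symm
  refine ⟨(γ : Matrix (Fin n) (Fin n) ℤ) *ᵥ m, fun h0 => hm ?_, ?_⟩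
  · exact eq_zero_of_mulVec_eq_zero (by simp) h0
  · rw [← vecOf_mul_map, hγ, mul_inv_cancel_left]

lemma alpha1_mk_le {g : SLR n} {C : ℝ} (hC : 0 ≤ C)
    (h : ∀ m : Fin n → ℤ, m ≠ 0 → 1 / eNorm (vecOf n g m) ≤ C) :
    alpha1 n (QuotientGroup.mk g) ≤ C := by
  refine Real.sSup_le ?_ hC
  rintro _ ⟨g', hg', m, hm, rfl⟩
  obtain ⟨m', hm', heq⟩ := exists_vecOf_eq_of_mk_eq hg' hm
  exact heq ▸ h m' hm'

lemma exists_one_div_eNorm_vecOf_le (g : SLR n) :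
    ∃ C, ∀ m : Fin n → ℤ, m ≠ 0 → 1 / eNorm (vecOf n g m) ≤ C := by
  set A := toEuclideanCLM (n := Fin n) (𝕜 := ℝ) ((g⁻¹ : SLR n) : Matrix (Fin n) (Fin n) ℝ)
  refine ⟨‖A‖, fun m hm => ?_⟩
  obtain ⟨i, hi⟩ := Function.ne_iff.1 hm
  have hinv : A (WithLp.toLp 2 (vecOf n g m)) = WithLp.toLp 2 fun i => (m i : ℝ) := by
    have hone : ((g⁻¹ : SLR n) : Matrix (Fin n) (Fin n) ℝ) * g = 1 :=
      congrArg Subtype.val (inv_mul_cancel g)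
    rw [toEuclideanCLM_toLp, vecOf, mulVec_mulVec, hone, one_mulVec]
  refine div_le_of_le_mul₀ (norm_nonneg _) (norm_nonneg _) ?_
  calc (1 : ℝ) ≤ |(m i : ℝ)| := by exact_mod_cast Int.one_le_abs hi
    _ ≤ eNorm fun i => (m i : ℝ) := abs_apply_le_eNorm (fun i => (m i : ℝ)) i
    _ = ‖A (WithLp.toLp 2 (vecOf n g m))‖ := by rw [hinv]; rfl
    _ ≤ ‖A‖ * eNorm (vecOf n g m) := A.le_opNorm _

lemma one_div_eNorm_vecOf_le_alpha1 (g : SLR n) {m : Fin n → ℤ} (hm : m ≠ 0) :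
    1 / eNorm (vecOf n g m) ≤ alpha1 n (QuotientGroup.mk g) := by
  obtain ⟨C, hC⟩ := exists_one_div_eNorm_vecOf_le g
  refine le_csSup ⟨C, ?_⟩ ⟨g, rfl, m, hm, rfl⟩
  rintro _ ⟨g', hg', m', hm', rfl⟩
  obtain ⟨m'', hm'', heq⟩ := exists_vecOf_eq_of_mk_eq hg' hm'
  exact heq ▸ hC m'' hm''

end Lattice

section UpperApproximants

variable {s ν : ℝ}

/-- The solutions of `0 < p/q - s < q^{-ν}`, as pairs `(p, q)`; fractions need not be reduced. -/
def upperApproximants (s ν : ℝ) : Set (ℤ × ℕ+) :=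
  {pq | 0 < (pq.1 : ℝ) / ((pq.2 : ℕ) : ℝ) - s ∧
    (pq.1 : ℝ) / ((pq.2 : ℕ) : ℝ) - s < ((pq.2 : ℕ) : ℝ) ^ (-ν)}

lemma finite_upperApproximants_le (hν : 0 ≤ ν) (Q : ℕ+) :
    {pq ∈ upperApproximants s ν | pq.2 ≤ Q}.Finite := by
  set N : ℤ := ⌈(Q : ℝ) * (|s| + 1)⌉
  refine (Set.finite_Icc ((-N, 1) : ℤ × ℕ+) (N, Q)).subset ?_
  rintro ⟨p, q⟩ ⟨⟨hpos, hlt⟩, hqQ : q ≤ Q⟩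
  have hq1 : (1 : ℝ) ≤ q := by exact_mod_cast q.pos
  have hqQ' : (q : ℝ) ≤ Q := by exact_mod_cast hqQ
  have hdist : (p : ℝ) / q - s < 1 :=
    hlt.trans_le (rpow_le_one_of_one_le_of_nonpos hq1 (by linarith))
  have hquot : |(p : ℝ) / q| ≤ |s| + 1 := by
    rw [abs_le]
    constructor <;> linarith [neg_abs_le s, le_abs_self s]
  have hp : |(p : ℝ)| ≤ N := calc
    |(p : ℝ)| = q * |(p : ℝ) / q| := by
      rw [abs_div, abs_of_pos (zero_lt_one.trans_le hq1)]; field_simp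
    _ ≤ Q * (|s| + 1) := by gcongr
    _ ≤ N := Int.le_ceil _
  have hpN : |p| ≤ N := by exact_mod_cast hp
  exact ⟨⟨(abs_le.1 hpN).1, one_le⟩, (abs_le.1 hpN).2, hqQ⟩

lemma exists_mem_upperApproximants_lt (hν : 0 ≤ ν) (hinf : (upperApproximants s ν).Infinite)
    (Q : ℕ+) : ∃ pq ∈ upperApproximants s ν, Q < pq.2 := by
  obtain ⟨pq, hpq, hnot⟩ := hinf.exists_notMem_finite (finite_upperApproximants_le hν Q)
  exact ⟨pq, hpq, not_le.1 fun hle => hnot ⟨hpq, hle⟩⟩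

/-- The left-hand condition confines `p/q - s` to an interval `(1/(2t), 3/(2t))`, which no fixed
rational meets for large `t`. -/
lemma eventually_rpow_le_denominator (hν : 0 < ν) (hfin : (upperApproximants s ν).Finite) :
    ∀ᶠ t : ℝ in atTop, ∀ (p : ℤ) (q : ℕ+), |1 - t * ((p : ℝ) / q - s)| < 1 / 2 →
      (t / 2) ^ ν⁻¹ ≤ q := by
  have hfar : ∀ᶠ t : ℝ in atTop, ∀ pq ∈ upperApproximants s ν,
      2 / t < (pq.1 : ℝ) / pq.2 - s := by
    rw [eventually_all_finite hfin]
    exact fun pq hpq => (tendsto_const_nhds.div_atTop tendsto_id).eventually_lt_const hpq.1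
  filter_upwards [hfar, eventually_gt_atTop 0] with t hfar ht p q hnear
  have hq : (0 : ℝ) < q := by exact_mod_cast q.pos
  obtain ⟨hlt, hgt⟩ := abs_lt.1 hnear
  have hδ : 0 < (p : ℝ) / q - s := pos_of_mul_pos_right (by linarith) ht.le
  have hδt : (p : ℝ) / q - s ≤ 2 / t := by rw [le_div_iff₀ ht]; linarith
  have hnot : (p, q) ∉ upperApproximants s ν := fun hmem => (hfar _ hmem).not_ge hδt
  have hqν : (q : ℝ) ^ (-ν) ≤ 2 / t := (not_lt.1 fun h => hnot ⟨hδ, h⟩).trans hδt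
  rw [rpow_neg hq.le, inv_le_comm₀ (rpow_pos_of_pos hq ν) (by positivity), inv_div] at hqν
  exact (rpow_inv_le_iff_of_pos (by positivity) hq.le hν).2 hqν

lemma ofReal_one_sub_inv (hν : 0 < ν) :
    ENNReal.ofReal (1 - ν⁻¹) = 1 - (ENNReal.ofReal ν)⁻¹ := by
  rw [ENNReal.ofReal_sub _ (by positivity), ENNReal.ofReal_one, ENNReal.ofReal_inv_of_pos hν]

lemma one_sub_inv_upperApproxExp (s : ℝ) :
    1 - (upperApproxExp s)⁻¹ =
      ⨆ (ν : ℝ) (_ : (upperApproximants s ν).Infinite), (1 - (ENNReal.ofReal ν)⁻¹) := by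
  change 1 - (⨆ (ν : ℝ) (_ : (upperApproximants s ν).Infinite), ENNReal.ofReal ν)⁻¹ = _
  simp only [ENNReal.inv_iSup, ENNReal.sub_iInf]

end UpperApproximants

section Horocycle

open Asymptotics

variable {s t ν : ℝ}

lemma vecOf_hMat_mul_gMat (s t : ℝ) (m : Fin 2 → ℤ) :
    vecOf 2 (hMat t * gMat s) m = ![m 0 + t * (s * m 0 + m 1), s * m 0 + m 1] := by
  have hcoe : ((hMat t * gMat s : SLR 2) : Matrix (Fin 2) (Fin 2) ℝ) =
      !![1, t; 0, 1] * !![1, 0; s, 1] := rfl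
  rw [vecOf, hcoe, ← mulVec_mulVec]
  ext i
  fin_cases i <;> simp [mulVec, dotProduct, Fin.sum_univ_two]

lemma vecOf_hMat_mul_gMat_of_rat (s t : ℝ) (p : ℤ) (q : ℕ+) :
    vecOf 2 (hMat t * gMat s) ![((q : ℕ) : ℤ), -p] =
      ![q * (1 - t * ((p : ℝ) / q - s)), -(q * ((p : ℝ) / q - s))] := by
  have hq : (q : ℝ) ≠ 0 := by exact_mod_cast q.ne_zero
  rw [vecOf_hMat_mul_gMat]
  congr 2
  all_goals
    simp only [cons_val_zero, cons_val_one, Int.cast_natCast, Int.cast_neg]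
    field_simp
    ring

lemma exists_rat_of_apply_zero_ne_zero {m : Fin 2 → ℤ} (hm : m 0 ≠ 0) :
    ∃ (p : ℤ) (q : ℕ+), m = ![((q : ℕ) : ℤ), -p] ∨ m = -![((q : ℕ) : ℤ), -p] := by
  refine ⟨-(m 0).sign * m 1, ⟨(m 0).natAbs, Int.natAbs_pos.2 hm⟩, ?_⟩
  rcases hm.lt_or_gt with h | h
  · right
    ext i
    fin_cases i <;> simp [Int.sign_eq_neg_one_of_neg h, abs_of_neg h]
  · left
    ext i
    fin_cases i <;> simp [Int.sign_eq_one_of_pos h, abs_of_pos h]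

lemma div_le_eNorm_vecOf_of_rat {T : ℝ} (ht : 0 < t) (hTt : T ≤ t) {p : ℤ} {q : ℕ+}
    (hq : |1 - t * ((p : ℝ) / q - s)| < 1 / 2 → T ≤ q) :
    T / (2 * t) ≤ eNorm (vecOf 2 (hMat t * gMat s) ![((q : ℕ) : ℤ), -p]) := by
  have hq1 : (1 : ℝ) ≤ q := by exact_mod_cast q.pos
  rw [vecOf_hMat_mul_gMat_of_rat]
  set δ : ℝ := (p : ℝ) / q - s
  rw [div_le_iff₀ (by positivity)]
  rcases lt_or_ge |1 - t * δ| (1 / 2) with hnear | hfar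
  · have hδ : 1 / 2 < t * δ := by linarith [(abs_lt.1 hnear).2]
    calc T ≤ q * (2 * (t * δ)) :=
          (hq hnear).trans (le_mul_of_one_le_right (by linarith) (by linarith))
      _ = q * δ * (2 * t) := by ring
      _ ≤ _ := by
        gcongr
        exact (le_abs_self _).trans ((abs_neg _).symm.trans_le (abs_apply_le_eNorm ![_, _] 1))
  · have hnorm : 1 / 2 ≤ eNorm ![q * (1 - t * δ), -(q * δ)] := calc
      (1 / 2 : ℝ) ≤ q * |1 - t * δ| := by nlinarith
      _ = |q * (1 - t * δ)| := by rw [abs_mul, abs_of_nonneg (by linarith : (0 : ℝ) ≤ q)]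
      _ ≤ _ := abs_apply_le_eNorm ![_, _] 0
    nlinarith

lemma div_le_eNorm_vecOf {T : ℝ} (ht : 0 < t) (hTt : T ≤ t)
    (hq : ∀ (p : ℤ) (q : ℕ+), |1 - t * ((p : ℝ) / q - s)| < 1 / 2 → T ≤ q)
    {m : Fin 2 → ℤ} (hm : m ≠ 0) : T / (2 * t) ≤ eNorm (vecOf 2 (hMat t * gMat s) m) := by
  by_cases hm0 : m 0 = 0
  · have hm1 : m 1 ≠ 0 := fun hm1 => hm (by ext i; fin_cases i <;> assumption)
    have hsnd : vecOf 2 (hMat t * gMat s) m 1 = m 1 := by simp [vecOf_hMat_mul_gMat, hm0]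
    calc T / (2 * t) ≤ 1 := (div_le_one (by positivity)).2 (by linarith)
      _ ≤ |(m 1 : ℝ)| := by exact_mod_cast Int.one_le_abs hm1
      _ ≤ _ := hsnd ▸ abs_apply_le_eNorm _ 1
  · obtain ⟨p, q, rfl | rfl⟩ := exists_rat_of_apply_zero_ne_zero hm0
    · exact div_le_eNorm_vecOf_of_rat ht hTt (hq p q)
    · rw [vecOf_neg, eNorm_neg]
      exact div_le_eNorm_vecOf_of_rat ht hTt (hq p q)

lemma alpha1_horocycle_le {T : ℝ} (hT : 0 < T) (hTt : T ≤ t)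
    (hq : ∀ (p : ℤ) (q : ℕ+), |1 - t * ((p : ℝ) / q - s)| < 1 / 2 → T ≤ q) :
    alpha1 2 (hMat t • LambdaS s) ≤ 2 * t / T := by
  have ht : 0 < t := hT.trans_le hTt
  refine alpha1_mk_le (by positivity) fun m hm => ?_
  calc 1 / eNorm (vecOf 2 (hMat t * gMat s) m) ≤ 1 / (T / (2 * t)) :=
        one_div_le_one_div_of_le (by positivity) (div_le_eNorm_vecOf ht hTt hq hm)
    _ = 2 * t / T := one_div_div _ _

lemma one_div_mul_le_alpha1_horocycle {p : ℤ} {q : ℕ+} (hδ : 0 < (p : ℝ) / q - s) :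
    1 / (q * ((p : ℝ) / q - s)) ≤ alpha1 2 (hMat ((p : ℝ) / q - s)⁻¹ • LambdaS s) := by
  have hm : ![((q : ℕ) : ℤ), -p] ≠ 0 := fun h => by simpa using congrFun h 0
  have hle := one_div_eNorm_vecOf_le_alpha1 (hMat ((p : ℝ) / q - s)⁻¹ * gMat s) hm
  rw [vecOf_hMat_mul_gMat_of_rat, inv_mul_cancel₀ hδ.ne', sub_self, mul_zero] at hle
  have hnorm : eNorm ![0, -(q * ((p : ℝ) / q - s))] = q * ((p : ℝ) / q - s) := by
    simp [eNorm, EuclideanSpace.norm_eq, Fin.sum_univ_two, Real.sqrt_sq_eq_abs, abs_of_pos hδ]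
  rwa [hnorm] at hle

lemma rpow_neg_two_le_alpha1_horocycle (s : ℝ) (ht : 2 ≤ t) :
    t ^ (-2 : ℝ) ≤ alpha1 2 (hMat t • LambdaS s) := by
  have hm : (![0, 1] : Fin 2 → ℤ) ≠ 0 := fun h => by simpa using congrFun h 1
  have hnorm : eNorm (vecOf 2 (hMat t * gMat s) ![0, 1]) = √(t ^ 2 + 1) := by
    simp [vecOf_hMat_mul_gMat, eNorm, EuclideanSpace.norm_eq, Fin.sum_univ_two]
  calc t ^ (-2 : ℝ) = 1 / t ^ 2 := by
        rw [rpow_neg (by positivity), Real.rpow_two, one_div]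
    _ ≤ 1 / √(t ^ 2 + 1) := by
      gcongr
      exact Real.sqrt_le_iff.2 ⟨by positivity, by nlinarith [sq_nonneg (t ^ 2 - 2)]⟩
    _ ≤ _ := hnorm ▸ one_div_eNorm_vecOf_le_alpha1 _ hm

lemma eventually_rpow_neg_two_le_alpha1_horocycle (s : ℝ) :
    ∀ᶠ t : ℝ in atTop, t ^ (-2 : ℝ) ≤ alpha1 2 (hMat t • LambdaS s) :=
  (eventually_ge_atTop 2).mono fun _ => rpow_neg_two_le_alpha1_horocycle s

lemma eventually_alpha1_horocycle_pos (s : ℝ) :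
    ∀ᶠ t : ℝ in atTop, 0 < alpha1 2 (hMat t • LambdaS s) := by
  filter_upwards [eventually_rpow_neg_two_le_alpha1_horocycle s, eventually_gt_atTop 0]
    with t hle ht using (rpow_pos_of_pos ht _).trans_le hle

lemma alpha1_horocycle_isBigO_rpow_one (s : ℝ) :
    (fun t : ℝ => alpha1 2 (hMat t • LambdaS s)) =O[atTop] fun t => t ^ (1 : ℝ) := by
  refine IsBigO.of_bound 2 ?_
  filter_upwards [eventually_ge_atTop 1, eventually_alpha1_horocycle_pos s] with t ht hpos
  rw [norm_of_nonneg hpos.le, Real.rpow_one, norm_of_nonneg (by linarith)]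
  simpa using alpha1_horocycle_le zero_lt_one ht fun p q _ => by exact_mod_cast q.pos

lemma alpha1_horocycle_isBigO_rpow_of_finite (hν : 1 ≤ ν) (hfin : (upperApproximants s ν).Finite) :
    (fun t : ℝ => alpha1 2 (hMat t • LambdaS s)) =O[atTop] fun t => t ^ (1 - ν⁻¹) := by
  refine IsBigO.of_bound (2 * 2 ^ ν⁻¹) ?_
  filter_upwards [eventually_rpow_le_denominator (zero_lt_one.trans_le hν) hfin,
    eventually_ge_atTop 2, eventually_alpha1_horocycle_pos s] with t hq ht hpos
  have hTt : (t / 2) ^ ν⁻¹ ≤ t := calc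
    (t / 2) ^ ν⁻¹ ≤ t / 2 := rpow_le_self_of_one_le (by linarith) (inv_le_one_of_one_le₀ hν)
    _ ≤ t := by linarith
  rw [norm_of_nonneg hpos.le, norm_of_nonneg (by positivity)]
  calc alpha1 2 (hMat t • LambdaS s) ≤ 2 * t / (t / 2) ^ ν⁻¹ :=
        alpha1_horocycle_le (by positivity) hTt hq
    _ = 2 * 2 ^ ν⁻¹ * t ^ (1 - ν⁻¹) := by
      rw [div_rpow (by linarith) zero_le_two, Real.rpow_sub (by linarith), Real.rpow_one]
      field_simp

lemma rpow_le_alpha1_horocycle_of_mem_upperApproximants (hν : 0 < ν) {p : ℤ} {q : ℕ+}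
    (hpq : (p, q) ∈ upperApproximants s ν) :
    ((p : ℝ) / q - s)⁻¹ ^ (1 - ν⁻¹) ≤ alpha1 2 (hMat ((p : ℝ) / q - s)⁻¹ • LambdaS s) := by
  obtain ⟨hδ : 0 < (p : ℝ) / q - s, hlt : (p : ℝ) / q - s < (q : ℝ) ^ (-ν)⟩ := hpq
  refine le_trans ?_ (one_div_mul_le_alpha1_horocycle hδ)
  set δ : ℝ := (p : ℝ) / q - s
  have hq : (0 : ℝ) < q := by exact_mod_cast q.pos
  have hqδ : (q : ℝ) ≤ δ⁻¹ ^ ν⁻¹ := by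
    rw [le_rpow_inv_iff_of_pos hq.le (by positivity) hν, le_inv_comm₀ (by positivity) hδ,
      ← rpow_neg hq.le]
    exact hlt.le
  calc δ⁻¹ ^ (1 - ν⁻¹) = δ⁻¹ / δ⁻¹ ^ ν⁻¹ := by rw [Real.rpow_sub (by positivity), Real.rpow_one]
    _ ≤ δ⁻¹ / q := by gcongr
    _ = 1 / (q * δ) := by field_simp

lemma frequently_rpow_le_alpha1_horocycle (hν : 0 < ν)
    (hinf : (upperApproximants s ν).Infinite) :
    ∃ᶠ t : ℝ in atTop, t ^ (1 - ν⁻¹) ≤ alpha1 2 (hMat t • LambdaS s) := by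
  rw [frequently_atTop]
  intro T
  obtain ⟨R, hR⟩ := eventually_atTop.1 ((tendsto_rpow_atTop hν).eventually_ge_atTop T)
  obtain ⟨⟨p, q⟩, hpq, hQ⟩ := exists_mem_upperApproximants_lt hν.le hinf ⌈R⌉₊.succPNat
  have hq : (0 : ℝ) < q := by exact_mod_cast q.pos
  have hRq : R ≤ q := by
    have hceil : ⌈R⌉₊ ≤ (q : ℕ) := (Nat.le_succ _).trans (PNat.coe_le_coe _ _ |>.2 hQ.le)
    exact (Nat.le_ceil R).trans (by exact_mod_cast hceil)
  refine ⟨_, (hR q hRq).trans ?_, rpow_le_alpha1_horocycle_of_mem_upperApproximants hν hpq⟩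
  rw [le_inv_comm₀ (by positivity) hpq.1, ← rpow_neg hq.le]
  exact hpq.2.le

lemma one_sub_inv_le_growthExponent_alpha1 (hν : 0 < ν)
    (hinf : (upperApproximants s ν).Infinite) :
    1 - ν⁻¹ ≤ growthExponent fun t => alpha1 2 (hMat t • LambdaS s) :=
  le_growthExponent (eventually_alpha1_horocycle_pos s)
    (frequently_rpow_le_alpha1_horocycle hν hinf) (alpha1_horocycle_isBigO_rpow_one s)

lemma growthExponent_alpha1_le_one_sub_inv (hν : 1 ≤ ν)
    (hfin : (upperApproximants s ν).Finite) :
    growthExponent (fun t => alpha1 2 (hMat t • LambdaS s)) ≤ 1 - ν⁻¹ :=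
  growthExponent_le (eventually_rpow_neg_two_le_alpha1_horocycle s)
    (alpha1_horocycle_isBigO_rpow_of_finite hν hfin)

lemma growthExponent_alpha1_le_one (s : ℝ) :
    growthExponent (fun t => alpha1 2 (hMat t • LambdaS s)) ≤ 1 :=
  growthExponent_le (eventually_rpow_neg_two_le_alpha1_horocycle s)
    (alpha1_horocycle_isBigO_rpow_one s)

end Horocycle

theorem horocycle_upper_diophantine_general (s : ℝ) :
    ENNReal.ofReal (Filter.limsup
        (fun t : ℝ => Real.log (alpha1 2 (QuotientGroup.mk (hMat t * gMat s))) / Real.log t)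
        atTop) = 1 - (upperApproxExp s)⁻¹ := by
  change ENNReal.ofReal (growthExponent fun t => alpha1 2 (hMat t • LambdaS s)) = _
  rw [one_sub_inv_upperApproxExp]
  refine le_antisymm (le_of_forall_lt_imp_le_of_dense fun c hc => ?_)
    (iSup₂_le fun ν hinf => ?_)
  · -- Every real `x` with `0 ≤ x < 1` is `1 - 1/ν` for `ν = 1/(1 - x) ≥ 1`.
    lift c to NNReal using hc.ne_top with x
    have hx : (x : ℝ) < growthExponent fun t => alpha1 2 (hMat t • LambdaS s) :=
      (ENNReal.lt_ofReal_iff_toReal_lt ENNReal.coe_ne_top).1 hc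
    have hx1 : 0 < 1 - (x : ℝ) := sub_pos.2 (hx.trans_le (growthExponent_alpha1_le_one s))
    have hν : 1 ≤ (1 - (x : ℝ))⁻¹ := (one_le_inv₀ hx1).2 (by linarith [x.coe_nonneg])
    have hinf : (upperApproximants s (1 - (x : ℝ))⁻¹).Infinite := fun hfin => by
      linarith [growthExponent_alpha1_le_one_sub_inv hν hfin, inv_inv (1 - (x : ℝ))]
    refine le_iSup₂_of_le _ hinf (le_of_eq ?_)
    rw [← ofReal_one_sub_inv (by positivity), inv_inv, _root_.sub_sub_cancel,
      ENNReal.ofReal_coe_nnreal]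
  · rcases le_or_gt ν 0 with hν | hν
    · simp [ENNReal.ofReal_of_nonpos hν]
    · rw [← ofReal_one_sub_inv hν]
      exact ENNReal.ofReal_le_ofReal (one_sub_inv_le_growthExponent_alpha1 hν hinf)

/-- For irrational `s`, `limsup_{t→+∞} log α₁(h_t Λ_s)/log t = 1 - 1/μ⁺(s)`
(interpreted as `1` when `μ⁺(s) = ∞`). -/
theorem horocycle_upper_diophantine (s : ℝ) (hs : Irrational s) :
    ENNReal.ofReal (Filter.limsup
        (fun t : ℝ => Real.log (alpha1 2 (QuotientGroup.mk (hMat t * gMat s))) / Real.log t)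
        atTop) = 1 - (upperApproxExp s)⁻¹ :=
  horocycle_upper_diophantine_general s
end
end

section
/- Let s be irrational with convergents p_n/q_n and r_n = log q_{n+1}/log q_n. Then the upper and lower approximation exponents satisfy μ⁺(s) = 1 + limsup_{n→∞} r_{2n+1} and μ⁻(s) = 1 + limsup_{n→∞} r_{2n}, where μ⁺ (resp. μ⁻) measures approximation by rationals greater (resp. less) than s. In particular there exist irrationals s with μ⁺(s) ≠ μ⁻(s). -/
open Filter Real ENNReal

noncomputable section

/-- The lower approximation exponent `μ⁻(s)` (approximation by rationals below `s`). -/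
def lowerApproxExp (s : ℝ) : ℝ≥0∞ :=
  ⨆ (ν : ℝ) (_ : {pq : ℤ × ℕ+ |
    0 < s - (pq.1 : ℝ) / ((pq.2 : ℕ) : ℝ) ∧
      s - (pq.1 : ℝ) / ((pq.2 : ℕ) : ℝ) < ((pq.2 : ℕ) : ℝ) ^ (-ν)}.Infinite),
    ENNReal.ofReal ν

/-! The convergents of `s` satisfy `1 / (2 q_n q_{n+1}) ≤ |s - p_n / q_n| ≤ 1 / (q_n q_{n+1})`, and
lie above `s` exactly when `n` is odd. Since `q_{n+1} = q_n ^ r_n`, the `n`-th one approximates `s`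
with exponent about `1 + r_n ≥ 2`; by Legendre's theorem every fraction doing better than
`1 / (2 q ^ 2)` is a convergent, so on either side of `s` only the `r_n` of one parity matter.

For the separation of `μ⁺` and `μ⁻`, the partial sums of Liouville's number `L = ∑ m ^ (-i!)` lie
below `L` and approximate it better than any power of their denominators. If `p / q` lies above `L`
and `a / Q` is a partial sum, then `p / q - a / Q ≥ 1 / (q Q)`; some `Q ≤ 8 q ^ 3` has remainder
`L - a / Q ≤ 1 / (2 q Q)`, so `p / q - L ≥ 1 / (16 q ^ 4)` and `μ⁺(L) ≤ 4`. -/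

section Convergents

open GenContFract

variable {K : Type*} [Field K] [LinearOrder K] [FloorRing K]

theorem exists_int_contsAux_of_eq (v : K) (n : ℕ) :
    ∃ a b : ℤ, (GenContFract.of v).contsAux n = ⟨(a : K), (b : K)⟩ := by
  induction n using Nat.twoStepInduction with
  | zero => exact ⟨1, 0, by simp⟩
  | one => exact ⟨⌊v⌋, 1, by simp⟩
  | more n ih ih' =>
    by_cases hn : (GenContFract.of v).TerminatedAt n
    · rwa [contsAux_stable_step_of_terminated hn]
    · obtain ⟨a, b, h⟩ := ih
      obtain ⟨a', b', h'⟩ := ih'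
      obtain ⟨gp, hgp⟩ := Option.ne_none_iff_exists'.1 hn
      obtain ⟨ha, z, hz⟩ := of_partNum_eq_one_and_exists_int_partDen_eq hgp
      refine ⟨z * a' + a, z * b' + b, ?_⟩
      rw [contsAux_recurrence hgp h h', ha, hz]
      push_cast
      simp only [one_mul]

variable [IsStrictOrderedRing K] {v : K} {n : ℕ}

theorem monotone_dens_of (v : K) : Monotone (GenContFract.of v).dens :=
  monotone_nat_of_le_succ fun _ => of_den_mono

theorem one_le_dens_of (v : K) (n : ℕ) : 1 ≤ (GenContFract.of v).dens n := by
  simpa only [zeroth_den_eq_one] using monotone_dens_of v n.zero_le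

theorem dens_of_pos (v : K) (n : ℕ) : 0 < (GenContFract.of v).dens n :=
  zero_lt_one.trans_le (one_le_dens_of v n)

theorem dens_mul_dens_succ_pos (v : K) (n : ℕ) :
    0 < (GenContFract.of v).dens n * (GenContFract.of v).dens (n + 1) :=
  mul_pos (dens_of_pos v n) (dens_of_pos v (n + 1))

theorem tendsto_dens_of_atTop (hv : ¬(GenContFract.of v).Terminates) :
    Tendsto (GenContFract.of v).dens atTop atTop := by
  refine tendsto_atTop_mono' atTop ?_ tendsto_natCast_atTop_atTop
  filter_upwards [eventually_ge_atTop 5] with n hn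
  calc (n : K) ≤ (Nat.fib (n + 1) : K) := by
        exact_mod_cast (Nat.le_fib_self hn).trans Nat.fib_le_fib_succ
    _ ≤ (GenContFract.of v).dens n :=
        succ_nth_fib_le_of_nth_den (Or.inr fun hterm => hv ⟨_, hterm⟩)

theorem exists_int_nums_dens_of_eq (v : K) (n : ℕ) :
    ∃ (p : ℤ) (q : ℕ), (GenContFract.of v).nums n = p ∧ (GenContFract.of v).dens n = q := by
  obtain ⟨p, b, h⟩ := exists_int_contsAux_of_eq v (n + 1)
  have hp : (GenContFract.of v).nums n = p := congrArg Pair.a h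
  have hb : (GenContFract.of v).dens n = b := congrArg Pair.b h
  lift b to ℕ using by exact_mod_cast hb ▸ (dens_of_pos v n).le
  exact ⟨p, b, hp, by exact_mod_cast hb⟩

theorem isCoprime_of_nums_eq_of_dens_eq {p q : ℤ} (hp : (GenContFract.of v).nums n = p)
    (hq : (GenContFract.of v).dens n = q) : IsCoprime p q := by
  induction n with
  | zero =>
    rw [zeroth_den_eq_one] at hq
    rw [← show (1 : ℤ) = q by exact_mod_cast hq]
    exact isCoprime_one_right
  | succ n ih =>
    by_cases hn : (GenContFract.of v).TerminatedAt n
    · exact ih (nums_stable_of_terminated n.le_succ hn ▸ hp)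
        (dens_stable_of_terminated n.le_succ hn ▸ hq)
    · obtain ⟨p₀, q₀, hp₀, hq₀⟩ := exists_int_nums_dens_of_eq v n
      have hdet : p₀ * q - q₀ * p = (-1) ^ (n + 1) := by
        have := (SimpContFract.of v).determinant hn
        change (GenContFract.of v).nums n * (GenContFract.of v).dens (n + 1) -
          (GenContFract.of v).dens n * (GenContFract.of v).nums (n + 1) = _ at this
        rw [hp, hq, hp₀, hq₀] at this
        exact_mod_cast this
      have hsq : (-1 : ℤ) ^ (n + 1) * (-1) ^ (n + 1) = 1 := by rw [← mul_pow]; simp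
      exact ⟨-(-1) ^ (n + 1) * q₀, (-1) ^ (n + 1) * p₀,
        by linear_combination (-1) ^ (n + 1) * hdet + hsq⟩

theorem dens_of_le_of_convs_eq_div {p : ℤ} {q : ℕ} (hq : 0 < q)
    (h : (GenContFract.of v).convs n = (p : K) / q) : (GenContFract.of v).dens n ≤ q := by
  obtain ⟨a, b, ha, hb⟩ := exists_int_nums_dens_of_eq v n
  have hb0 : 0 < b := by exact_mod_cast hb ▸ dens_of_pos v n
  have hcop : IsCoprime a (b : ℤ) := isCoprime_of_nums_eq_of_dens_eq ha (by exact_mod_cast hb)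
  rw [conv_eq_num_div_den, ha, hb, div_eq_div_iff (by positivity) (by positivity)] at h
  have hcross : a * q = p * b := by exact_mod_cast h
  have hdvd : (b : ℤ) ∣ q := hcop.symm.dvd_of_dvd_mul_left ⟨p, by rw [hcross, mul_comm]⟩
  rw [hb]
  exact_mod_cast Nat.le_of_dvd hq (Int.natCast_dvd_natCast.1 hdvd)

theorem exists_sub_convs_of_eq_neg_one_pow_div (hn : ¬(GenContFract.of v).TerminatedAt n) :
    ∃ θ ∈ Set.Ico (0 : K) 1, v - (GenContFract.of v).convs n =
      (-1) ^ n / ((GenContFract.of v).dens n *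
        ((GenContFract.of v).dens (n + 1) + θ * (GenContFract.of v).dens n)) := by
  obtain ⟨gp, hgp⟩ := Option.ne_none_iff_exists'.1 hn
  obtain ⟨i', hi', hb⟩ := IntFractPair.exists_succ_get?_stream_of_gcf_of_get?_eq_some hgp
  obtain ⟨i, hi, hne, rfl⟩ := IntFractPair.succ_nth_stream_eq_some_iff.1 hi'
  have hrec : (GenContFract.of v).dens (n + 1) =
      gp.b * (GenContFract.of v).dens n + ((GenContFract.of v).contsAux n).b := by
    rw [den_eq_conts_b, nth_cont_eq_succ_nth_contAux, contsAux_recurrence hgp rfl rfl,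
      of_partNum_eq_one (partNum_eq_s_a hgp)]
    simp only [one_mul, den_eq_conts_b, nth_cont_eq_succ_nth_contAux]
  have hfloor : (⌊i.fr⁻¹⌋ : K) = gp.b := hb
  refine ⟨Int.fract i.fr⁻¹, ⟨Int.fract_nonneg _, Int.fract_lt_one _⟩, ?_⟩
  have herr := sub_convs_eq hi
  simp only [hne, if_false] at herr
  rw [herr, hrec, ← hfloor, Int.fract, den_eq_conts_b, nth_cont_eq_succ_nth_contAux]
  ring

theorem neg_one_pow_mul_convs_sub_mem_Icc (hn : ¬(GenContFract.of v).TerminatedAt n) :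
    (-1) ^ (n + 1) * ((GenContFract.of v).convs n - v) ∈
      Set.Icc (1 / (2 * ((GenContFract.of v).dens n * (GenContFract.of v).dens (n + 1))))
        (1 / ((GenContFract.of v).dens n * (GenContFract.of v).dens (n + 1))) := by
  obtain ⟨θ, ⟨hθ0, hθ1⟩, hθ⟩ := exists_sub_convs_of_eq_neg_one_pow_div hn
  have hq := dens_of_pos v n
  have hq' := dens_of_pos v (n + 1)
  have hle : (GenContFract.of v).dens n ≤ (GenContFract.of v).dens (n + 1) := of_den_mono
  have herr : (-1) ^ (n + 1) * ((GenContFract.of v).convs n - v) =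
      1 / ((GenContFract.of v).dens n *
        ((GenContFract.of v).dens (n + 1) + θ * (GenContFract.of v).dens n)) := by
    have hsq : (-1 : K) ^ n * (-1) ^ n = 1 := by rw [← mul_pow]; simp
    calc _ = (-1) ^ n * (v - (GenContFract.of v).convs n) := by ring
      _ = _ := by rw [hθ, ← mul_div_assoc, hsq]
  rw [herr, ← mul_left_comm]
  constructor
  · gcongr
    nlinarith
  · gcongr
    exact le_add_of_nonneg_right (by positivity)

end Convergents

theorem not_terminates_of_irrational {s : ℝ} (hs : Irrational s) :
    ¬(GenContFract.of s).Terminates := by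
  rw [GenContFract.terminates_iff_rat]
  rintro ⟨q, rfl⟩
  exact q.not_irrational hs

theorem not_terminatedAt_of_irrational {s : ℝ} (hs : Irrational s) (n : ℕ) :
    ¬(GenContFract.of s).TerminatedAt n :=
  fun hn => not_terminates_of_irrational hs ⟨n, hn⟩

theorem exists_convs_eq_div_of_abs_sub_lt {s : ℝ} {p : ℤ} {q : ℕ} (hq : 0 < q)
    (h : |s - (p : ℝ) / q| < 1 / (2 * (q : ℝ) ^ 2)) :
    ∃ n, (GenContFract.of s).convs n = (p : ℝ) / q := by
  have hcast : (((p : ℚ) / q : ℚ) : ℝ) = (p : ℝ) / q := by push_cast; rfl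
  have hdvd : ((p : ℚ) / q).den ∣ q := by
    simpa [Rat.divInt_eq_div, Int.natCast_dvd_natCast] using Rat.den_dvd p q
  have hden : (((p : ℚ) / q).den : ℝ) ≤ q := by exact_mod_cast Nat.le_of_dvd hq hdvd
  rw [← hcast] at h ⊢
  refine Real.exists_convs_eq_rat (h.trans_le ?_)
  have : (0 : ℝ) < ((p : ℚ) / q).den := by exact_mod_cast Rat.den_pos _
  gcongr

/-- The pairs `(p, q)` with `0 < ε * (p / q - s) < q ^ (-ν)`; `ε = 1` selects the fractions above
`s`, and `ε = -1` those below. -/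
def oneSidedApprox (ε s ν : ℝ) : Set (ℤ × ℕ+) :=
  {pq | 0 < ε * ((pq.1 : ℝ) / ((pq.2 : ℕ) : ℝ) - s) ∧
    ε * ((pq.1 : ℝ) / ((pq.2 : ℕ) : ℝ) - s) < ((pq.2 : ℕ) : ℝ) ^ (-ν)}

/-- The one-sided approximation exponent: `μ⁺(s)` for `ε = 1` and `μ⁻(s)` for `ε = -1`. -/
def oneSidedApproxExp (ε s : ℝ) : ℝ≥0∞ :=
  ⨆ (ν : ℝ) (_ : (oneSidedApprox ε s ν).Infinite), ENNReal.ofReal ν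

theorem upperApproxExp_eq_oneSidedApproxExp (s : ℝ) :
    upperApproxExp s = oneSidedApproxExp 1 s := by
  simp only [upperApproxExp, oneSidedApproxExp, oneSidedApprox, one_mul]

theorem lowerApproxExp_eq_oneSidedApproxExp (s : ℝ) :
    lowerApproxExp s = oneSidedApproxExp (-1) s := by
  simp only [lowerApproxExp, oneSidedApproxExp, oneSidedApprox, neg_one_mul, neg_sub]

section OneSidedApprox

variable {ε s : ℝ}

theorem finite_int_abs_mul_div_sub_lt (hε : ε ≠ 0) (s r : ℝ) {q : ℕ} (hq : 0 < q) :
    {p : ℤ | |ε * ((p : ℝ) / q - s)| < r}.Finite := by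
  refine (Set.finite_Icc ⌊q * (s - r / |ε|)⌋ ⌈q * (s + r / |ε|)⌉).subset fun p hp => ?_
  have hq' : (0 : ℝ) < q := by exact_mod_cast hq
  rw [Set.mem_ofPred_eq, abs_mul, ← lt_div_iff₀' (abs_pos.2 hε), abs_sub_lt_iff,
    sub_lt_iff_lt_add', sub_lt_comm, lt_div_iff₀' hq', div_lt_iff₀' hq'] at hp
  exact ⟨Int.floor_le_iff.2 (hp.2.trans (lt_add_one _)),
    Int.le_ceil_iff.2 ((sub_one_lt _).trans hp.1)⟩

theorem infinite_oneSidedApprox_iff_frequently (hε : ε ≠ 0) {ν : ℝ} :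
    (oneSidedApprox ε s ν).Infinite ↔ ∃ᶠ q : ℕ in atTop, ∃ p : ℤ,
      0 < ε * ((p : ℝ) / q - s) ∧ ε * ((p : ℝ) / q - s) < (q : ℝ) ^ (-ν) := by
  have himage : (fun pq : ℤ × ℕ+ => (pq.2 : ℕ)) '' oneSidedApprox ε s ν = {q : ℕ | 0 < q ∧
      ∃ p : ℤ, 0 < ε * ((p : ℝ) / q - s) ∧ ε * ((p : ℝ) / q - s) < (q : ℝ) ^ (-ν)} := by
    ext q
    constructor
    · rintro ⟨⟨p, q⟩, hpq, rfl⟩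
      exact ⟨q.pos, p, hpq⟩
    · rintro ⟨hq, p, hpq⟩
      exact ⟨(p, ⟨q, hq⟩), hpq, rfl⟩
  have hfibers (q : ℕ) :
      (oneSidedApprox ε s ν ∩ (fun pq : ℤ × ℕ+ => (pq.2 : ℕ)) ⁻¹' {q}).Finite := by
    rcases q.eq_zero_or_pos with rfl | hq
    · exact Set.finite_empty.subset fun pq hpq => pq.2.ne_zero hpq.2
    · refine ((finite_int_abs_mul_div_sub_lt hε s ((q : ℝ) ^ (-ν)) hq).prod
        (Set.finite_singleton ⟨q, hq⟩)).subset ?_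
      rintro ⟨p, q⟩ ⟨⟨hpos, hlt⟩, rfl⟩
      exact ⟨by rwa [Set.mem_ofPred_eq, abs_of_pos hpos], rfl⟩
  calc (oneSidedApprox ε s ν).Infinite
      ↔ ((fun pq : ℤ × ℕ+ => (pq.2 : ℕ)) '' oneSidedApprox ε s ν).Infinite :=
        ⟨fun hinf hfin => hinf (hfin.of_finite_fibers _ fun q _ => hfibers q),
          Set.Infinite.of_image _⟩
    _ ↔ _ := by
      rw [himage, ← Nat.frequently_atTop_iff_infinite]
      exact ⟨fun h => h.mono fun q hq => hq.2,
        fun h => (h.and_eventually (eventually_gt_atTop 0)).mono fun q hq => hq.symm⟩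

theorem ofReal_le_oneSidedApproxExp (hε : ε ≠ 0) {ν : ℝ} (h : ∃ᶠ q : ℕ in atTop, ∃ p : ℤ,
      0 < ε * ((p : ℝ) / q - s) ∧ ε * ((p : ℝ) / q - s) < (q : ℝ) ^ (-ν)) :
    ENNReal.ofReal ν ≤ oneSidedApproxExp ε s :=
  le_iSup₂_of_le ν ((infinite_oneSidedApprox_iff_frequently hε).2 h) le_rfl

theorem oneSidedApproxExp_le_of_eventually (hε : ε ≠ 0) {C d : ℝ} (hC : 0 < C)
    (h : ∀ᶠ q : ℕ in atTop, ∀ p : ℤ, 0 < ε * ((p : ℝ) / q - s) →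
      1 / (C * (q : ℝ) ^ d) ≤ ε * ((p : ℝ) / q - s)) :
    oneSidedApproxExp ε s ≤ ENNReal.ofReal d := by
  refine iSup₂_le fun ν hν => ENNReal.ofReal_le_ofReal ?_
  by_contra! hlt
  have hlarge : ∀ᶠ q : ℕ in atTop, C < (q : ℝ) ^ (ν - d) :=
    ((tendsto_rpow_atTop (sub_pos.2 hlt)).comp tendsto_natCast_atTop_atTop).eventually_gt_atTop C
  obtain ⟨q, ⟨p, hpos, hclose⟩, hfar, hCq, hq⟩ :=
    (((infinite_oneSidedApprox_iff_frequently hε).1 hν).and_eventually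
      (h.and (hlarge.and (eventually_gt_atTop 0)))).exists
  have hq : (0 : ℝ) < q := by exact_mod_cast hq
  have hinv : 1 / (C * (q : ℝ) ^ d) < 1 / (q : ℝ) ^ ν := by
    rw [one_div ((q : ℝ) ^ ν), ← Real.rpow_neg hq.le]
    exact (hfar p hpos).trans_lt hclose
  rw [one_div_lt_one_div (by positivity) (by positivity)] at hinv
  rw [Real.rpow_sub hq, lt_div_iff₀ (by positivity)] at hCq
  exact hinv.not_gt hCq

end OneSidedApprox

section Irrational

variable {s : ℝ}

theorem neg_one_pow_succ_eq_of_convs_sub_pos {ε : ℝ} (hs : Irrational s) (hε : |ε| = 1) {n : ℕ}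
    (h : 0 < ε * ((GenContFract.of s).convs n - s)) : (-1) ^ (n + 1) = ε := by
  have hpos : 0 < (-1) ^ (n + 1) * ((GenContFract.of s).convs n - s) :=
    (one_div_pos.2 (mul_pos two_pos (dens_mul_dens_succ_pos s n))).trans_le
      (neg_one_pow_mul_convs_sub_mem_Icc (not_terminatedAt_of_irrational hs n)).1
  rcases eq_or_eq_neg_of_abs_eq hε with rfl | rfl <;>
    rcases neg_one_pow_eq_or ℝ (n + 1) with hn | hn <;> rw [hn] at hpos ⊢ <;> linarith

theorem eventually_one_div_le_of_eventually_dens_le {ε c : ℝ} (hs : Irrational s) (hε : |ε| = 1)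
    (hc : 1 ≤ c) (h : ∀ᶠ n : ℕ in atTop, (-1) ^ (n + 1) = ε →
      (GenContFract.of s).dens (n + 1) ≤ (GenContFract.of s).dens n ^ c) :
    ∀ᶠ q : ℕ in atTop, ∀ p : ℤ, 0 < ε * ((p : ℝ) / q - s) →
      1 / (2 * (q : ℝ) ^ (1 + c)) ≤ ε * ((p : ℝ) / q - s) := by
  obtain ⟨N, hN⟩ := eventually_atTop.1 h
  filter_upwards [tendsto_natCast_atTop_atTop.eventually_ge_atTop ((GenContFract.of s).dens N),
    eventually_ge_atTop 1] with q hNq hq p hpos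
  have hq1 : (1 : ℝ) ≤ q := by exact_mod_cast hq
  have hq0 : (0 : ℝ) < q := by positivity
  by_contra! hlt
  have habs : |s - (p : ℝ) / q| = ε * ((p : ℝ) / q - s) := by
    rw [← abs_of_pos hpos, abs_mul, hε, one_mul, abs_sub_comm]
  have hsq : (q : ℝ) ^ 2 ≤ (q : ℝ) ^ (1 + c) := by
    exact_mod_cast Real.rpow_le_rpow_of_exponent_le hq1 (show (2 : ℕ) ≤ 1 + c by norm_num; linarith)
  obtain ⟨n, hn⟩ := exists_convs_eq_div_of_abs_sub_lt hq
    (habs ▸ hlt.trans_le (by gcongr))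
  rw [← hn] at hpos hlt
  have hsign := neg_one_pow_succ_eq_of_convs_sub_pos hs hε hpos
  have hdens : (GenContFract.of s).dens n ≤ q := dens_of_le_of_convs_eq_div hq hn
  have hdens' : (GenContFract.of s).dens (n + 1) ≤ (q : ℝ) ^ c := by
    rcases le_or_gt N n with hNn | hnN
    · exact (hN n hNn hsign).trans
        (Real.rpow_le_rpow (dens_of_pos s n).le hdens (zero_le_one.trans hc))
    · exact ((monotone_dens_of s hnN).trans hNq).trans (Real.self_le_rpow_of_one_le hq1 hc)
  refine hlt.not_ge ?_
  calc 1 / (2 * (q : ℝ) ^ (1 + c))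
      ≤ 1 / (2 * ((GenContFract.of s).dens n * (GenContFract.of s).dens (n + 1))) := by
        rw [Real.rpow_one_add' hq0.le (by positivity)]
        have := dens_mul_dens_succ_pos s n
        gcongr
        exact (dens_of_pos s _).le
    _ ≤ ε * ((GenContFract.of s).convs n - s) := by
        rw [← hsign]
        exact (neg_one_pow_mul_convs_sub_mem_Icc (not_terminatedAt_of_irrational hs n)).1

theorem ofReal_one_add_le_oneSidedApproxExp_of_frequently {ε c : ℝ} (hs : Irrational s)
    (h : ∃ᶠ n : ℕ in atTop, (-1) ^ (n + 1) = ε ∧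
      (GenContFract.of s).dens n ^ c < (GenContFract.of s).dens (n + 1)) :
    ENNReal.ofReal (1 + c) ≤ oneSidedApproxExp ε s := by
  have hε : ε ≠ 0 := by
    obtain ⟨n, rfl, -⟩ := h.exists
    exact pow_ne_zero _ (by norm_num)
  choose p q hp hq using exists_int_nums_dens_of_eq s
  have hq_tendsto : Tendsto q atTop atTop := by
    rw [← tendsto_natCast_atTop_iff (R := ℝ)]
    exact (tendsto_dens_of_atTop (not_terminates_of_irrational hs)).congr hq
  refine ofReal_le_oneSidedApproxExp hε (hq_tendsto.frequently (h.mono ?_))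
  rintro n ⟨rfl, hlt⟩
  have hmem := neg_one_pow_mul_convs_sub_mem_Icc (not_terminatedAt_of_irrational hs n)
  have hdens := dens_mul_dens_succ_pos s n
  rw [GenContFract.conv_eq_num_div_den, hp, hq n] at hmem
  refine ⟨p n, (one_div_pos.2 (by rw [← hq n]; positivity)).trans_le hmem.1, hmem.2.trans_lt ?_⟩
  have hqn : (0 : ℝ) < q n := hq n ▸ dens_of_pos s n
  rw [hq n] at hlt
  rw [Real.rpow_neg hqn.le, Real.rpow_add hqn, Real.rpow_one, ← one_div]
  gcongr

/-- The ratio `r_n = log q_{n+1} / log q_n` of consecutive convergent denominators of `s`. It has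
the junk value `0` when `q_n = 1`, which happens for `n = 0` and possibly for `n = 1`. -/
def logDensRatio (s : ℝ) (n : ℕ) : ℝ :=
  Real.log ((GenContFract.of s).dens (n + 1)) / Real.log ((GenContFract.of s).dens n)

theorem lt_logDensRatio_iff {n : ℕ} {c : ℝ} (hn : 1 < (GenContFract.of s).dens n) :
    c < logDensRatio s n ↔ (GenContFract.of s).dens n ^ c < (GenContFract.of s).dens (n + 1) := by
  rw [logDensRatio, lt_div_iff₀ (Real.log_pos hn),
    Real.rpow_lt_iff_lt_log (dens_of_pos s n) (dens_of_pos s (n + 1))]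

theorem one_le_logDensRatio {n : ℕ} (hn : 1 < (GenContFract.of s).dens n) :
    1 ≤ logDensRatio s n := by
  rw [logDensRatio, one_le_div (Real.log_pos hn)]
  exact Real.log_le_log (dens_of_pos s n) (monotone_dens_of s n.le_succ)

theorem tendsto_two_mul_add_atTop (k : ℕ) : Tendsto (fun j : ℕ => 2 * j + k) atTop atTop :=
  tendsto_atTop_mono (fun j => show j ≤ 2 * j + k by omega) tendsto_id

theorem eventually_one_lt_dens_two_mul_add (hs : Irrational s) (k : ℕ) :
    ∀ᶠ j : ℕ in atTop, 1 < (GenContFract.of s).dens (2 * j + k) :=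
  ((tendsto_dens_of_atTop (not_terminates_of_irrational hs)).comp
    (tendsto_two_mul_add_atTop k)).eventually_gt_atTop 1

theorem eventually_imp_of_eventually_two_mul_add {P : ℕ → Prop} {k : ℕ}
    (h : ∀ᶠ j : ℕ in atTop, P (2 * j + k)) :
    ∀ᶠ n : ℕ in atTop, (-1 : ℝ) ^ (n + 1) = (-1) ^ (k + 1) → P n := by
  obtain ⟨N, hN⟩ := eventually_atTop.1 h
  filter_upwards [eventually_ge_atTop (2 * N + k)] with n hn hsign
  have hparity : Even (n + 1) ↔ Even (k + 1) := by
    rw [← neg_one_pow_eq_one_iff_even (R := ℝ) (by norm_num), hsign,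
      neg_one_pow_eq_one_iff_even (by norm_num)]
  obtain ⟨j, rfl⟩ : ∃ j, n = 2 * j + k := ⟨(n - k) / 2, by grind⟩
  exact hN j (by omega)

theorem oneSidedApproxExp_le_of_eventually_logDensRatio_lt (hs : Irrational s) {k : ℕ} {c : ℝ}
    (h : ∀ᶠ j : ℕ in atTop, logDensRatio s (2 * j + k) < c) :
    oneSidedApproxExp ((-1) ^ (k + 1)) s ≤ ENNReal.ofReal (1 + c) := by
  have hdens := eventually_one_lt_dens_two_mul_add hs k
  have hc : 1 ≤ c := by
    obtain ⟨j, hj, hlt⟩ := (hdens.and h).exists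
    exact (one_le_logDensRatio hj).trans hlt.le
  refine oneSidedApproxExp_le_of_eventually (pow_ne_zero _ (by norm_num)) two_pos
    (eventually_one_div_le_of_eventually_dens_le hs (abs_neg_one_pow _) hc ?_)
  refine eventually_imp_of_eventually_two_mul_add ?_
  filter_upwards [hdens, h] with j hj hlt
  exact not_lt.1 fun hgt => hlt.not_gt ((lt_logDensRatio_iff hj).2 hgt)

theorem le_oneSidedApproxExp_of_frequently_lt_logDensRatio (hs : Irrational s) {k : ℕ} {c : ℝ}
    (h : ∃ᶠ j : ℕ in atTop, c < logDensRatio s (2 * j + k)) :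
    ENNReal.ofReal (1 + c) ≤ oneSidedApproxExp ((-1) ^ (k + 1)) s := by
  refine ofReal_one_add_le_oneSidedApproxExp_of_frequently hs
    ((tendsto_two_mul_add_atTop k).frequently ((h.and_eventually
      (eventually_one_lt_dens_two_mul_add hs k)).mono ?_))
  rintro j ⟨hlt, hj⟩
  refine ⟨?_, (lt_logDensRatio_iff hj).1 hlt⟩
  rw [add_assoc, pow_add, (even_two_mul j).neg_one_pow, one_mul]

theorem oneSidedApproxExp_neg_one_pow_eq_one_add_limsup (hs : Irrational s) (k : ℕ) :
    oneSidedApproxExp ((-1) ^ (k + 1)) s =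
      1 + limsup (fun j : ℕ => ENNReal.ofReal (logDensRatio s (2 * j + k))) atTop := by
  have hadd : ∀ᶠ j : ℕ in atTop, 1 + ENNReal.ofReal (logDensRatio s (2 * j + k)) =
      ENNReal.ofReal (1 + logDensRatio s (2 * j + k)) := by
    filter_upwards [eventually_one_lt_dens_two_mul_add hs k] with j hj
    rw [ENNReal.ofReal_add zero_le_one (zero_le_one.trans (one_le_logDensRatio hj)),
      ENNReal.ofReal_one]
  rw [← limsup_const_add _ _ _ (by isBoundedDefault) (by isBoundedDefault), limsup_congr hadd]
  apply le_antisymm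
  · refine le_of_forall_gt_imp_ge_of_dense fun a ha => ?_
    induction a with
    | top => exact le_top
    | coe a =>
      convert! oneSidedApproxExp_le_of_eventually_logDensRatio_lt hs (c := a - 1) ?_
      · simp
      · filter_upwards [eventually_lt_of_limsup_lt ha] with j hj
        rw [← ENNReal.ofReal_coe_nnreal] at hj
        linarith [(ENNReal.ofReal_lt_ofReal_iff'.1 hj).1]
  · refine ENNReal.le_of_forall_nnreal_lt fun a ha => ?_
    convert! le_oneSidedApproxExp_of_frequently_lt_logDensRatio hs (c := a - 1) ?_
    · simp
    · refine (frequently_lt_of_lt_limsup (by isBoundedDefault) ha).mono fun j hj => ?_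
      rw [← ENNReal.ofReal_coe_nnreal] at hj
      linarith [(ENNReal.ofReal_lt_ofReal_iff'.1 hj).1]

end Irrational

theorem one_div_mul_le_sub_of_div_lt_div {K : Type*} [Field K] [LinearOrder K]
    [IsStrictOrderedRing K] {a p : ℤ} {b q : ℕ} (hb : 0 < b) (hq : 0 < q)
    (h : (a : K) / b < p / q) : (1 : K) / (q * b) ≤ p / q - a / b := by
  have hb' : (0 : K) < b := by exact_mod_cast hb
  have hq' : (0 : K) < q := by exact_mod_cast hq
  rw [div_lt_div_iff₀ hb' hq'] at h
  have hnum : a * q + 1 ≤ p * b := Int.add_one_le_iff.2 (by exact_mod_cast h)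
  have hnum' : (1 : K) ≤ p * b - q * a := by
    rw [le_sub_iff_add_le']
    exact_mod_cast mul_comm a q ▸ hnum
  rw [div_sub_div _ _ hq'.ne' hb'.ne']
  gcongr

section LiouvilleNumber

open Nat LiouvilleNumber

variable {m : ℕ}

theorem oneSidedApproxExp_neg_one_liouvilleNumber (hm : 2 ≤ m) :
    oneSidedApproxExp (-1) (liouvilleNumber m) = ⊤ := by
  have hm' : (2 : ℝ) ≤ m := by exact_mod_cast hm
  have htendsto : Tendsto (fun n : ℕ => m ^ n !) atTop atTop :=
    (tendsto_pow_atTop_atTop_of_one_lt hm).comp factorial_tendsto_atTop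
  refine ENNReal.eq_top_of_forall_nnreal_le fun r => ?_
  rw [← ENNReal.ofReal_coe_nnreal]
  refine ofReal_le_oneSidedApproxExp (by norm_num) (htendsto.frequently
    (Eventually.frequently ?_))
  filter_upwards [tendsto_natCast_atTop_atTop.eventually_ge_atTop (r : ℝ)] with n hn
  obtain ⟨a, ha⟩ := partialSum_eq_rat (by omega : 0 < m) n
  have hremainder : -1 * ((a : ℝ) / (m ^ n ! : ℕ) - liouvilleNumber m) = remainder m n := by
    rw [← ha, ← partialSum_add_remainder (by linarith) n]
    ring
  have hQ : (1 : ℝ) ≤ (m ^ n ! : ℕ) := by exact_mod_cast Nat.one_le_pow _ _ (by omega)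
  refine ⟨a, ?_⟩
  rw [Int.cast_natCast, hremainder]
  refine ⟨remainder_pos (by linarith) n, ?_⟩
  calc remainder m n < 1 / ((m : ℝ) ^ n !) ^ n := remainder_lt n hm'
    _ = ((m ^ n ! : ℕ) : ℝ) ^ (-(n : ℝ)) := by
      rw [Real.rpow_neg (by positivity), Real.rpow_natCast, one_div, Nat.cast_pow]
    _ ≤ ((m ^ n ! : ℕ) : ℝ) ^ (-(r : ℝ)) :=
      Real.rpow_le_rpow_of_exponent_le hQ (neg_le_neg hn)

theorem one_div_le_sub_liouvilleNumber {p : ℤ} {q n : ℕ} (hm : 2 ≤ m) (hq : 0 < q)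
    (hpq : liouvilleNumber m < p / q) (hn : 2 * (q * m ^ n !) ≤ (m ^ n !) ^ n) :
    1 / (2 * ((q : ℝ) * (m ^ n ! : ℕ))) ≤ p / q - liouvilleNumber m := by
  have hm' : (2 : ℝ) ≤ m := by exact_mod_cast hm
  have hQ : 0 < m ^ n ! := by positivity
  obtain ⟨a, ha⟩ := partialSum_eq_rat (by omega : 0 < m) n
  have hsum := partialSum_add_remainder (m := m) (by linarith) n
  have hpos := remainder_pos (m := m) (by linarith) n
  have hremainder : remainder m n ≤ 1 / (2 * ((q : ℝ) * (m ^ n ! : ℕ))) := by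
    refine (remainder_lt n hm').le.trans ?_
    gcongr
    exact_mod_cast hn
  have hsep : (1 : ℝ) / (q * (m ^ n ! : ℕ)) ≤ p / q - (a : ℤ) / (m ^ n ! : ℕ) :=
    one_div_mul_le_sub_of_div_lt_div hQ hq (by rw [Int.cast_natCast, ← ha]; linarith)
  rw [Int.cast_natCast, ← ha] at hsep
  have hhalf : (1 : ℝ) / (q * (m ^ n ! : ℕ)) = 2 * (1 / (2 * ((q : ℝ) * (m ^ n ! : ℕ)))) := by
    ring
  linarith

theorem exists_pow_factorial_le {q : ℕ} (hm : 2 ≤ m) (hmq : m ≤ q) :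
    ∃ n : ℕ, 2 * (q * m ^ n !) ≤ (m ^ n !) ^ n ∧ m ^ n ! ≤ 8 * q ^ 3 := by
  have hmono : StrictMono fun n : ℕ => (m ^ (n + 1)!) ^ n := strictMono_nat_of_lt_succ fun n =>
    calc (m ^ (n + 1)!) ^ n ≤ (m ^ (n + 2)!) ^ n := by gcongr <;> omega
      _ < (m ^ (n + 2)!) ^ (n + 1) :=
        Nat.pow_lt_pow_right (Nat.one_lt_pow (factorial_ne_zero _) hm) n.lt_succ_self
  obtain ⟨n, hlt, hle⟩ := hmono.exists_between_of_tendsto_atTop hmono.tendsto_atTop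
    (x := 2 * q) (by simp only [pow_zero]; omega)
  refine ⟨n + 2, ?_, ?_⟩
  · calc 2 * (q * m ^ (n + 2)!) = 2 * q * m ^ (n + 2)! := (mul_assoc _ _ _).symm
      _ ≤ (m ^ (n + 2)!) ^ (n + 1) * m ^ (n + 2)! := by gcongr
      _ = (m ^ (n + 2)!) ^ (n + 2) := (pow_succ _ _).symm
  · rcases n.eq_zero_or_pos with rfl | hn
    · calc m ^ 2! ≤ q ^ 2 := Nat.pow_le_pow_left hmq 2
        _ ≤ 8 * q ^ 3 := by nlinarith [Nat.zero_le (q ^ 2)]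
    · calc m ^ (n + 2)! = (m ^ (n + 1)!) ^ (n + 2) := by
            rw [← pow_mul, factorial_succ (n + 1), mul_comm]
        _ ≤ (m ^ (n + 1)!) ^ (n * 3) := Nat.pow_le_pow_right (by positivity) (by omega)
        _ = ((m ^ (n + 1)!) ^ n) ^ 3 := pow_mul _ _ _
        _ ≤ (2 * q) ^ 3 := by gcongr
        _ = 8 * q ^ 3 := by ring

theorem oneSidedApproxExp_one_liouvilleNumber_le (hm : 2 ≤ m) :
    oneSidedApproxExp 1 (liouvilleNumber m) ≤ ENNReal.ofReal 4 := by
  refine oneSidedApproxExp_le_of_eventually one_ne_zero (C := 16) (by norm_num) ?_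
  filter_upwards [eventually_ge_atTop m] with q hq p hpos
  rw [one_mul] at hpos ⊢
  obtain ⟨n, hn, hQ⟩ := exists_pow_factorial_le hm hq
  have hq0 : 0 < q := by omega
  refine le_trans ?_ (one_div_le_sub_liouvilleNumber hm hq0 (sub_pos.1 hpos) hn)
  have hbound : 2 * (q * m ^ n !) ≤ 16 * q ^ 4 := by
    calc 2 * (q * m ^ n !) ≤ 2 * (q * (8 * q ^ 3)) := by gcongr
      _ = 16 * q ^ 4 := by ring
  rw [Real.rpow_ofNat]
  exact one_div_le_one_div_of_le (mod_cast (by positivity : 0 < 2 * (q * m ^ n !)))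
    (mod_cast hbound)

end LiouvilleNumber

/-- With `r_n = log q_{n+1}/log q_n` for the convergent denominators `q_n` of `s`:
`μ⁺(s) = 1 + limsup r_{2n+1}` and `μ⁻(s) = 1 + limsup r_{2n}`; in particular there exist
irrationals with `μ⁺(s) ≠ μ⁻(s)`. -/
theorem upper_lower_approxExp :
    (∀ s : ℝ, Irrational s →
      upperApproxExp s = 1 + Filter.limsup
        (fun n : ℕ => ENNReal.ofReal
          (Real.log ((GenContFract.of s).dens (2 * n + 2)) /
            Real.log ((GenContFract.of s).dens (2 * n + 1)))) atTop ∧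
      lowerApproxExp s = 1 + Filter.limsup
        (fun n : ℕ => ENNReal.ofReal
          (Real.log ((GenContFract.of s).dens (2 * n + 1)) /
            Real.log ((GenContFract.of s).dens (2 * n)))) atTop) ∧
    ∃ s : ℝ, Irrational s ∧ upperApproxExp s ≠ lowerApproxExp s := by
  refine ⟨fun s hs => ⟨?_, ?_⟩, liouvilleNumber (2 : ℕ),
    (liouville_liouvilleNumber le_rfl).irrational, ?_⟩
  · rw [upperApproxExp_eq_oneSidedApproxExp]
    simpa [logDensRatio, add_assoc] using
      oneSidedApproxExp_neg_one_pow_eq_one_add_limsup hs 1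
  · rw [lowerApproxExp_eq_oneSidedApproxExp]
    simpa [logDensRatio] using oneSidedApproxExp_neg_one_pow_eq_one_add_limsup hs 0
  · rw [upperApproxExp_eq_oneSidedApproxExp, lowerApproxExp_eq_oneSidedApproxExp,
      oneSidedApproxExp_neg_one_liouvilleNumber le_rfl]
    exact ((oneSidedApproxExp_one_liouvilleNumber_le le_rfl).trans_lt ENNReal.ofReal_lt_top).ne
end
end

section
/- Let n ≥ 2, let {u_t} be a one-parameter unipotent subgroup of SL(n,ℝ), and let r : ℝ → ℝ⁺ satisfy, for some constants c, δ > 0: (1) t ↦ r(t)/t^{1/n} is non-decreasing; (2) r(t)/t^{(1+δ)/n} → 0; (3) liminf_{t→∞} r(t)·t^{2δ/n}/r(t^{1+2δ}) > c. Then for Haar-almost every Λ ∈ X_n there is a sequence t_k → +∞ with α₁(u_{t_k} Λ) ≥ (c/(n-1))·r(t_k)·t_k^{-2δ/n}. -/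
open MeasureTheory Filter Matrix Real ENNReal

noncomputable section

/-!
A unipotent `g ≠ 1` admits independent functionals `φ`, `ℓ` with `φ ∘ g = φ + ℓ` and
`ℓ ∘ g = ℓ`. The required bound on `α₁` is `O(t ^ ((1 - δ) / n))`, so it suffices that, for every
`β < 1 / n` and almost every lattice `Λ`, the lattice `g ^ j Λ` has a nonzero vector shorter than
`j ^ (-β)` for arbitrarily large `j`.

For `n ≥ 3` intersect the ball of radius `(2J) ^ (-β)` with the cone `2 |φ| < ℓ`. The preimages of
this set under `g ^ j`, `J < j ≤ 2J`, are pairwise disjoint, so their union has volume of order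
`J ^ (1 - β n)`, which tends to infinity. A lattice chosen at random misses a set of large volume
only with small probability: the Haar measure is its own average over the index-`p` sublattices of a
lattice, rescaled to covolume one. For a fixed lattice and `p` large, the primitive vectors in the
rescaled set are pairwise independent modulo `p`, so a second moment count bounds the proportion of
sublattices that avoid all of them.

For `n = 2` almost every lattice has no nonzero vector on the line `ℓ = 0`. The subtractive
Euclidean algorithm then finds lattice vectors with `φ = -X ℓ`, where `X` is arbitrarily large and
`X ℓ ^ 2` stays bounded; `g ^ ⌊X⌋` carries such a vector to one of size `O(X ^ (-1 / 2))`.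
-/

section TransitiveAction

variable {G X : Type*} [Group G] [TopologicalSpace G] [IsTopologicalGroup G]
  [LocallyCompactSpace G] [SecondCountableTopology G] [MeasurableSpace G] [BorelSpace G]
  [MeasurableSpace X] [MulAction G X] [MeasurableSMul₂ G X] [MulAction.IsPretransitive G X]

theorem ae_eq_const_of_forall_smul_ae_eq {β : Type*} [MeasurableSpace β] [MeasurableEq β]
    {μ : Measure X} [SFinite μ] [NeZero μ] {f : X → β} (hf : Measurable f)
    (hinv : ∀ g : G, ∀ᵐ x ∂μ, f (g • x) = f x) : ∃ a, ∀ᵐ x ∂μ, f x = a := by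
  have hfsmul : Measurable fun p : G × X => f (p.1 • p.2) := hf.comp measurable_smul
  obtain ⟨x₀, hx₀⟩ : ∃ x₀, ∀ᵐ g ∂(Measure.haar : Measure G), f (g • x₀) = f x₀ :=
    ((Measure.ae_ae_comm (p := fun (g : G) x => f (g • x) = f x)
      (measurableSet_eq_fun hfsmul (hf.comp measurable_snd))).1
      (Eventually.of_forall hinv)).exists
  -- Right translations preserve Haar null sets, so `x₀` may be replaced by any point of its orbit.
  have horbit (x : X) : ∀ᵐ g ∂(Measure.haar : Measure G), f (g • x) = f x₀ := by
    obtain ⟨k, rfl⟩ := MulAction.exists_smul_eq G x₀ x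
    simpa [ae_iff, mul_smul, Set.preimage] using
      (measure_mul_right_null Measure.haar k).2 hx₀
  obtain ⟨g, hg⟩ : ∃ g : G, ∀ᵐ x ∂μ, f (g • x) = f x₀ :=
    ((Measure.ae_ae_comm (μ := Measure.haar) (p := fun (g : G) x => f (g • x) = f x₀)
      (measurableSet_eq_fun hfsmul measurable_const)).2 (Eventually.of_forall horbit)).exists
  exact ⟨f x₀, by filter_upwards [hg, hinv g] with x hx hx' using hx'.symm.trans hx⟩

variable (G) in
theorem eq_smul_of_absolutelyContinuous_of_smulInvariant {μ ν : Measure X}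
    [IsProbabilityMeasure μ] [IsFiniteMeasure ν] [SMulInvariantMeasure G X μ]
    [SMulInvariantMeasure G X ν] (hμν : μ ≪ ν) : μ = (ν Set.univ)⁻¹ • ν := by
  have : NeZero ν := ⟨fun h => IsProbabilityMeasure.ne_zero μ
    (Measure.absolutelyContinuous_zero_iff.1 (h ▸ hμν))⟩
  obtain ⟨a, ha⟩ := ae_eq_const_of_forall_smul_ae_eq (μ.measurable_rnDeriv ν) fun g : G =>
    (measurePreserving_smul g μ).rnDeriv_comp_aeEq (measurePreserving_smul g ν)
  have hμ : μ = a • ν := by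
    rw [← Measure.withDensity_rnDeriv_eq _ _ hμν, withDensity_congr_ae ha, withDensity_const]
  have huniv : a * ν Set.univ = 1 := by
    rw [← smul_eq_mul, ← Measure.smul_apply, ← hμ, measure_univ]
  rw [← ENNReal.eq_inv_of_mul_eq_one_left huniv, ← hμ]

variable (G) in
theorem eq_of_smulInvariantMeasure (μ ν : Measure X) [IsProbabilityMeasure μ]
    [IsProbabilityMeasure ν] [SMulInvariantMeasure G X μ] [SMulInvariantMeasure G X ν] :
    μ = ν :=
  (eq_smul_of_absolutelyContinuous_of_smulInvariant G
    (Measure.AbsolutelyContinuous.rfl.add_right ν)).trans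
    (eq_smul_of_absolutelyContinuous_of_smulInvariant G
      (add_comm μ ν ▸ Measure.AbsolutelyContinuous.rfl.add_right μ)).symm

end TransitiveAction

section LatticeSpace

variable {n : ℕ}

instance : IsTopologicalGroup (SLR n) := Matrix.SpecialLinearGroup.topologicalGroup

instance : PolishSpace (SLR n) :=
  haveI : PolishSpace (Matrix (Fin n) (Fin n) ℝ) :=
    inferInstanceAs (PolishSpace (Fin n → Fin n → ℝ))
  Matrix.SpecialLinearGroup.isClosedEmbedding_val.polishSpace

instance : LocallyCompactSpace (SLR n) :=
  haveI : LocallyCompactSpace (Matrix (Fin n) (Fin n) ℝ) :=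
    inferInstanceAs (LocallyCompactSpace (Fin n → Fin n → ℝ))
  Matrix.SpecialLinearGroup.isClosedEmbedding_val.locallyCompactSpace

instance : MeasurableSpace (SLR n) := borel _

instance : BorelSpace (SLR n) := ⟨rfl⟩

instance : BorelSpace (LatticeSpace n) := ⟨rfl⟩

instance : MeasurableSMul₂ (SLR n) (LatticeSpace n) := ⟨continuous_smul.measurable⟩

instance : T1Space (LatticeSpace n) :=
  haveI : IsClosed (latticeGamma n : Set (SLR n)) :=
    (Topology.IsClosedEmbedding.specialLinearGroup_map
      Int.isClosedEmbedding_coe_real).isClosed_range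
  inferInstance

theorem measurableSet_latticeSpace_iff {s : Set (LatticeSpace n)} :
    MeasurableSet s ↔ MeasurableSet ((QuotientGroup.mk : SLR n → LatticeSpace n) ⁻¹' s) :=
  have hcont := QuotientGroup.continuous_mk (N := latticeGamma n)
  (hcont.measurable.measurableSet_preimage_iff_of_surjective QuotientGroup.mk_surjective).symm

theorem measurable_latticeSpace_iff {β : Type*} [MeasurableSpace β] {f : LatticeSpace n → β} :
    Measurable f ↔ Measurable fun g : SLR n => f (QuotientGroup.mk g) :=
  forall₂_congr fun _ _ => measurableSet_latticeSpace_iff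

end LatticeSpace

section LatticeVectors

variable {n : ℕ}

theorem vecOf_mul (g h : SLR n) (m : Fin n → ℤ) :
    vecOf n (g * h) m = (g : Matrix (Fin n) (Fin n) ℝ) *ᵥ vecOf n h m := by
  simp only [vecOf, Matrix.SpecialLinearGroup.coe_mul, mulVec_mulVec]

theorem vecOf_one (m : Fin n → ℤ) : vecOf n 1 m = fun i => (m i : ℝ) := by
  simp only [vecOf, Matrix.SpecialLinearGroup.coe_one, one_mulVec]

theorem vecOf_map (γ : Matrix.SpecialLinearGroup (Fin n) ℤ) (m : Fin n → ℤ) :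
    vecOf n (Matrix.SpecialLinearGroup.map (Int.castRingHom ℝ) γ) m =
      fun i => (((γ : Matrix (Fin n) (Fin n) ℤ) *ᵥ m) i : ℝ) :=
  funext fun i => ((Int.castRingHom ℝ).map_mulVec γ.1 m i).symm

theorem vecOf_injective (g : SLR n) : Function.Injective (vecOf n g) := by
  intro m m' h
  have hone : vecOf n 1 m = vecOf n 1 m' := by
    rw [← inv_mul_cancel g, vecOf_mul, vecOf_mul, h]
  simpa only [vecOf_one, funext_iff, Int.cast_inj] using hone

theorem vecOf_zero (g : SLR n) : vecOf n g 0 = 0 := by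
  simp only [vecOf, Pi.zero_apply, Int.cast_zero]
  exact mulVec_zero _

theorem vecOf_eq_zero {g : SLR n} {m : Fin n → ℤ} : vecOf n g m = 0 ↔ m = 0 := by
  rw [← vecOf_zero g, (vecOf_injective g).eq_iff]

theorem mk_eq_mk_of_range_vecOf_subset {g g' : SLR n}
    (h : Set.range (vecOf n g) ⊆ Set.range (vecOf n g')) :
    (QuotientGroup.mk g : LatticeSpace n) = QuotientGroup.mk g' := by
  choose f hf using Set.range_subset_iff.1 h
  set A : Matrix (Fin n) (Fin n) ℤ := Matrix.of fun i j => f (Pi.single j 1) i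
  have hA : A.map (Int.castRingHom ℝ) = ((g'⁻¹ * g : SLR n) : Matrix (Fin n) (Fin n) ℝ) := by
    ext i j
    have hcol : vecOf n (g'⁻¹ * g) (Pi.single j 1) = fun i => (f (Pi.single j 1) i : ℝ) := by
      rw [vecOf_mul, ← hf, ← vecOf_mul, inv_mul_cancel, vecOf_one]
    have hsingle : (fun k => ((Pi.single j 1 : Fin n → ℤ) k : ℝ)) = Pi.single j 1 := by
      ext k
      by_cases hk : k = j <;> simp [hk]
    rw [vecOf, hsingle, mulVec_single_one] at hcol
    exact (congrFun hcol i).symm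
  have hdet : A.det = 1 := by
    have hcast : ((A.det : ℤ) : ℝ) = 1 := by
      rw [← eq_intCast (Int.castRingHom ℝ), RingHom.map_det, RingHom.mapMatrix_apply, hA,
        Matrix.SpecialLinearGroup.det_coe]
    exact_mod_cast hcast
  refine (QuotientGroup.eq.2 ?_).symm
  exact ⟨⟨A, hdet⟩, Subtype.ext hA⟩

theorem range_vecOf_mul_map_subset (g : SLR n) (γ : Matrix.SpecialLinearGroup (Fin n) ℤ) :
    Set.range (vecOf n (g * Matrix.SpecialLinearGroup.map (Int.castRingHom ℝ) γ)) ⊆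
      Set.range (vecOf n g) := by
  rintro _ ⟨m, rfl⟩
  exact ⟨(γ : Matrix (Fin n) (Fin n) ℤ) *ᵥ m, by rw [vecOf_mul, vecOf_map]; rfl⟩

theorem exists_eq_mul_map_of_mk_eq {g g' : SLR n}
    (h : (QuotientGroup.mk g : LatticeSpace n) = QuotientGroup.mk g') :
    ∃ γ, g' = g * Matrix.SpecialLinearGroup.map (Int.castRingHom ℝ) γ := by
  obtain ⟨γ, hγ⟩ := QuotientGroup.eq.1 h
  exact ⟨γ, by rw [hγ, mul_inv_cancel_left]⟩

theorem intersects_mk {g : SLR n} {A : Set (Fin n → ℝ)} :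
    Intersects n (QuotientGroup.mk g) A ↔ ∃ m : Fin n → ℤ, m ≠ 0 ∧ vecOf n g m ∈ A := by
  refine ⟨fun h => h g rfl, fun ⟨m, hm, hA⟩ g' hg' => ?_⟩
  obtain ⟨γ, rfl⟩ := exists_eq_mul_map_of_mk_eq hg'
  obtain ⟨m', hm'⟩ := range_vecOf_mul_map_subset g' γ ⟨m, rfl⟩
  refine ⟨m', ?_, hm' ▸ hA⟩
  rwa [ne_eq, ← vecOf_eq_zero (g := g'), hm', vecOf_eq_zero]

end LatticeVectors

section HeckeAverage

variable {n p : ℕ}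

/-- The pairing of a covector modulo `p` with an integer vector. Its kernels in the second
variable, for nonzero covectors, are the sublattices of `ℤⁿ` of index `p`. -/
def modPairing (a : Fin n → ZMod p) (m : Fin n → ℤ) : ZMod p := a ⬝ᵥ fun i => (m i : ZMod p)

/-- The left action of `SL(n, ℤ)` on covectors modulo `p`, dual to its action on vectors. -/
def covectorAct (γ : Matrix.SpecialLinearGroup (Fin n) ℤ) (a : Fin n → ZMod p) : Fin n → ZMod p :=
  a ᵥ* (Matrix.SpecialLinearGroup.map (Int.castRingHom (ZMod p)) γ⁻¹).1

theorem covectorAct_inv_covectorAct (γ : Matrix.SpecialLinearGroup (Fin n) ℤ) (a : Fin n → ZMod p) :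
    covectorAct γ⁻¹ (covectorAct γ a) = a := by
  rw [covectorAct, covectorAct, vecMul_vecMul, ← Matrix.SpecialLinearGroup.coe_mul, ← map_mul,
    mul_inv_cancel, map_one, Matrix.SpecialLinearGroup.coe_one, vecMul_one]

theorem covectorAct_ne_zero (γ : Matrix.SpecialLinearGroup (Fin n) ℤ) {a : Fin n → ZMod p}
    (ha : a ≠ 0) : covectorAct γ a ≠ 0 := fun h => ha <| by
  rw [← covectorAct_inv_covectorAct γ a, h, covectorAct, zero_vecMul]

theorem modPairing_covectorAct (γ : Matrix.SpecialLinearGroup (Fin n) ℤ) (a : Fin n → ZMod p)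
    (m : Fin n → ℤ) :
    modPairing (covectorAct γ a) ((γ : Matrix (Fin n) (Fin n) ℤ) *ᵥ m) = modPairing a m := by
  have hcast : (fun i => (((γ : Matrix (Fin n) (Fin n) ℤ) *ᵥ m) i : ZMod p)) =
      (Matrix.SpecialLinearGroup.map (Int.castRingHom (ZMod p)) γ).1 *ᵥ fun i => (m i : ZMod p) :=
    funext fun i => (Int.castRingHom (ZMod p)).map_mulVec γ.1 m i
  rw [modPairing, hcast, covectorAct, ← dotProduct_mulVec, mulVec_mulVec,
    ← Matrix.SpecialLinearGroup.coe_mul, ← map_mul, inv_mul_cancel, map_one,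
    Matrix.SpecialLinearGroup.coe_one, one_mulVec, modPairing]

/-- The permutation of the nonzero covectors modulo `p` given by `covectorAct`. -/
def covectorPerm (γ : Matrix.SpecialLinearGroup (Fin n) ℤ) :
    Equiv.Perm {a : Fin n → ZMod p // a ≠ 0} where
  toFun a := ⟨covectorAct γ a.1, covectorAct_ne_zero γ a.2⟩
  invFun a := ⟨covectorAct γ⁻¹ a.1, covectorAct_ne_zero γ⁻¹ a.2⟩
  left_inv a := Subtype.ext (covectorAct_inv_covectorAct γ a.1)
  right_inv a := Subtype.ext (by
    simpa only [inv_inv] using covectorAct_inv_covectorAct γ⁻¹ a.1)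

variable [Fact p.Prime]

theorem exists_det_eq_and_range_mulVec_eq {a : Fin n → ZMod p} (ha : a ≠ 0) :
    ∃ H : Matrix (Fin n) (Fin n) ℤ, H.det = p ∧
      Set.range (H *ᵥ ·) = {m | modPairing a m = 0} := by
  obtain ⟨i, hi⟩ : ∃ i, a i ≠ 0 := Function.ne_iff.1 ha
  set d : Fin n → ℤ := fun j => ((-(a i)⁻¹ * a j).val : ℤ) with hd
  have hdi : d i + 1 = p := by
    have hp : 1 ≤ p := (Fact.out : p.Prime).one_le
    rw [hd]
    simp only [neg_mul, inv_mul_cancel₀ hi]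
    rw [ZMod.neg_val, if_neg one_ne_zero, ZMod.val_one]
    lia
  have hdpair (m : Fin n → ℤ) : ((d ⬝ᵥ m : ℤ) : ZMod p) = -(a i)⁻¹ * modPairing a m := by
    simp only [hd, dotProduct, modPairing, Int.cast_sum, Int.cast_mul, Int.cast_natCast,
      ZMod.natCast_zmod_val, Finset.mul_sum, mul_assoc]
  have hpair (m : Fin n → ℤ) (t : ℤ) :
      modPairing a (m + t • Pi.single i 1) = modPairing a m + a i * t := by
    simp [modPairing, dotProduct, mul_add, Finset.sum_add_distrib, Pi.single_apply]
  have hmul (k : Fin n → ℤ) :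
      (1 + vecMulVec (Pi.single i 1) d) *ᵥ k = k + (d ⬝ᵥ k) • Pi.single i 1 := by
    rw [add_mulVec, one_mulVec, vecMulVec_mulVec, op_smul_eq_smul]
  refine ⟨1 + vecMulVec (Pi.single i 1) d, ?_, Set.Subset.antisymm ?_ fun m hm => ?_⟩
  · rw [vecMulVec_eq Unit, det_one_add_replicateCol_mul_replicateRow, dotProduct_single_one,
      add_comm, hdi]
  · rintro _ ⟨k, rfl⟩
    simp only [Set.mem_ofPred_eq, hmul, hpair, hdpair]
    field_simp
    ring
  · obtain ⟨t, ht⟩ : (p : ℤ) ∣ d ⬝ᵥ m := by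
      rw [← ZMod.intCast_zmod_eq_zero_iff_dvd, hdpair, hm, mul_zero]
    refine ⟨m - t • Pi.single i 1, ?_⟩
    have hcoeff : d ⬝ᵥ (m - t • Pi.single i 1) = t := by
      rw [dotProduct_sub, dotProduct_smul, dotProduct_single_one, ht, ← hdi, smul_eq_mul]
      ring
    simp only [hmul, hcoeff, sub_add_cancel]

theorem exists_range_vecOf_eq_image_modPairing_ker {a : Fin n → ZMod p} (ha : a ≠ 0) :
    ∃ h : SLR n, Set.range (vecOf n h) =
      (fun k : Fin n → ℤ => (p : ℝ) ^ (-(1 : ℝ) / n) • fun i => (k i : ℝ)) ''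
        {k | modPairing a k = 0} := by
  have hn : (n : ℝ) ≠ 0 := by
    rintro hn
    obtain rfl : n = 0 := by exact_mod_cast hn
    exact ha (Subsingleton.elim _ _)
  have hp : (0 : ℝ) < p := mod_cast (Fact.out : p.Prime).pos
  obtain ⟨H, hH, hrange⟩ := exists_det_eq_and_range_mulVec_eq ha
  set q : ℝ := (p : ℝ) ^ (-(1 : ℝ) / n) with hq
  have hdet : (q • H.map (Int.castRingHom ℝ)).det = 1 := by
    rw [det_smul, Fintype.card_fin, ← RingHom.mapMatrix_apply, ← RingHom.map_det, hH, hq,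
      ← Real.rpow_natCast, ← Real.rpow_mul hp.le, div_mul_cancel₀ _ hn, Real.rpow_neg_one]
    simp [hp.ne']
  refine ⟨⟨_, hdet⟩, ?_⟩
  rw [← hrange, ← Set.range_comp]
  congr 1
  ext m i
  simp only [vecOf, smul_mulVec, Function.comp_apply, Pi.smul_apply]
  exact congrArg (q • ·) ((Int.castRingHom ℝ).map_mulVec H m i).symm

/-- A matrix whose lattice is the index-`p` sublattice of `ℤⁿ` cut out by a covector modulo `p`,
rescaled to covolume one. -/
def heckeElt (a : {a : Fin n → ZMod p // a ≠ 0}) : SLR n :=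
  (exists_range_vecOf_eq_image_modPairing_ker a.2).choose

theorem range_vecOf_heckeElt (a : {a : Fin n → ZMod p // a ≠ 0}) :
    Set.range (vecOf n (heckeElt a)) =
      (fun k : Fin n → ℤ => (p : ℝ) ^ (-(1 : ℝ) / n) • fun i => (k i : ℝ)) ''
        {k | modPairing a.1 k = 0} :=
  (exists_range_vecOf_eq_image_modPairing_ker a.2).choose_spec

theorem mk_map_mul_heckeElt (γ : Matrix.SpecialLinearGroup (Fin n) ℤ)
    (a : {a : Fin n → ZMod p // a ≠ 0}) :
    (QuotientGroup.mk (Matrix.SpecialLinearGroup.map (Int.castRingHom ℝ) γ * heckeElt a) :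
      LatticeSpace n) = QuotientGroup.mk (heckeElt (covectorPerm γ a)) := by
  refine mk_eq_mk_of_range_vecOf_subset ?_
  rintro _ ⟨m, rfl⟩
  obtain ⟨k, hk, hkm⟩ := range_vecOf_heckeElt a ▸ Set.mem_range_self m
  rw [range_vecOf_heckeElt, vecOf_mul, ← hkm]
  refine ⟨(γ : Matrix (Fin n) (Fin n) ℤ) *ᵥ k, (modPairing_covectorAct γ a.1 k).trans hk, ?_⟩
  simp only [mulVec_smul, ← vecOf_map]
  rfl

/-- The Hecke average: the uniform measure on the rescaled index-`p` sublattices of a lattice. -/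
def heckeMeasure (p : ℕ) [Fact p.Prime] (x : LatticeSpace n) : Measure (LatticeSpace n) :=
  (Fintype.card {a : Fin n → ZMod p // a ≠ 0} : ℝ≥0∞)⁻¹ •
    ∑ a : {a : Fin n → ZMod p // a ≠ 0}, Measure.dirac (QuotientGroup.mk (x.out * heckeElt a))

theorem heckeMeasure_mk (g : SLR n) :
    heckeMeasure p (QuotientGroup.mk g : LatticeSpace n) =
      (Fintype.card {a : Fin n → ZMod p // a ≠ 0} : ℝ≥0∞)⁻¹ •
        ∑ a : {a : Fin n → ZMod p // a ≠ 0},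
          Measure.dirac (QuotientGroup.mk (g * heckeElt a)) := by
  obtain ⟨γ, hγ⟩ := exists_eq_mul_map_of_mk_eq
    (QuotientGroup.out_eq' (QuotientGroup.mk g : LatticeSpace n)).symm
  rw [heckeMeasure, hγ]
  refine congrArg _ (Fintype.sum_equiv (covectorPerm γ) _ _ fun a => congrArg _ ?_)
  rw [mul_assoc]
  exact congrArg (g • ·) (mk_map_mul_heckeElt γ a)

theorem heckeMeasure_smul (g : SLR n) (x : LatticeSpace n) :
    heckeMeasure p (g • x) = (heckeMeasure p x).map (g • ·) := by
  obtain ⟨h, rfl⟩ := QuotientGroup.mk_surjective x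
  have hg : Measurable fun x : LatticeSpace n => g • x := measurable_const_smul g
  change heckeMeasure p (QuotientGroup.mk (g * h)) = _
  simp only [heckeMeasure_mk, Measure.map_smul, Measure.map_finset_sum hg.aemeasurable,
    Measure.map_dirac' hg, mul_assoc]
  rfl

theorem measurable_heckeMeasure : Measurable (heckeMeasure p : LatticeSpace n → _) := by
  rw [measurable_latticeSpace_iff]
  refine Measure.measurable_of_measurable_coe _ fun s hs => ?_
  simp only [heckeMeasure_mk, Measure.smul_apply, Measure.finsetSum_apply, smul_eq_mul]
  refine (Finset.measurable_sum _ fun a _ => ?_).const_mul _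
  have hmk : Measurable fun g : SLR n => (QuotientGroup.mk (g * heckeElt a) : LatticeSpace n) :=
    (QuotientGroup.continuous_mk.comp (continuous_mul_const _)).measurable
  exact (Measure.measurable_coe hs).comp (Measure.measurable_dirac.comp hmk)

instance [NeZero n] (x : LatticeSpace n) : IsProbabilityMeasure (heckeMeasure p x) := by
  have : Nonempty {a : Fin n → ZMod p // a ≠ 0} :=
    ⟨⟨fun _ => 1, fun h => one_ne_zero (congrFun h 0)⟩⟩
  constructor
  simp only [heckeMeasure, Measure.smul_apply, Measure.finsetSum_apply, measure_univ,
    Finset.sum_const, Finset.card_univ, nsmul_eq_mul, mul_one, smul_eq_mul]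
  exact ENNReal.inv_mul_cancel (mod_cast Fintype.card_ne_zero) (ENNReal.natCast_ne_top _)

theorem lintegral_heckeMeasure [NeZero n] {μ : Measure (LatticeSpace n)} [IsProbabilityMeasure μ]
    [SMulInvariantMeasure (SLR n) (LatticeSpace n) μ] {s : Set (LatticeSpace n)}
    (hs : MeasurableSet s) : ∫⁻ x, heckeMeasure p x s ∂μ = μ s := by
  have hk : Measurable (heckeMeasure p : LatticeSpace n → _) := measurable_heckeMeasure
  have hprob : IsProbabilityMeasure (μ.bind (heckeMeasure p)) :=
    ⟨by simp [Measure.bind_apply MeasurableSet.univ hk.aemeasurable]⟩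
  have hinv : SMulInvariantMeasure (SLR n) (LatticeSpace n) (μ.bind (heckeMeasure p)) := by
    refine ⟨fun g t ht => ?_⟩
    have hg : Measurable fun x : LatticeSpace n => g • x := measurable_const_smul g
    rw [Measure.bind_apply ht hk.aemeasurable, Measure.bind_apply (hg ht) hk.aemeasurable,
      ← (measurePreserving_smul g μ).lintegral_comp
        (f := fun x => heckeMeasure p x t) ((Measure.measurable_coe ht).comp hk)]
    simp only [heckeMeasure_smul, Measure.map_apply hg ht]
  rw [← Measure.bind_apply hs hk.aemeasurable,
    eq_of_smulInvariantMeasure (SLR n) (μ.bind (heckeMeasure p)) μ]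

end HeckeAverage

section SecondMoment

section Finite

variable {α ι : Type*} [Fintype α]

theorem sq_sum_le_card_support_mul_sum_sq (X : α → ℝ) :
    (∑ a, X a) ^ 2 ≤ (Finset.univ.filter fun a => X a ≠ 0).card * ∑ a, X a ^ 2 := by
  rw [← Finset.sum_filter_ne_zero Finset.univ (f := X)]
  exact sq_sum_le_card_mul_sum_sq.trans <| mul_le_mul_of_nonneg_left
    (Finset.sum_le_sum_of_subset_of_nonneg (Finset.filter_subset _ _) fun _ _ _ => sq_nonneg _)
    (Nat.cast_nonneg _)

variable (r : α → ι → Prop) [∀ a m, Decidable (r a m)] (S : Finset ι)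

theorem sum_card_filter_sq :
    ∑ a, (S.filter (r a)).card ^ 2 =
      ∑ m ∈ S, ∑ m' ∈ S, (Finset.univ.filter fun a => r a m ∧ r a m').card := by
  have double_count := Finset.sum_card_bipartiteAbove_eq_sum_card_bipartiteBelow
    (fun a (q : ι × ι) => r a q.1 ∧ r a q.2) (s := Finset.univ) (t := S ×ˢ S)
  rw [← Finset.sum_product']
  refine Eq.trans (Finset.sum_congr rfl fun a _ => ?_) double_count
  rw [sq, ← Finset.card_product, Finset.bipartiteAbove, Finset.filter_product]

variable {r S} {q : ℝ}

theorem sum_card_filter_eq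
    (h₁ : ∀ m ∈ S, ((Finset.univ.filter (r · m)).card : ℝ) = Fintype.card α / q) :
    ∑ a, ((S.filter (r a)).card : ℝ) = S.card * (Fintype.card α / q) := by
  have double_count := Finset.sum_card_bipartiteAbove_eq_sum_card_bipartiteBelow r
    (s := Finset.univ) (t := S)
  calc ∑ a, ((S.filter (r a)).card : ℝ) = ∑ m ∈ S, ((Finset.univ.filter (r · m)).card : ℝ) :=
        mod_cast double_count
    _ = S.card * (Fintype.card α / q) := by
        rw [Finset.sum_congr rfl h₁, Finset.sum_const, nsmul_eq_mul]

theorem sum_card_filter_sq_le (hq : 0 < q)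
    (h₁ : ∀ m ∈ S, ((Finset.univ.filter (r · m)).card : ℝ) = Fintype.card α / q)
    (h₂ : ∀ m ∈ S, ∀ m' ∈ S, m ≠ m' →
      ((Finset.univ.filter fun a => r a m ∧ r a m').card : ℝ) = Fintype.card α / q ^ 2) :
    ∑ a, ((S.filter (r a)).card : ℝ) ^ 2 ≤
      S.card * (S.card * (Fintype.card α / q ^ 2) + Fintype.card α / q) := by
  classical
  have pair : ∀ m ∈ S, ∀ m' ∈ S, ((Finset.univ.filter fun a => r a m ∧ r a m').card : ℝ) ≤
      Fintype.card α / q ^ 2 + if m = m' then Fintype.card α / q else 0 := by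
    intro m hm m' hm'
    split_ifs with h
    · subst h
      simp only [and_self]
      rw [h₁ m hm]
      exact le_add_of_nonneg_left (by positivity)
    · rw [add_zero, h₂ m hm m' hm' h]
  calc _ = ∑ m ∈ S, ∑ m' ∈ S, ((Finset.univ.filter fun a => r a m ∧ r a m').card : ℝ) :=
        mod_cast sum_card_filter_sq r S
    _ ≤ ∑ m ∈ S, ∑ m' ∈ S, (Fintype.card α / q ^ 2 + if m = m' then Fintype.card α / q else 0) :=
        Finset.sum_le_sum fun m hm => Finset.sum_le_sum (pair m hm)
    _ = ∑ m ∈ S, (S.card * (Fintype.card α / q ^ 2) + Fintype.card α / q) :=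
        Finset.sum_congr rfl fun m hm => by
          rw [Finset.sum_add_distrib, Finset.sum_ite_eq, if_pos hm, Finset.sum_const, nsmul_eq_mul]
    _ = _ := by rw [Finset.sum_const, nsmul_eq_mul]

theorem card_forall_not_mul_card_le (hq : 0 < q)
    (h₁ : ∀ m ∈ S, ((Finset.univ.filter (r · m)).card : ℝ) = Fintype.card α / q)
    (h₂ : ∀ m ∈ S, ∀ m' ∈ S, m ≠ m' →
      ((Finset.univ.filter fun a => r a m ∧ r a m').card : ℝ) = Fintype.card α / q ^ 2) :
    ((Finset.univ.filter fun a => ∀ m ∈ S, ¬ r a m).card : ℝ) * S.card ≤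
      Fintype.card α * q := by
  set X : α → ℝ := fun a => (S.filter (r a)).card with hX
  have support : ((Finset.univ.filter fun a => X a ≠ 0).card : ℝ) =
      Fintype.card α - (Finset.univ.filter fun a => ∀ m ∈ S, ¬ r a m).card := by
    have h := Finset.card_filter_add_card_filter_not (s := Finset.univ) fun a => X a = 0
    simp only [hX, Nat.cast_eq_zero, Finset.card_eq_zero, Finset.filter_eq_empty_iff] at h
    simp only [hX, ne_eq, Nat.cast_eq_zero, Finset.card_eq_zero, Finset.filter_eq_empty_iff]
    rw [eq_sub_iff_add_eq', ← Finset.card_univ]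
    exact_mod_cast h
  have first_moment : ∑ a, X a = S.card * (Fintype.card α / q) := sum_card_filter_eq h₁
  have hEN : ((Finset.univ.filter fun a => ∀ m ∈ S, ¬ r a m).card : ℝ) ≤ Fintype.card α :=
    mod_cast Finset.card_le_univ _
  have hE : (0 : ℝ) ≤ (Finset.univ.filter fun a => ∀ m ∈ S, ¬ r a m).card := Nat.cast_nonneg _
  have second_moment := sum_card_filter_sq_le hq h₁ h₂
  generalize ((Finset.univ.filter fun a => ∀ m ∈ S, ¬ r a m).card : ℝ) = E at *
  have hs : (0 : ℝ) ≤ S.card := Nat.cast_nonneg _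
  have hN : (0 : ℝ) ≤ Fintype.card α := Nat.cast_nonneg _
  generalize (S.card : ℝ) = s at *
  generalize (Fintype.card α : ℝ) = N at *
  have cauchy_schwarz : (s * (N / q)) ^ 2 ≤ (N - E) * (s * (s * (N / q ^ 2) + N / q)) := by
    rw [← first_moment, ← support]
    exact (sq_sum_le_card_support_mul_sum_sq X).trans <|
      mul_le_mul_of_nonneg_left second_moment (Nat.cast_nonneg _)
  rcases hs.eq_or_lt with rfl | hs0
  · rw [mul_zero]; positivity
  rcases hN.eq_or_lt with rfl | hN0
  · rw [zero_mul, hE.antisymm' hEN, zero_mul]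
  · have key : (s * N / q ^ 2) * (s * N) ≤ (s * N / q ^ 2) * ((N - E) * (s + q)) := by
      calc _ = (s * (N / q)) ^ 2 := by ring
        _ ≤ _ := cauchy_schwarz
        _ = _ := by field_simp
    nlinarith [le_of_mul_le_mul_left key (by positivity), mul_nonneg hE hq.le]

end Finite

theorem card_filter_eq_zero_mul_card {G H : Type*} [AddGroup G] [AddGroup H]
    [Fintype G] [Fintype H] [DecidableEq H] {f : G →+ H} (hf : Function.Surjective f) :
    (Finset.univ.filter fun a => f a = 0).card * Fintype.card H = Fintype.card G := by
  have h := AddSubgroup.card_mul_index f.ker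
  rw [AddSubgroup.index_ker, AddMonoidHom.range_eq_top.2 hf, AddSubgroup.card_top,
    Nat.card_eq_fintype_card, Nat.card_eq_fintype_card, Nat.card_eq_fintype_card] at h
  rw [← h, Fintype.card_subtype]
  simp only [AddMonoidHom.mem_ker]

variable {n p : ℕ} [Fact p.Prime]

/-- The pairing with a fixed integer vector, as an additive map in the covector. -/
@[simps]
def modPairingHom (p : ℕ) (m : Fin n → ℤ) : (Fin n → ZMod p) →+ ZMod p where
  toFun a := modPairing a m
  map_zero' := zero_dotProduct _
  map_add' a b := add_dotProduct a b _

theorem modPairingHom_single (m : Fin n → ℤ) (i : Fin n) (x : ZMod p) :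
    modPairingHom p m (Pi.single i x) = x * m i :=
  single_dotProduct _ x i

theorem card_modPairing_eq_zero {m : Fin n → ℤ} (hm : ∃ i, (m i : ZMod p) ≠ 0) :
    (Finset.univ.filter fun a : Fin n → ZMod p => modPairing a m = 0).card * p = p ^ n := by
  obtain ⟨i, hi⟩ := hm
  have h := card_filter_eq_zero_mul_card (f := modPairingHom p m) fun y =>
    ⟨Pi.single i (y / m i), by rw [modPairingHom_single, div_mul_cancel₀ _ hi]⟩
  simpa only [ZMod.card, Fintype.card_fun, Fintype.card_fin, modPairingHom_apply] using h

theorem card_modPairing_eq_zero_and {m m' : Fin n → ℤ}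
    (hm : ∃ i j, ((m i * m' j - m j * m' i : ℤ) : ZMod p) ≠ 0) :
    (Finset.univ.filter fun a : Fin n → ZMod p =>
      modPairing a m = 0 ∧ modPairing a m' = 0).card * p ^ 2 = p ^ n := by
  obtain ⟨i, j, hD⟩ := hm
  push_cast at hD
  have h := card_filter_eq_zero_mul_card
    (f := (modPairingHom p m).prod (modPairingHom p m')) fun y => by
    refine ⟨Pi.single i ((y.1 * m' j - y.2 * m j) / (m i * m' j - m j * m' i)) +
      Pi.single j ((y.2 * m i - y.1 * m' i) / (m i * m' j - m j * m' i)), Prod.ext ?_ ?_⟩ <;>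
    · simp only [AddMonoidHom.prod_apply, map_add, modPairingHom_single, Prod.mk_add_mk]
      rw [div_mul_eq_mul_div, div_mul_eq_mul_div, ← add_div, div_eq_iff hD]
      ring
  simpa only [ZMod.card, Fintype.card_fun, Fintype.card_fin, Fintype.card_prod,
    AddMonoidHom.prod_apply, Prod.mk_eq_zero, modPairingHom_apply, ← sq] using h

theorem card_forall_modPairing_ne_zero_mul_card_le {S : Finset (Fin n → ℤ)}
    (h₁ : ∀ m ∈ S, ∃ i, (m i : ZMod p) ≠ 0)
    (h₂ : ∀ m ∈ S, ∀ m' ∈ S, m ≠ m' → ∃ i j, ((m i * m' j - m j * m' i : ℤ) : ZMod p) ≠ 0) :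
    ((Finset.univ.filter fun a : Fin n → ZMod p => ∀ m ∈ S, modPairing a m ≠ 0).card : ℝ) *
      S.card ≤ (p : ℝ) ^ (n + 1) := by
  have hp : (0 : ℝ) < p := mod_cast (Fact.out : p.Prime).pos
  have hcard : (Fintype.card (Fin n → ZMod p) : ℝ) = p ^ n := by
    rw [Fintype.card_fun, ZMod.card, Fintype.card_fin, Nat.cast_pow]
  have h := card_forall_not_mul_card_le (S := S)
    (r := fun (a : Fin n → ZMod p) m => modPairing a m = 0) hp (fun m hm => ?_)
    fun m hm m' hm' hmm' => ?_
  · rwa [hcard, ← pow_succ] at h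
  · rw [hcard, _root_.eq_div_iff hp.ne']
    exact_mod_cast card_modPairing_eq_zero (h₁ m hm)
  · rw [hcard, _root_.eq_div_iff (by positivity)]
    exact_mod_cast card_modPairing_eq_zero_and (h₂ m hm m' hm' hmm')

end SecondMoment

section PrimitivePoints

variable {n : ℕ}

/-- A bounded Jordan measurable region, star-shaped about an origin which it omits, and containing
no pair of opposite vectors; the regions whose lattice points are counted. -/
structure IsTarget (A : Set (Fin n → ℝ)) : Prop where
  isBounded : Bornology.IsBounded A
  measurableSet : MeasurableSet A
  volume_frontier : volume (frontier A) = 0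
  smul_mem : ∀ v ∈ A, ∀ s : ℝ, 0 < s → s ≤ 1 → s • v ∈ A
  neg_notMem : ∀ v ∈ A, -v ∉ A

theorem IsTarget.zero_notMem {A : Set (Fin n → ℝ)} (hA : IsTarget A) : (0 : Fin n → ℝ) ∉ A :=
  fun h => hA.neg_notMem 0 h (by rwa [neg_zero])

/-- The integer points of the dilate of a set by a positive number. -/
def intPoints (B : Set (Fin n → ℝ)) (x : ℝ) : Set (Fin n → ℤ) :=
  {m | (x⁻¹ • fun i => (m i : ℝ)) ∈ B}

/-- An integer vector which is not a proper multiple of another one. -/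
def IsPrimitiveVec (m : Fin n → ℤ) : Prop := ∀ (d : ℕ) (k : Fin n → ℤ), m = (d : ℤ) • k → d = 1

theorem IsPrimitiveVec.ne_zero {m : Fin n → ℤ} (hm : IsPrimitiveVec m) : m ≠ 0 := fun h =>
  zero_ne_one (hm 0 0 (by rw [h, smul_zero]))

theorem exists_eq_smul_of_not_isPrimitiveVec {m : Fin n → ℤ} (hm : ¬ IsPrimitiveVec m)
    (hm0 : m ≠ 0) : ∃ (d : ℕ) (k : Fin n → ℤ), m = ((d + 2 : ℕ) : ℤ) • k := by
  simp only [IsPrimitiveVec, not_forall] at hm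
  obtain ⟨d, k, rfl, hd⟩ := hm
  have hd0 : d ≠ 0 := by
    rintro rfl
    exact hm0 (by rw [Nat.cast_zero, zero_smul])
  exact ⟨d - 2, k, by rw [Nat.sub_add_cancel (by lia)]⟩

variable {B : Set (Fin n → ℝ)} {R x y : ℝ}

theorem mem_intPoints_div_of_smul_mem {d : ℕ} {k : Fin n → ℤ}
    (h : (d : ℤ) • k ∈ intPoints B x) : k ∈ intPoints B (x / d) := by
  have hcast : ((x / d)⁻¹ • fun i => (k i : ℝ)) = x⁻¹ • fun i => (((d : ℤ) • k) i : ℝ) := by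
    ext i
    simp only [Pi.smul_apply, smul_eq_mul, Int.cast_mul, Int.cast_natCast, inv_div]
    ring
  rw [intPoints, Set.mem_ofPred_eq, hcast]
  exact h

theorem abs_le_of_mem_intPoints (hR : ∀ v ∈ B, ‖v‖ ≤ R) (hx : 0 < x) {m : Fin n → ℤ}
    (hm : m ∈ intPoints B x) (i : Fin n) : |(m i : ℝ)| ≤ R * x := by
  have h := (norm_le_pi_norm _ i).trans (hR _ hm)
  rwa [Pi.smul_apply, smul_eq_mul, norm_mul, norm_inv, Real.norm_eq_abs, Real.norm_eq_abs,
    abs_of_pos hx, inv_mul_le_iff₀ hx, mul_comm] at h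

theorem finite_intPoints (hB : Bornology.IsBounded B) (hx : 0 < x) : (intPoints B x).Finite := by
  obtain ⟨R, hR⟩ := hB.exists_norm_le
  refine (Set.finite_Icc (fun _ => -⌈R * x⌉) (fun _ => ⌈R * x⌉)).subset fun m hm => ?_
  have habs (i : Fin n) : |m i| ≤ ⌈R * x⌉ :=
    mod_cast (abs_le_of_mem_intPoints hR hx hm i).trans (Int.le_ceil _)
  exact ⟨fun i => (abs_le.1 (habs i)).1, fun i => (abs_le.1 (habs i)).2⟩

namespace IsTarget

theorem intPoints_subset_intPoints (hB : IsTarget B) (hx : 0 < x) (hxy : x ≤ y) :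
    intPoints B x ⊆ intPoints B y := fun m hm => by
  have hy := hx.trans_le hxy
  have h := hB.smul_mem _ hm (x / y) (by positivity) ((div_le_one hy).2 hxy)
  rwa [smul_smul, div_mul_eq_mul_div, mul_inv_cancel₀ hx.ne', one_div] at h

theorem ne_zero_of_mem_intPoints (hB : IsTarget B) {m : Fin n → ℤ} (hm : m ∈ intPoints B x) :
    m ≠ 0 := by
  rintro rfl
  have hzero : (x⁻¹ • fun i => ((0 : Fin n → ℤ) i : ℝ)) = 0 := by
    ext i
    simp only [Pi.zero_apply, Int.cast_zero, Pi.smul_apply, smul_zero]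
  exact hB.zero_notMem (hzero ▸ hm)

theorem intPoints_eq_empty (hB : IsTarget B) (hR : ∀ v ∈ B, ‖v‖ ≤ R) (hx : 0 < x)
    (hRx : R * x < 1) : intPoints B x = ∅ := by
  refine Set.eq_empty_of_forall_notMem fun m hm => hB.ne_zero_of_mem_intPoints hm ?_
  ext i
  have h : |(m i : ℝ)| < 1 := (abs_le_of_mem_intPoints hR hx hm i).trans_lt hRx
  exact Int.abs_lt_one_iff.1 (by exact_mod_cast h)

end IsTarget

open scoped Pointwise in
theorem image_intPoints_eq_inter_span :
    (fun m : Fin n → ℤ => (x⁻¹ • fun i => (m i : ℝ))) '' intPoints B x =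
      B ∩ x⁻¹ • (Submodule.span ℤ (Set.range (Pi.basisFun ℝ (Fin n))) : Set (Fin n → ℝ)) := by
  ext v
  simp only [Set.mem_inter_iff, Set.mem_smul_set, SetLike.mem_coe,
    Module.Basis.mem_span_iff_repr_mem, Pi.basisFun_repr]
  constructor
  · rintro ⟨m, hm, rfl⟩
    exact ⟨hm, _, fun i => ⟨m i, rfl⟩, rfl⟩
  · rintro ⟨hv, w, hw, rfl⟩
    choose m hm using hw
    obtain rfl : (fun i => (m i : ℝ)) = w := funext hm
    exact ⟨m, hv, rfl⟩

theorem injective_smul_intCast (hx : x ≠ 0) :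
    Function.Injective fun m : Fin n → ℤ => (x⁻¹ • fun i => (m i : ℝ)) := fun m m' h => by
  have h' := smul_right_injective (Fin n → ℝ) (inv_ne_zero hx) h
  exact funext fun i => Int.cast_injective (congrFun h' i)

namespace IsTarget

open scoped Pointwise in
theorem tendsto_ncard_intPoints (hB : IsTarget B) :
    Tendsto (fun x : ℝ => ((intPoints B x).ncard : ℝ) / x ^ n) atTop (nhds (volume.real B)) := by
  have dilate_mono : ∀ ⦃x y : ℝ⦄, 0 < x → x ≤ y → x • B ⊆ y • B := by
    rintro x y hx hxy _ ⟨v, hv, rfl⟩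
    have hy := hx.trans_le hxy
    refine ⟨(x / y) • v, hB.smul_mem v hv _ (by positivity) ((div_le_one hy).2 hxy), ?_⟩
    simp only [smul_smul, mul_div_cancel₀ _ hy.ne']
  refine (tendsto_card_div_pow_atTop_volume' B hB.isBounded hB.measurableSet hB.volume_frontier
    dilate_mono).congr' ?_
  filter_upwards [eventually_gt_atTop 0] with x hx
  rw [Fintype.card_fin, ← image_intPoints_eq_inter_span,
    Nat.card_image_of_injective (injective_smul_intCast hx.ne'), Nat.card_coe_set_eq]

theorem exists_ncard_intPoints_le (hB : IsTarget B) :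
    ∃ C : ℝ, ∀ x, 0 < x → ((intPoints B x).ncard : ℝ) ≤ C * x ^ n := by
  obtain ⟨R, hR0, hR⟩ := hB.isBounded.exists_pos_norm_le
  obtain ⟨Y, hY⟩ := ((hB.tendsto_ncard_intPoints.eventually
    (gt_mem_nhds (lt_add_one _))).and (eventually_gt_atTop (0 : ℝ))).exists_forall_of_atTop
  refine ⟨volume.real B + 1 + (intPoints B Y).ncard * R ^ n, fun x hx => ?_⟩
  rcases le_total Y x with hYx | hxY
  · calc ((intPoints B x).ncard : ℝ) ≤ (volume.real B + 1) * x ^ n :=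
          ((div_lt_iff₀ (by positivity)).1 (hY x hYx).1).le
      _ ≤ _ := by gcongr ?_ * _; exact le_add_of_nonneg_right (by positivity)
  rcases lt_or_ge (R * x) 1 with hRx | hRx
  · rw [hB.intPoints_eq_empty hR hx hRx, Set.ncard_empty, Nat.cast_zero]
    positivity
  · have hmono : ((intPoints B x).ncard : ℝ) ≤ (intPoints B Y).ncard :=
      mod_cast Set.ncard_le_ncard (hB.intPoints_subset_intPoints hx hxY)
        (finite_intPoints hB.isBounded (hY Y le_rfl).2)
    calc ((intPoints B x).ncard : ℝ) ≤ (intPoints B Y).ncard * (R * x) ^ n :=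
          hmono.trans (le_mul_of_one_le_right (Nat.cast_nonneg _) (one_le_pow₀ hRx))
      _ = (intPoints B Y).ncard * R ^ n * x ^ n := by rw [mul_pow, mul_assoc]
      _ ≤ _ := by gcongr ?_ * _; exact le_add_of_nonneg_left (by positivity)

theorem intPoints_subset_primitive_union_biUnion (hB : IsTarget B) (hR : ∀ v ∈ B, ‖v‖ ≤ R)
    (hx : 0 < x) {D : ℕ} (hD : R * x < D) :
    intPoints B x ⊆ {m ∈ intPoints B x | IsPrimitiveVec m} ∪
      ⋃ d ∈ Finset.range D, (fun k => ((d + 2 : ℕ) : ℤ) • k) '' intPoints B (x / (d + 2 : ℕ)) := by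
  intro m hm
  by_cases hprim : IsPrimitiveVec m
  · exact Or.inl ⟨hm, hprim⟩
  right
  obtain ⟨d, k, rfl⟩ :=
    exists_eq_smul_of_not_isPrimitiveVec hprim (hB.ne_zero_of_mem_intPoints hm)
  have hk := mem_intPoints_div_of_smul_mem hm
  have hdD : d < D := by
    by_contra! hDd
    refine (hB.intPoints_eq_empty hR (by positivity) ?_).subset hk
    rw [← mul_div_assoc, div_lt_one (by positivity)]
    exact hD.trans_le (by exact_mod_cast hDd.trans (Nat.le_add_right d 2))
  exact Set.mem_biUnion (Finset.mem_range.2 hdD) ⟨k, hk, rfl⟩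

theorem ncard_intPoints_le (hB : IsTarget B) (hx : 0 < x)
    (hs : Summable fun d : ℕ => ((intPoints B (x / (d + 2 : ℕ))).ncard : ℝ)) :
    ((intPoints B x).ncard : ℝ) ≤ ({m ∈ intPoints B x | IsPrimitiveVec m}.ncard : ℝ) +
      ∑' d : ℕ, ((intPoints B (x / (d + 2 : ℕ))).ncard : ℝ) := by
  obtain ⟨R, hR⟩ := hB.isBounded.exists_norm_le
  obtain ⟨D, hD⟩ := exists_nat_gt (R * x)
  have hfin (d : ℕ) : (intPoints B (x / (d + 2 : ℕ))).Finite :=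
    finite_intPoints hB.isBounded (by positivity)
  have hle : (intPoints B x).ncard ≤ {m ∈ intPoints B x | IsPrimitiveVec m}.ncard +
      ∑ d ∈ Finset.range D, (intPoints B (x / (d + 2 : ℕ))).ncard := by
    refine (Set.ncard_le_ncard (hB.intPoints_subset_primitive_union_biUnion hR hx hD)
      (((finite_intPoints hB.isBounded hx).subset (Set.sep_subset _ _)).union
        ((Finset.range D).finite_toSet.biUnion fun d _ => (hfin d).image _))).trans ?_
    refine (Set.ncard_union_le _ _).trans (add_le_add_right ?_ _)
    refine (Finset.set_ncard_biUnion_le _ _).trans (Finset.sum_le_sum fun d _ => ?_)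
    exact Set.ncard_image_le (hfin d)
  calc ((intPoints B x).ncard : ℝ) ≤ ({m ∈ intPoints B x | IsPrimitiveVec m}.ncard : ℝ) +
      ∑ d ∈ Finset.range D, ((intPoints B (x / (d + 2 : ℕ))).ncard : ℝ) := mod_cast hle
    _ ≤ _ := by
      gcongr
      exact hs.sum_le_tsum _ fun _ _ => Nat.cast_nonneg _

end IsTarget

theorem summable_one_div_add_two_pow (hn : 2 ≤ n) :
    Summable fun d : ℕ => 1 / ((d + 2 : ℕ) : ℝ) ^ n :=
  (summable_nat_add_iff 2).2 (Real.summable_one_div_nat_pow.2 hn)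

theorem tsum_one_div_add_two_pow_lt (hn : 2 ≤ n) :
    ∑' d : ℕ, 1 / ((d + 2 : ℕ) : ℝ) ^ n < 2 / 3 := by
  have zeta_two := (hasSum_nat_add_iff' 2).2 hasSum_zeta_two
  calc ∑' d : ℕ, 1 / ((d + 2 : ℕ) : ℝ) ^ n ≤ ∑' d : ℕ, 1 / ((d + 2 : ℕ) : ℝ) ^ 2 :=
        (summable_one_div_add_two_pow hn).tsum_le_tsum (fun d => one_div_le_one_div_of_le
          (by positivity) (pow_le_pow_right₀ (by norm_cast; lia) hn)) zeta_two.summable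
    _ = π ^ 2 / 6 - 1 := by rw [zeta_two.tsum_eq]; norm_num [Finset.sum_range_succ]
    _ < 2 / 3 := by nlinarith [pi_lt_d2, pi_pos]

namespace IsTarget

theorem tendsto_tsum_ncard_intPoints_div (hB : IsTarget B) (hn : 2 ≤ n) :
    Tendsto (fun x : ℝ => ∑' d : ℕ, ((intPoints B (x / (d + 2 : ℕ))).ncard : ℝ) / x ^ n)
      atTop (nhds (volume.real B * ∑' d : ℕ, 1 / ((d + 2 : ℕ) : ℝ) ^ n)) := by
  obtain ⟨C, hC⟩ := hB.exists_ncard_intPoints_le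
  rw [← tsum_mul_left]
  refine tendsto_tsum_of_dominated_convergence ((summable_one_div_add_two_pow hn).mul_left C)
    (fun d => ?_) ?_
  · have hd : (0 : ℝ) < (d + 2 : ℕ) := by positivity
    refine ((hB.tendsto_ncard_intPoints.comp (tendsto_id.atTop_div_const hd)).mul_const
      (1 / ((d + 2 : ℕ) : ℝ) ^ n)).congr fun x => ?_
    simp only [Function.comp_apply, id]
    rw [div_pow]
    field_simp
  · filter_upwards [eventually_gt_atTop 0] with x hx d
    rw [Real.norm_of_nonneg (by positivity), div_le_iff₀ (by positivity)]
    calc _ ≤ C * (x / (d + 2 : ℕ)) ^ n := hC _ (by positivity)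
      _ = _ := by rw [div_pow]; ring

theorem eventually_le_ncard_primitive (hB : IsTarget B) (hn : 2 ≤ n) (hV : 0 < volume.real B) :
    ∀ᶠ x in atTop,
      volume.real B / 3 * x ^ n ≤ ({m ∈ intPoints B x | IsPrimitiveVec m}.ncard : ℝ) := by
  obtain ⟨C, hC⟩ := hB.exists_ncard_intPoints_le
  have hlt : volume.real B / 3 <
      volume.real B - volume.real B * ∑' d : ℕ, 1 / ((d + 2 : ℕ) : ℝ) ^ n := by
    linarith [mul_lt_mul_of_pos_left (tsum_one_div_add_two_pow_lt hn) hV]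
  filter_upwards [(hB.tendsto_ncard_intPoints.sub
    (hB.tendsto_tsum_ncard_intPoints_div hn)).eventually (lt_mem_nhds hlt),
    eventually_gt_atTop 0] with x hx hx0
  have hs : Summable fun d : ℕ => ((intPoints B (x / (d + 2 : ℕ))).ncard : ℝ) := by
    refine Summable.of_nonneg_of_le (fun d => Nat.cast_nonneg _)
      (fun d => hC _ (div_pos hx0 (by positivity))) ?_
    refine ((summable_one_div_add_two_pow hn).mul_left (C * x ^ n)).congr fun d => ?_
    rw [div_pow]
    ring
  rw [tsum_div_const, ← sub_div, lt_div_iff₀ (by positivity)] at hx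
  linarith [hB.ncard_intPoints_le hx0 hs]

end IsTarget

end PrimitivePoints

section Miss

variable {n : ℕ}

theorem IsPrimitiveVec.natAbs_eq_one_of_forall_dvd {m : Fin n → ℤ} (hm : IsPrimitiveVec m)
    {a : ℤ} (h : ∀ j, a ∣ m j) : a.natAbs = 1 := by
  choose k hk using h
  refine hm a.natAbs (a.sign • k) (funext fun j => ?_)
  rw [Pi.smul_apply, Pi.smul_apply, smul_eq_mul, smul_eq_mul, ← mul_assoc, mul_comm _ a.sign,
    Int.sign_mul_natAbs, hk j]

theorem IsPrimitiveVec.eq_or_eq_neg {m m' : Fin n → ℤ} (hm : IsPrimitiveVec m)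
    (hm' : IsPrimitiveVec m') (h : ∀ i j, m i * m' j = m j * m' i) : m = m' ∨ m = -m' := by
  obtain ⟨i, hi : m i ≠ 0⟩ := Function.ne_iff.1 hm.ne_zero
  obtain ⟨d, a, b, hd, hab, ha, hb⟩ := Int.exists_gcd_one' (Int.gcd_pos_of_ne_zero_left (m' i) hi)
  have hcop : IsCoprime a b := Int.isCoprime_iff_gcd_eq_one.2 hab
  have hprop (j : Fin n) : a * m' j = b * m j := by
    refine mul_left_cancel₀ (a := (d : ℤ)) (by positivity) ?_
    have hij := h i j
    rw [ha, hb] at hij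
    linear_combination hij
  have ha1 : a.natAbs = 1 :=
    hm.natAbs_eq_one_of_forall_dvd fun j => hcop.dvd_of_dvd_mul_left ⟨m' j, (hprop j).symm⟩
  have hb1 : b.natAbs = 1 :=
    hm'.natAbs_eq_one_of_forall_dvd fun j => hcop.symm.dvd_of_dvd_mul_left ⟨m j, hprop j⟩
  have hunits : b = a ∨ b = -a := Int.natAbs_eq_natAbs_iff.1 (hb1.trans ha1.symm)
  have ha0 : a ≠ 0 := Int.natAbs_ne_zero.1 (by rw [ha1]; exact one_ne_zero)
  rcases hunits with rfl | rfl
  · exact Or.inl (funext fun j => mul_left_cancel₀ ha0 (hprop j).symm)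
  · refine Or.inr (funext fun j => mul_left_cancel₀ ha0 ?_)
    rw [Pi.neg_apply]
    linear_combination hprop j

theorem measurableSet_intersects {A : Set (Fin n → ℝ)} (hA : MeasurableSet A) :
    MeasurableSet {Λ : LatticeSpace n | Intersects n Λ A} := by
  rw [measurableSet_latticeSpace_iff]
  have hpre : (QuotientGroup.mk : SLR n → LatticeSpace n) ⁻¹' {Λ | Intersects n Λ A} =
      ⋃ m : Fin n → ℤ, ⋃ _ : m ≠ 0, {g | vecOf n g m ∈ A} := by
    ext g
    simp only [Set.mem_preimage, Set.mem_ofPred_eq, intersects_mk, Set.mem_iUnion, exists_prop]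
  rw [hpre]
  have hcont (m : Fin n → ℤ) : Continuous fun g : SLR n => vecOf n g m :=
    Matrix.SpecialLinearGroup.isClosedEmbedding_val.continuous.matrix_mulVec continuous_const
  exact MeasurableSet.iUnion fun m => MeasurableSet.iUnion fun _ => (hcont m).measurable hA

theorem volume_preimage_toLin' (g : SLR n) (A : Set (Fin n → ℝ)) :
    volume (Matrix.SpecialLinearGroup.toLin' g ⁻¹' A) = volume A := by
  have hdet : LinearMap.det (Matrix.toLin' (g : Matrix (Fin n) (Fin n) ℝ)) = 1 := by
    rw [LinearMap.det_toLin', g.det_coe]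
  have h := Measure.addHaar_preimage_linearMap (volume : Measure (Fin n → ℝ))
    (f := Matrix.toLin' (g : Matrix (Fin n) (Fin n) ℝ)) (by rw [hdet]; exact one_ne_zero) A
  rwa [hdet, inv_one, abs_one, ENNReal.ofReal_one, one_mul] at h

theorem IsTarget.preimage {A : Set (Fin n → ℝ)} (hA : IsTarget A)
    (e : (Fin n → ℝ) ≃L[ℝ] (Fin n → ℝ)) : IsTarget (e ⁻¹' A) where
  isBounded := by
    rw [← ContinuousLinearEquiv.image_symm_eq_preimage]
    exact e.symm.lipschitz.isBounded_image hA.isBounded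
  measurableSet := e.continuous.measurable hA.measurableSet
  volume_frontier := by
    rw [← e.isOpenMap.preimage_frontier_eq_frontier_preimage e.continuous]
    exact (Measure.ContinuousLinearMap.quasiMeasurePreserving volume e.toContinuousLinearMap
      e.toLinearEquiv.isUnit_det'.ne_zero).preimage_null hA.volume_frontier
  smul_mem v hv s hs hs1 := by
    rw [Set.mem_preimage, map_smul]
    exact hA.smul_mem _ hv s hs hs1
  neg_notMem v hv := by
    rw [Set.mem_preimage, map_neg]
    exact hA.neg_notMem _ hv

theorem intCast_zmod_ne_zero {p : ℕ} {z : ℤ} (hz : z ≠ 0) (hzp : |(z : ℝ)| < p) :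
    (z : ZMod p) ≠ 0 := fun h =>
  hz (Int.eq_zero_of_abs_lt_dvd ((ZMod.intCast_zmod_eq_zero_iff_dvd _ _).1 h)
    (by exact_mod_cast hzp))

variable {B : Set (Fin n → ℝ)} {R x : ℝ} {p : ℕ}

theorem IsPrimitiveVec.exists_intCast_ne_zero {m : Fin n → ℤ} (hm : IsPrimitiveVec m)
    (hp : ∀ i, |(m i : ℝ)| < p) : ∃ i, (m i : ZMod p) ≠ 0 :=
  let ⟨i, hi⟩ := Function.ne_iff.1 hm.ne_zero
  ⟨i, intCast_zmod_ne_zero hi (hp i)⟩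

theorem IsTarget.exists_minor_ne_zero (hB : IsTarget B) (hR : ∀ v ∈ B, ‖v‖ ≤ R) (hx : 0 < x)
    (hp : 2 * (R * x) ^ 2 < p) {m m' : Fin n → ℤ} (hm : m ∈ intPoints B x)
    (hm' : m' ∈ intPoints B x) (hprim : IsPrimitiveVec m) (hprim' : IsPrimitiveVec m')
    (hne : m ≠ m') : ∃ i j, ((m i * m' j - m j * m' i : ℤ) : ZMod p) ≠ 0 := by
  have minor_lt (i j : Fin n) : |((m i * m' j - m j * m' i : ℤ) : ℝ)| < p := by
    have hi := abs_le_of_mem_intPoints hR hx hm i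
    have hj := abs_le_of_mem_intPoints hR hx hm j
    have hi' := abs_le_of_mem_intPoints hR hx hm' i
    have hj' := abs_le_of_mem_intPoints hR hx hm' j
    have hRx := (abs_nonneg _).trans hi
    calc |((m i * m' j - m j * m' i : ℤ) : ℝ)|
        ≤ |(m i : ℝ)| * |(m' j : ℝ)| + |(m j : ℝ)| * |(m' i : ℝ)| := by
          push_cast
          rw [← abs_mul, ← abs_mul]
          exact abs_sub _ _
      _ ≤ R * x * (R * x) + R * x * (R * x) := by gcongr
      _ = 2 * (R * x) ^ 2 := by ring
      _ < p := hp
  by_contra! hcon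
  have minor_eq (i j : Fin n) : m i * m' j = m j * m' i :=
    sub_eq_zero.1 (not_imp_not.1 (intCast_zmod_ne_zero · (minor_lt i j)) (hcon i j))
  rcases hprim.eq_or_eq_neg hprim' minor_eq with h | rfl
  · exact hne h
  · refine hB.neg_notMem _ hm' ?_
    rw [intPoints, Set.mem_ofPred_eq] at hm
    convert hm using 1
    ext i
    simp only [Pi.neg_apply, Pi.smul_apply, smul_eq_mul, Int.cast_neg, mul_neg]

theorem IsTarget.card_forall_modPairing_ne_zero_mul_card_le [Fact p.Prime] (hB : IsTarget B)
    (hR : ∀ v ∈ B, ‖v‖ ≤ R) (hx : 0 < x) (hp : 2 * (R * x) ^ 2 < p) {S : Finset (Fin n → ℤ)}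
    (hS : ∀ m ∈ S, m ∈ intPoints B x) (hprim : ∀ m ∈ S, IsPrimitiveVec m) :
    ((Finset.univ.filter fun a : Fin n → ZMod p => ∀ m ∈ S, modPairing a m ≠ 0).card : ℝ) *
      S.card ≤ (p : ℝ) ^ (n + 1) := by
  have hp1 : (1 : ℝ) ≤ p := mod_cast (Fact.out : p.Prime).one_le
  refine _root_.card_forall_modPairing_ne_zero_mul_card_le (fun m hm => ?_)
    fun m hm m' hm' hne => hB.exists_minor_ne_zero hR hx hp (hS m hm) (hS m' hm') (hprim m hm)
      (hprim m' hm') hne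
  refine (hprim m hm).exists_intCast_ne_zero fun i => ?_
  have hi := abs_le_of_mem_intPoints hR hx (hS m hm) i
  nlinarith

section Hecke

variable [Fact p.Prime] {A : Set (Fin n → ℝ)} (g : SLR n)

theorem intersects_mk_mul_heckeElt (hA : (0 : Fin n → ℝ) ∉ A)
    {a : {a : Fin n → ZMod p // a ≠ 0}} {m : Fin n → ℤ}
    (hm : m ∈ intPoints (Matrix.SpecialLinearGroup.toLin' g ⁻¹' A) ((p : ℝ) ^ ((1 : ℝ) / n)))
    (ha : modPairing a.1 m = 0) :
    Intersects n (QuotientGroup.mk (g * heckeElt a)) A := by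
  obtain ⟨k, hk⟩ := (range_vecOf_heckeElt a).superset ⟨m, ha, rfl⟩
  have hmem : vecOf n (g * heckeElt a) k ∈ A := by
    rw [vecOf_mul, hk, neg_div, Real.rpow_neg (Nat.cast_nonneg p)]
    exact hm
  refine intersects_mk.2 ⟨k, ?_, hmem⟩
  rintro rfl
  exact hA (vecOf_zero (n := n) _ ▸ hmem)

theorem heckeMeasure_mk_le {s : Set (LatticeSpace n)} (hs : MeasurableSet s)
    {bad : Finset (Fin n → ZMod p)}
    (hbad : ∀ a : {a : Fin n → ZMod p // a ≠ 0}, a.1 ∉ bad →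
      (QuotientGroup.mk (g * heckeElt a) : LatticeSpace n) ∉ s) :
    heckeMeasure p (QuotientGroup.mk g : LatticeSpace n) s ≤
      (bad.card : ℝ≥0∞) / Fintype.card {a : Fin n → ZMod p // a ≠ 0} := by
  classical
  have dirac_le (a : {a : Fin n → ZMod p // a ≠ 0}) :
      Measure.dirac (QuotientGroup.mk (g * heckeElt a) : LatticeSpace n) s ≤
        if a.1 ∈ bad then 1 else 0 := by
    split_ifs with ha
    · exact prob_le_one
    · rw [Measure.dirac_apply' _ hs, Set.indicator_of_notMem (hbad a ha)]
  have card_le : (Finset.univ.filter fun a : {a : Fin n → ZMod p // a ≠ 0} => a.1 ∈ bad).card ≤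
      bad.card :=
    Finset.card_le_card_of_injOn Subtype.val (fun a ha => (Finset.mem_filter.1 ha).2)
      Subtype.val_injective.injOn
  rw [heckeMeasure_mk, Measure.smul_apply, Measure.finsetSum_apply, smul_eq_mul,
    ENNReal.div_eq_inv_mul]
  gcongr
  calc _ ≤ ∑ a : {a : Fin n → ZMod p // a ≠ 0}, (if a.1 ∈ bad then (1 : ℝ≥0∞) else 0) :=
        Finset.sum_le_sum fun a _ => dirac_le a
    _ ≤ bad.card := by rw [Finset.sum_boole]; exact_mod_cast card_le

theorem card_ne_zero_fun_zmod :
    (Fintype.card {a : Fin n → ZMod p // a ≠ 0} : ℝ) = (p : ℝ) ^ n - 1 := by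
  rw [Fintype.card_subtype_compl, Fintype.card_fun, ZMod.card, Fintype.card_fin,
    Fintype.card_subtype_eq, Nat.cast_sub (Nat.one_le_pow _ _ (Fact.out : p.Prime).pos),
    Nat.cast_pow, Nat.cast_one]

theorem card_div_card_ne_zero_le (hn : n ≠ 0) {N : ℕ} {V : ℝ} (hV : 0 < V)
    (h : N * V ≤ 3 * (p : ℝ) ^ n) :
    (N : ℝ≥0∞) / Fintype.card {a : Fin n → ZMod p // a ≠ 0} ≤ ENNReal.ofReal (6 / V) := by
  have hp : (2 : ℝ) ≤ p := mod_cast (Fact.out : p.Prime).two_le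
  have hpn : (2 : ℝ) ≤ (p : ℝ) ^ n := hp.trans (le_self_pow₀ (by linarith) hn)
  refine ENNReal.div_le_of_le_mul ?_
  rw [← ENNReal.ofReal_natCast, ← ENNReal.ofReal_natCast, ← ENNReal.ofReal_mul (by positivity),
    card_ne_zero_fun_zmod]
  refine ENNReal.ofReal_le_ofReal ?_
  rw [div_mul_eq_mul_div, le_div_iff₀ hV]
  linarith

theorem IsTarget.heckeMeasure_not_intersects_le (hn : n ≠ 0) (hA : IsTarget A)
    (hR : ∀ v ∈ Matrix.SpecialLinearGroup.toLin' g ⁻¹' A, ‖v‖ ≤ R)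
    (hp : 2 * (R * (p : ℝ) ^ ((1 : ℝ) / n)) ^ 2 < p) {V : ℝ} (hV : 0 < V)
    (hprim : V / 3 * p ≤ ({m ∈ intPoints (Matrix.SpecialLinearGroup.toLin' g ⁻¹' A)
      ((p : ℝ) ^ ((1 : ℝ) / n)) | IsPrimitiveVec m}.ncard : ℝ)) :
    heckeMeasure p (QuotientGroup.mk g : LatticeSpace n) {Λ | ¬ Intersects n Λ A} ≤
      ENNReal.ofReal (6 / V) := by
  set x : ℝ := (p : ℝ) ^ ((1 : ℝ) / n)
  have hp0 : (0 : ℝ) < p := mod_cast (Fact.out : p.Prime).pos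
  have hx : 0 < x := by positivity
  have hB : IsTarget (Matrix.SpecialLinearGroup.toLin' g ⁻¹' A) :=
    hA.preimage (Matrix.SpecialLinearGroup.toLin' g).toContinuousLinearEquiv
  have hfin := (finite_intPoints hB.isBounded hx).subset (Set.sep_subset _ IsPrimitiveVec)
  rw [Set.ncard_eq_toFinset_card _ hfin] at hprim
  set bad := Finset.univ.filter fun a : Fin n → ZMod p => ∀ m ∈ hfin.toFinset, modPairing a m ≠ 0
    with hbad
  have hcount : (bad.card : ℝ) * hfin.toFinset.card ≤ (p : ℝ) ^ (n + 1) :=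
    hB.card_forall_modPairing_ne_zero_mul_card_le hR hx hp
      (fun m hm => (hfin.mem_toFinset.1 hm).1) (fun m hm => (hfin.mem_toFinset.1 hm).2)
  have hbadV : (bad.card : ℝ) * V ≤ 3 * (p : ℝ) ^ n := by
    refine le_of_mul_le_mul_right ?_ hp0
    rw [pow_succ] at hcount
    linarith [mul_le_mul_of_nonneg_left hprim (Nat.cast_nonneg bad.card)]
  refine (heckeMeasure_mk_le g (measurableSet_intersects hA.measurableSet).compl
    fun a ha hmiss => hmiss ?_).trans (card_div_card_ne_zero_le hn hV hbadV)
  simp only [hbad, Finset.mem_filter, Finset.mem_univ, true_and, not_forall, not_not] at ha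
  obtain ⟨m, hm, ham⟩ := ha
  exact intersects_mk_mul_heckeElt g hA.zero_notMem (hfin.mem_toFinset.1 hm).1 ham

end Hecke

-- `n ≥ 3` makes the height `p ^ (2 / n)` of the minors of `p ^ (1 / n) • A` smaller than `p`.
theorem IsTarget.eventually_heckeMeasure_not_intersects_le (hn : 3 ≤ n) {A : Set (Fin n → ℝ)}
    (hA : IsTarget A) (hV : 0 < volume.real A) (Λ : LatticeSpace n) :
    ∀ᶠ p : ℕ in atTop, ∀ _ : Fact p.Prime,
      heckeMeasure p Λ {Λ | ¬ Intersects n Λ A} ≤ ENNReal.ofReal (6 / volume.real A) := by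
  obtain ⟨g, rfl⟩ := QuotientGroup.mk_surjective Λ
  have hB : IsTarget (Matrix.SpecialLinearGroup.toLin' g ⁻¹' A) :=
    hA.preimage (Matrix.SpecialLinearGroup.toLin' g).toContinuousLinearEquiv
  have hvol : volume.real (Matrix.SpecialLinearGroup.toLin' g ⁻¹' A) = volume.real A := by
    rw [measureReal_def, volume_preimage_toLin', measureReal_def]
  obtain ⟨R, hR⟩ := hB.isBounded.exists_norm_le
  have hn0 : n ≠ 0 := by lia
  have hroot : Tendsto (fun p : ℕ => (p : ℝ) ^ ((1 : ℝ) / n)) atTop atTop :=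
    (tendsto_rpow_atTop (by positivity)).comp tendsto_natCast_atTop_atTop
  filter_upwards [hroot.eventually (hB.eventually_le_ncard_primitive (by lia) (hvol ▸ hV)),
    hroot.eventually (eventually_gt_atTop (2 * R ^ 2)),
    hroot.eventually (eventually_ge_atTop 1)] with p hprim hRp hp1 _
  have hpn : ((p : ℝ) ^ ((1 : ℝ) / n)) ^ n = p := by
    rw [one_div, Real.rpow_inv_natCast_pow (Nat.cast_nonneg p) hn0]
  rw [hpn, hvol] at hprim
  refine hA.heckeMeasure_not_intersects_le g hn0 hR ?_ hV hprim
  set x : ℝ := (p : ℝ) ^ ((1 : ℝ) / n)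
  calc 2 * (R * x) ^ 2 = 2 * R ^ 2 * x ^ 2 := by ring
    _ < x * x ^ 2 := by gcongr
    _ = x ^ 3 := by ring
    _ ≤ x ^ n := pow_le_pow_right₀ hp1 hn
    _ = p := hpn

theorem IsTarget.measure_not_intersects_le (hn : 3 ≤ n) {μ : Measure (LatticeSpace n)}
    [IsProbabilityMeasure μ] [SMulInvariantMeasure (SLR n) (LatticeSpace n) μ]
    {A : Set (Fin n → ℝ)} (hA : IsTarget A) (hV : 0 < volume.real A) :
    μ {Λ | ¬ Intersects n Λ A} ≤ ENNReal.ofReal (6 / volume.real A) := by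
  have : NeZero n := ⟨by lia⟩
  have hmeas : MeasurableSet {Λ : LatticeSpace n | ¬ Intersects n Λ A} :=
    (measurableSet_intersects hA.measurableSet).compl
  have (k : ℕ) : Fact (Nat.nth Nat.Prime k).Prime := ⟨Nat.prime_nth_prime k⟩
  have limsup_le (Λ : LatticeSpace n) :
      limsup (fun k => heckeMeasure (Nat.nth Nat.Prime k) Λ {Λ | ¬ Intersects n Λ A}) atTop ≤
        ENNReal.ofReal (6 / volume.real A) :=
    limsup_le_of_le (by isBoundedDefault)
      (((Nat.nth_strictMono Nat.infinite_setOfPred_prime).tendsto_atTop.eventually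
        (hA.eventually_heckeMeasure_not_intersects_le hn hV Λ)).mono fun k hk => hk (this k))
  calc μ {Λ | ¬ Intersects n Λ A} = limsup (fun k => ∫⁻ Λ, heckeMeasure (Nat.nth Nat.Prime k) Λ
        {Λ | ¬ Intersects n Λ A} ∂μ) atTop := by
        simp_rw [lintegral_heckeMeasure hmeas]
        exact (limsup_const _).symm
    _ ≤ ∫⁻ Λ, limsup (fun k => heckeMeasure (Nat.nth Nat.Prime k) Λ
        {Λ | ¬ Intersects n Λ A}) atTop ∂μ :=
        limsup_lintegral_le (fun _ => 1)
          (fun k => (Measure.measurable_coe hmeas).comp measurable_heckeMeasure)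
          (fun k => Eventually.of_forall fun Λ => prob_le_one)
          (by rw [lintegral_one, measure_univ]; exact one_ne_top)
    _ ≤ ∫⁻ _, ENNReal.ofReal (6 / volume.real A) ∂μ := lintegral_mono limsup_le
    _ = _ := by rw [lintegral_const, measure_univ, mul_one]

end Miss

section Shear

variable {K E : Type*} [Field K] [AddCommGroup E] [Module K E]

/-- Two linearly independent functionals `φ`, `ℓ` on whose common level sets the linear map `T`
acts as the shear `(φ, ℓ) ↦ (φ + ℓ, ℓ)`. -/
structure IsShearPair (T : E ≃ₗ[K] E) (φ ℓ : E →ₗ[K] K) : Prop where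
  exists_left : ∃ v, φ v = 1 ∧ ℓ v = 0
  exists_right : ∃ v, φ v = 0 ∧ ℓ v = 1
  left : ∀ v, φ (T v) = φ v + ℓ v
  right : ∀ v, ℓ (T v) = ℓ v

theorem exists_isShearPair {T : E ≃ₗ[K] E} (hT : IsNilpotent ((T : Module.End K E) - 1))
    (hT1 : T ≠ 1) : ∃ φ ℓ, IsShearPair T φ ℓ := by
  set N : Module.End K E := T - 1
  have hTN (v : E) : T v = v + N v := (add_sub_cancel v (T v)).symm
  have hN0 : N ≠ 0 := fun h => hT1 (LinearEquiv.toLinearMap_injective (sub_eq_zero.1 h))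
  have : Nontrivial (Module.End K E) := ⟨⟨N, 0, hN0⟩⟩
  obtain ⟨k, hk⟩ : ∃ k, nilpotencyClass N = k + 2 := by
    have hpos : 0 < nilpotencyClass N := pos_nilpotencyClass_iff.2 hT
    have hne : nilpotencyClass N ≠ 1 := fun h => hN0 (nilpotencyClass_eq_one.1 h)
    exact ⟨nilpotencyClass N - 2, by lia⟩
  obtain ⟨hk2, hk1⟩ := nilpotencyClass_eq_succ_iff.1 hk
  obtain ⟨w, hw⟩ : ∃ w, (N ^ (k + 1)) w ≠ 0 := by
    by_contra! h
    exact hk1 (LinearMap.ext h)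
  obtain ⟨f, hf⟩ := Module.Projective.exists_dual_eq_one K hw
  have hNℓ (v : E) : f ((N ^ (k + 1)) (N v)) = 0 := by
    rw [← Module.End.mul_apply, ← pow_succ, hk2, LinearMap.zero_apply, map_zero]
  have hNφ (v : E) : f ((N ^ k) (N v)) = f ((N ^ (k + 1)) v) := by
    rw [pow_succ, Module.End.mul_apply]
  refine ⟨f ∘ₗ N ^ k, f ∘ₗ N ^ (k + 1), ⟨N w, ?_, ?_⟩, ⟨w - f ((N ^ k) w) • N w, ?_, ?_⟩, ?_, ?_⟩
    <;> simp [hTN, hNφ, hNℓ, hf]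

namespace IsShearPair

variable {T : E ≃ₗ[K] E} {φ ℓ : E →ₗ[K] K}

theorem pow_right (h : IsShearPair T φ ℓ) (j : ℕ) (v : E) : ℓ ((T ^ j) v) = ℓ v := by
  induction j with
  | zero => rfl
  | succ j ih => rw [pow_succ', LinearEquiv.mul_apply, h.right, ih]

theorem pow_left (h : IsShearPair T φ ℓ) (j : ℕ) (v : E) : φ ((T ^ j) v) = φ v + j * ℓ v := by
  induction j with
  | zero => simp
  | succ j ih =>
    rw [pow_succ', LinearEquiv.mul_apply, h.left, ih, h.pow_right]
    push_cast
    ring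

end IsShearPair

end Shear

section ConeBall

variable {E : Type*} [NormedAddCommGroup E] [NormedSpace ℝ E] {φ ℓ : E →ₗ[ℝ] ℝ} {ε : ℝ}

/-- The part of the ball of radius `ε` about the origin which lies in the cone `2 |φ| < ℓ`. The
factor `2` makes the preimages of this cone under the powers of a shear pairwise disjoint. -/
def coneBall (φ ℓ : E →ₗ[ℝ] ℝ) (ε : ℝ) : Set E :=
  {v | ‖v‖ < ε ∧ 2 * |φ v| < ℓ v}

theorem pos_of_mem_coneBall {v : E} (hv : v ∈ coneBall φ ℓ ε) : 0 < ℓ v :=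
  lt_of_le_of_lt (by positivity) hv.2

theorem smul_mem_coneBall_iff {s : ℝ} (hs : 0 < s) {v : E} :
    s • v ∈ coneBall φ ℓ ε ↔ v ∈ coneBall φ ℓ (ε / s) := by
  refine and_congr ?_ ?_
  · rw [norm_smul, Real.norm_of_nonneg hs.le, lt_div_iff₀' hs]
  · rw [map_smul, map_smul, smul_eq_mul, smul_eq_mul, abs_mul, abs_of_pos hs, mul_left_comm,
      mul_lt_mul_iff_right₀ hs]

theorem convex_coneBall : Convex ℝ (coneBall φ ℓ ε) := by
  have hcone : Convex ℝ {v : E | 2 * |φ v| - ℓ v < 0} := by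
    have hconv : ConvexOn ℝ Set.univ fun v : E => 2 * |φ v| - ℓ v :=
      (((convexOn_univ_norm (E := ℝ)).comp_linearMap φ).smul two_pos.le).sub
        (ℓ.concaveOn convex_univ)
    simpa only [Set.mem_univ, true_and] using hconv.convex_lt 0
  convert (convex_ball (0 : E) ε).inter hcone using 1
  ext v
  simp only [coneBall, Set.mem_inter_iff, mem_ball_zero_iff, Set.mem_ofPred_eq, sub_neg]

theorem isBounded_coneBall : Bornology.IsBounded (coneBall φ ℓ ε) :=
  isBounded_iff_forall_norm_le.2 ⟨ε, fun _ hv => hv.1.le⟩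

variable [FiniteDimensional ℝ E]

theorem isOpen_coneBall : IsOpen (coneBall φ ℓ ε) :=
  (isOpen_lt continuous_norm continuous_const).inter
    (isOpen_lt (continuous_const.mul φ.continuous_of_finiteDimensional.abs)
      ℓ.continuous_of_finiteDimensional)

variable [MeasurableSpace E] (μ : Measure E) [μ.IsAddHaarMeasure]

theorem IsShearPair.measureReal_coneBall_pos {T : E ≃ₗ[ℝ] E} (h : IsShearPair T φ ℓ)
    (hε : 0 < ε) : 0 < μ.real (coneBall φ ℓ ε) := by
  obtain ⟨v, hφv, hℓv⟩ := h.exists_right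
  have hv : 0 < ‖v‖ := norm_pos_iff.2 fun h0 => by simp [h0] at hℓv
  refine ENNReal.toReal_pos (isOpen_coneBall.measure_pos μ ⟨(ε / (2 * ‖v‖)) • v, ?_⟩).ne'
    isBounded_coneBall.measure_lt_top.ne
  rw [smul_mem_coneBall_iff (by positivity), div_div_cancel₀ hε.ne']
  exact ⟨by linarith, by simp [hφv, hℓv]⟩

variable [BorelSpace E]

open scoped Pointwise in
theorem measureReal_coneBall (hε : 0 < ε) :
    μ.real (coneBall φ ℓ ε) = ε ^ Module.finrank ℝ E * μ.real (coneBall φ ℓ 1) := by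
  have hsmul : coneBall φ ℓ ε = ε • coneBall φ ℓ 1 := by
    ext v
    rw [Set.mem_smul_set_iff_inv_smul_mem₀ hε.ne', smul_mem_coneBall_iff (inv_pos.2 hε), one_div,
      inv_inv]
  rw [hsmul, measureReal_def, Measure.addHaar_smul_of_nonneg μ hε.le, ENNReal.toReal_mul,
    ENNReal.toReal_ofReal (by positivity), measureReal_def]

end ConeBall

section SweptCone

variable {n : ℕ} {φ ℓ : (Fin n → ℝ) →ₗ[ℝ] ℝ} {ε : ℝ}

theorem isTarget_coneBall : IsTarget (coneBall φ ℓ ε) where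
  isBounded := isBounded_coneBall
  measurableSet := isOpen_coneBall.measurableSet
  volume_frontier := convex_coneBall.addHaar_frontier volume
  smul_mem v hv s hs hs1 := by
    refine (smul_mem_coneBall_iff hs).2 ⟨hv.1.trans_le ?_, hv.2⟩
    exact (le_div_iff₀ hs).2 (mul_le_of_le_one_right ((norm_nonneg v).trans hv.1.le) hs1)
  neg_notMem v hv hv' := by
    have hneg := pos_of_mem_coneBall hv'
    rw [map_neg] at hneg
    linarith [pos_of_mem_coneBall hv]

theorem IsTarget.biUnion {ι : Type*} {s : Finset ι} {A : ι → Set (Fin n → ℝ)}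
    (hA : ∀ i ∈ s, IsTarget (A i)) (hneg : ∀ i ∈ s, ∀ j ∈ s, ∀ v ∈ A i, -v ∉ A j) :
    IsTarget (⋃ i ∈ s, A i) where
  isBounded := (Bornology.isBounded_biUnion_finset s).2 fun i hi => (hA i hi).isBounded
  measurableSet := s.measurableSet_biUnion fun i hi => (hA i hi).measurableSet
  volume_frontier := by
    have hsub : frontier (⋃ i ∈ s, A i) ⊆ ⋃ i ∈ s, frontier (A i) := by
      rintro v ⟨hcl, hint⟩
      rw [s.closure_biUnion] at hcl
      obtain ⟨i, hi, hv⟩ := Set.mem_iUnion₂.1 hcl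
      exact Set.mem_iUnion₂.2
        ⟨i, hi, hv, fun h => hint (interior_mono (Set.subset_biUnion_of_mem hi) h)⟩
    exact measure_mono_null hsub
      ((measure_biUnion_null_iff s.countable_toSet).2 fun i hi => (hA i hi).volume_frontier)
  smul_mem v hv r hr hr1 := by
    obtain ⟨i, hi, hv⟩ := Set.mem_iUnion₂.1 hv
    exact Set.mem_iUnion₂.2 ⟨i, hi, (hA i hi).smul_mem v hv r hr hr1⟩
  neg_notMem v hv hv' := by
    obtain ⟨i, hi, hv⟩ := Set.mem_iUnion₂.1 hv
    obtain ⟨j, hj, hv'⟩ := Set.mem_iUnion₂.1 hv'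
    exact hneg i hi j hj v hv hv'

/-- The points carried into `coneBall φ ℓ ε` by some power `T ^ j` with `J < j ≤ 2 * J`. -/
def sweptCone (T : (Fin n → ℝ) ≃ₗ[ℝ] (Fin n → ℝ)) (φ ℓ : (Fin n → ℝ) →ₗ[ℝ] ℝ) (ε : ℝ) (J : ℕ) :
    Set (Fin n → ℝ) :=
  ⋃ j ∈ Finset.Ioc J (2 * J), ⇑(T ^ j) ⁻¹' coneBall φ ℓ ε

namespace IsShearPair

theorem isTarget_sweptCone {T : (Fin n → ℝ) ≃ₗ[ℝ] (Fin n → ℝ)} (h : IsShearPair T φ ℓ) (J : ℕ) :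
    IsTarget (sweptCone T φ ℓ ε J) := by
  refine IsTarget.biUnion (fun j _ => isTarget_coneBall.preimage (T ^ j).toContinuousLinearEquiv)
    fun i _ j _ v hv hv' => ?_
  have hpos := pos_of_mem_coneBall hv
  have hneg := pos_of_mem_coneBall hv'
  rw [h.pow_right] at hpos hneg
  rw [map_neg] at hneg
  linarith

theorem pairwise_disjoint_preimage_coneBall {T : (Fin n → ℝ) ≃ₗ[ℝ] (Fin n → ℝ)}
    (h : IsShearPair T φ ℓ) :
    Pairwise (Function.onFun Disjoint fun j : ℕ => ⇑(T ^ j) ⁻¹' coneBall φ ℓ ε) := by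
  refine (pairwise_disjoint_on _).2 fun i j hij => Set.disjoint_left.2 fun v hi hj => ?_
  have hpos := pos_of_mem_coneBall hi
  obtain ⟨-, hi⟩ := hi
  obtain ⟨-, hj⟩ := hj
  rw [h.pow_right] at hpos hi hj
  rw [h.pow_left] at hi hj
  have hij' : (i : ℝ) + 1 ≤ j := by exact_mod_cast hij
  nlinarith [neg_abs_le (φ v + i * ℓ v), le_abs_self (φ v + j * ℓ v)]

variable {g : SLR n}

theorem volume_real_sweptCone (h : IsShearPair (Matrix.SpecialLinearGroup.toLin' g) φ ℓ)
    (hε : 0 < ε) (J : ℕ) :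
    volume.real (sweptCone (Matrix.SpecialLinearGroup.toLin' g) φ ℓ ε J) =
      J * (ε ^ n * volume.real (coneBall φ ℓ 1)) := by
  have hvol (j : ℕ) :
      volume.real (⇑(Matrix.SpecialLinearGroup.toLin' g ^ j) ⁻¹' coneBall φ ℓ ε) =
        ε ^ n * volume.real (coneBall φ ℓ 1) := by
    rw [← map_pow, measureReal_def, volume_preimage_toLin', ← measureReal_def,
      measureReal_coneBall volume hε, Module.finrank_fin_fun]
  have ht (j : ℕ) : IsTarget (⇑(Matrix.SpecialLinearGroup.toLin' g ^ j) ⁻¹' coneBall φ ℓ ε) :=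
    isTarget_coneBall.preimage (Matrix.SpecialLinearGroup.toLin' g ^ j).toContinuousLinearEquiv
  rw [sweptCone, measureReal_biUnion_finset (h.pairwise_disjoint_preimage_coneBall.set_pairwise _)
    (fun j _ => (ht j).measurableSet) fun j _ => (ht j).isBounded.measure_lt_top.ne]
  simp only [hvol, Finset.sum_const, Nat.card_Ioc, nsmul_eq_mul, two_mul, Nat.add_sub_cancel]

end IsShearPair

theorem intersects_smul_iff {g : SLR n} {Λ : LatticeSpace n} {A : Set (Fin n → ℝ)} :
    Intersects n (g • Λ) A ↔ Intersects n Λ (Matrix.SpecialLinearGroup.toLin' g ⁻¹' A) := by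
  obtain ⟨h, rfl⟩ := QuotientGroup.mk_surjective Λ
  rw [MulAction.Quotient.smul_mk, intersects_mk, intersects_mk]
  simp only [smul_eq_mul, vecOf_mul, Set.mem_preimage,
    Matrix.SpecialLinearGroup.toLin'_apply, Matrix.toLin'_apply]

theorem intersects_biUnion {ι : Type*} {s : Set ι} {Λ : LatticeSpace n}
    {A : ι → Set (Fin n → ℝ)} :
    Intersects n Λ (⋃ i ∈ s, A i) ↔ ∃ i ∈ s, Intersects n Λ (A i) := by
  obtain ⟨x, rfl⟩ := QuotientGroup.mk_surjective Λ
  simp only [intersects_mk, Set.mem_iUnion₂]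
  tauto

theorem Intersects.mono {Λ : LatticeSpace n} {A B : Set (Fin n → ℝ)} (h : A ⊆ B)
    (hA : Intersects n Λ A) : Intersects n Λ B := fun g hg =>
  (hA g hg).imp fun _ hm => hm.imp_right fun hmA => h hmA

namespace IsShearPair

variable {g : SLR n}

theorem volume_real_sweptCone_rpow (h : IsShearPair (Matrix.SpecialLinearGroup.toLin' g) φ ℓ)
    (β : ℝ) {J : ℕ} (hJ : 0 < J) :
    volume.real (sweptCone (Matrix.SpecialLinearGroup.toLin' g) φ ℓ ((2 * J : ℝ) ^ (-β)) J) =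
      2 ^ (-(β * n)) * volume.real (coneBall φ ℓ 1) * (J : ℝ) ^ (1 - β * n) := by
  have hJ' : (0 : ℝ) < J := Nat.cast_pos.2 hJ
  rw [h.volume_real_sweptCone (by positivity), ← Real.rpow_natCast,
    ← Real.rpow_mul (by positivity), Real.mul_rpow two_pos.le hJ'.le, sub_eq_add_neg,
    Real.rpow_add hJ', Real.rpow_one, neg_mul]
  ring

theorem exists_intersects_of_intersects_sweptCone {Λ : LatticeSpace n} {β : ℝ} (hβ : 0 ≤ β)
    {J : ℕ} (hΛ : Intersects n Λ
      (sweptCone (Matrix.SpecialLinearGroup.toLin' g) φ ℓ ((2 * J : ℝ) ^ (-β)) J)) :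
    ∃ j ≥ J, Intersects n (g ^ j • Λ) {w | ‖w‖ < (j : ℝ) ^ (-β)} := by
  obtain ⟨j, hj, hΛ⟩ := intersects_biUnion.1 hΛ
  obtain ⟨hJj, hjJ⟩ := Finset.mem_Ioc.1 hj
  rw [← map_pow, ← intersects_smul_iff] at hΛ
  refine ⟨j, hJj.le, Intersects.mono (fun w hw => hw.1.trans_le ?_) hΛ⟩
  exact Real.rpow_le_rpow_of_nonpos (Nat.cast_pos.2 (by lia)) (by exact_mod_cast hjJ)
    (neg_nonpos.2 hβ)

theorem ae_forall_exists_intersects_of_three_le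
    (h : IsShearPair (Matrix.SpecialLinearGroup.toLin' g) φ ℓ) (hn : 3 ≤ n)
    {μ : Measure (LatticeSpace n)} [IsProbabilityMeasure μ]
    [SMulInvariantMeasure (SLR n) (LatticeSpace n) μ] {β : ℝ} (hβ : 0 ≤ β) (hβn : β * n < 1) :
    ∀ᵐ Λ ∂μ, ∀ K : ℕ, ∃ j ≥ K, Intersects n (g ^ j • Λ) {w | ‖w‖ < (j : ℝ) ^ (-β)} := by
  refine ae_all_iff.2 fun K => ?_
  have hcone : 0 < volume.real (coneBall φ ℓ 1) := h.measureReal_coneBall_pos volume one_pos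
  set V : ℕ → ℝ := fun J =>
    volume.real (sweptCone (Matrix.SpecialLinearGroup.toLin' g) φ ℓ ((2 * J : ℝ) ^ (-β)) J)
  have hV : Tendsto V atTop atTop := by
    have hpow : Tendsto (fun J : ℕ => (J : ℝ) ^ (1 - β * n)) atTop atTop :=
      (tendsto_rpow_atTop (by linarith)).comp tendsto_natCast_atTop_atTop
    refine (hpow.const_mul_atTop (r := 2 ^ (-(β * n)) * volume.real (coneBall φ ℓ 1))
      (by positivity)).congr' ?_
    filter_upwards [eventually_gt_atTop 0] with J hJ
    exact (h.volume_real_sweptCone_rpow β hJ).symm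
  have hlim : Tendsto (fun J => ENNReal.ofReal (6 / V J)) atTop (nhds 0) := by
    simpa only [ENNReal.ofReal_zero] using
      ENNReal.tendsto_ofReal (tendsto_const_nhds.div_atTop hV)
  refine le_antisymm (ge_of_tendsto hlim ?_) zero_le
  filter_upwards [eventually_ge_atTop K, hV.eventually_gt_atTop 0] with J hJK hJ
  refine le_trans (measure_mono fun Λ (hΛ : ¬ _) (hi : Intersects n Λ _) => hΛ ?_)
    ((h.isTarget_sweptCone J).measure_not_intersects_le hn hJ)
  obtain ⟨j, hj, hj'⟩ := exists_intersects_of_intersects_sweptCone hβ hi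
  exact ⟨j, hJK.trans hj, hj'⟩

end IsShearPair

end SweptCone

section Euclid

variable {M : Type*} [AddCommGroup M] {φ ℓ : M →+ ℝ} {D : ℝ} {v w : M}

/-- A state of the subtractive Euclidean algorithm: two points of the half-plane `φ > 0` lying on
opposite sides of the line `ℓ = 0` and spanning a parallelogram of area `D` in the coordinates
`(φ, ℓ)`. -/
structure IsEuclidPair (φ ℓ : M →+ ℝ) (D : ℝ) (v w : M) : Prop where
  left_pos : 0 < φ v
  right_pos : 0 < φ w
  pos : 0 < ℓ v
  neg : ℓ w < 0
  area : φ w * ℓ v - φ v * ℓ w = D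

namespace IsEuclidPair

theorem symm (h : IsEuclidPair φ ℓ D v w) : IsEuclidPair φ (-ℓ) D w v where
  left_pos := h.right_pos
  right_pos := h.left_pos
  pos := neg_pos.2 h.neg
  neg := neg_neg_iff_pos.2 h.pos
  area := by
    simp only [AddMonoidHom.neg_apply]
    linarith [h.area]

theorem exists_right_lt (h : IsEuclidPair φ ℓ D v w) (hℓ : ∀ m, 0 < φ m → ℓ m ≠ 0) :
    ∃ w', IsEuclidPair φ ℓ D v w' ∧ φ w ≤ φ w' ∧ -ℓ w' < ℓ v ∧
      (ℓ v ≤ -ℓ w → -ℓ w' ≤ -ℓ w - ℓ v) := by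
  set q := ⌊-ℓ w / ℓ v⌋₊
  have hφq : φ (w + q • v) = φ w + q * φ v := by simp only [map_add, map_nsmul, nsmul_eq_mul]
  have hℓq : ℓ (w + q • v) = ℓ w + q * ℓ v := by simp only [map_add, map_nsmul, nsmul_eq_mul]
  have hφle : φ w ≤ φ (w + q • v) := by
    rw [hφq]
    exact le_add_of_nonneg_right (mul_nonneg q.cast_nonneg h.left_pos.le)
  have hφpos : 0 < φ (w + q • v) := h.right_pos.trans_le hφle
  have hle : q * ℓ v ≤ -ℓ w :=
    (le_div_iff₀ h.pos).1 (Nat.floor_le (div_pos (neg_pos.2 h.neg) h.pos).le)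
  have hlt : -ℓ w < (q + 1) * ℓ v := (div_lt_iff₀ h.pos).1 (Nat.lt_floor_add_one _)
  refine ⟨w + q • v, ⟨h.left_pos, hφpos, h.pos, ?_, ?_⟩, hφle, by linarith, fun hvw => ?_⟩
  · exact lt_of_le_of_ne (by linarith) (hℓ _ hφpos)
  · rw [hφq, hℓq, ← h.area]
    ring
  · have hq1 : (1 : ℝ) ≤ q := by
      exact_mod_cast (Nat.one_le_floor_iff _).2 ((one_le_div h.pos).2 hvw)
    linarith [le_mul_of_one_le_left h.pos.le hq1]

theorem exists_left_le_half (h : IsEuclidPair φ ℓ D v w) (hℓ : ∀ m, 0 < φ m → ℓ m ≠ 0) :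
    ∃ v' w', IsEuclidPair φ ℓ D v' w' ∧ φ w ≤ φ w' ∧ ℓ v' ≤ ℓ v / 2 := by
  obtain ⟨w', h', hφ, hw', -⟩ := h.exists_right_lt hℓ
  obtain ⟨v', h'', -, hlt, hle⟩ := h'.symm.exists_right_lt fun m hm => neg_ne_zero.2 (hℓ m hm)
  simp only [AddMonoidHom.neg_apply, neg_neg] at hlt hle
  refine ⟨v', w', by simpa only [neg_neg] using h''.symm, hφ, ?_⟩
  linarith [hle hw'.le]

theorem exists_left_le_div_two_pow (h : IsEuclidPair φ ℓ D v w) (hℓ : ∀ m, 0 < φ m → ℓ m ≠ 0)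
    (k : ℕ) : ∃ v' w', IsEuclidPair φ ℓ D v' w' ∧ φ w ≤ φ w' ∧ ℓ v' ≤ ℓ v / 2 ^ k := by
  induction k with
  | zero => exact ⟨v, w, h, le_rfl, by simp⟩
  | succ k ih =>
    obtain ⟨v', w', h', hφ, hv'⟩ := ih
    obtain ⟨v'', w'', h'', hφ', hv''⟩ := h'.exists_left_le_half hℓ
    exact ⟨v'', w'', h'', hφ.trans hφ', hv''.trans (by rw [pow_succ, ← div_div]; gcongr)⟩

-- The area of the pair bounds `φ w * |ℓ w|` as soon as `|ℓ w| < ℓ v`.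
theorem exists_neg_lt_and_mul_le (h : IsEuclidPair φ ℓ D v w) (hℓ : ∀ m, 0 < φ m → ℓ m ≠ 0)
    {η : ℝ} (hη : 0 < η) : ∃ m, φ w ≤ φ m ∧ ℓ m < 0 ∧ -ℓ m < η ∧ φ m * -ℓ m ≤ D := by
  obtain ⟨k, hk⟩ := exists_pow_lt_of_lt_one (div_pos hη h.pos) (one_half_lt_one (α := ℝ))
  obtain ⟨v', w', h', hφ, hv'⟩ := h.exists_left_le_div_two_pow hℓ k
  obtain ⟨m, hm, hφm, hlt, -⟩ := h'.exists_right_lt hℓ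
  refine ⟨m, hφ.trans hφm, hm.neg, (hlt.trans_le hv').trans ?_, ?_⟩
  · rwa [one_div, inv_pow, lt_div_iff₀ h.pos, mul_comm, ← div_eq_mul_inv] at hk
  · calc φ m * -ℓ m ≤ φ m * ℓ v' := mul_le_mul_of_nonneg_left hlt.le hm.right_pos.le
      _ ≤ D := by linarith [hm.area, mul_neg_of_pos_of_neg hm.left_pos hm.neg]

end IsEuclidPair

end Euclid

section LatticePoints

variable {n : ℕ}

theorem vecOf_add (g : SLR n) (m m' : Fin n → ℤ) :
    vecOf n g (m + m') = vecOf n g m + vecOf n g m' := by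
  rw [vecOf, vecOf, vecOf, ← mulVec_add]
  congr 1
  ext i
  exact Int.cast_add _ _

theorem exists_pos_forall_le_norm_vecOf (g : SLR n) :
    ∃ c > 0, ∀ m : Fin n → ℤ, m ≠ 0 → c ≤ ‖vecOf n g m‖ := by
  set e := (Matrix.SpecialLinearGroup.toLin' g).toContinuousLinearEquiv
  obtain ⟨C, hC, hbound⟩ := (e.symm : (Fin n → ℝ) →L[ℝ] (Fin n → ℝ)).bound
  refine ⟨C⁻¹, inv_pos.2 hC, fun m hm => (inv_le_iff_one_le_mul₀' hC).2 ?_⟩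
  obtain ⟨i, hi⟩ := Function.ne_iff.1 hm
  have hsymm : e.symm (vecOf n g m) = fun i => (m i : ℝ) := e.symm_apply_apply _
  calc (1 : ℝ) ≤ |(m i : ℝ)| := by exact_mod_cast Int.one_le_abs hi
    _ ≤ ‖e.symm (vecOf n g m)‖ := hsymm ▸ norm_le_pi_norm (fun i => (m i : ℝ)) i
    _ ≤ C * ‖vecOf n g m‖ := hbound _

theorem exists_pos_nat_smul_eq_intCast {ι : Type*} [Finite ι] (q : ι → ℚ) :
    ∃ d : ℕ, 0 < d ∧ ∃ m : ι → ℤ, ∀ i, (m i : ℝ) = d * (q i : ℝ) := by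
  have := Fintype.ofFinite ι
  refine ⟨∏ i, (q i).den, Finset.prod_pos fun i _ => (q i).den_pos, ?_⟩
  choose c hc using fun i => Finset.dvd_prod_of_mem (fun i => (q i).den) (Finset.mem_univ i)
  refine ⟨fun i => (q i).num * c i, fun i => ?_⟩
  rw [hc i]
  have hq : ((q i).den : ℝ) * (q i : ℝ) = (q i).num := by exact_mod_cast Rat.den_mul_eq_num (q i)
  push_cast
  rw [← hq]
  ring

theorem exists_vecOf_mem_of_isOpen (g : SLR n) {U : Set (Fin n → ℝ)} (hU : IsOpen U)
    (hne : U.Nonempty) (hsmul : ∀ v ∈ U, ∀ s : ℝ, 0 < s → s • v ∈ U) : ∃ m, vecOf n g m ∈ U := by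
  set e := (Matrix.SpecialLinearGroup.toLin' g).toContinuousLinearEquiv
  have hdense : DenseRange (Pi.map fun (_ : Fin n) (q : ℚ) => (q : ℝ)) :=
    DenseRange.piMap fun _ => Rat.denseRange_cast
  obtain ⟨q, hq⟩ := hdense.exists_mem_open (hU.preimage e.continuous) (hne.preimage e.surjective)
  obtain ⟨d, hd, m, hm⟩ := exists_pos_nat_smul_eq_intCast q
  have hmq : (fun i => (m i : ℝ)) = (d : ℝ) • Pi.map (fun (_ : Fin n) (q : ℚ) => (q : ℝ)) q :=
    funext hm
  refine ⟨m, ?_⟩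
  change e (fun i => (m i : ℝ)) ∈ U
  rw [hmq, map_smul]
  exact hsmul _ hq d (Nat.cast_pos.2 hd)

end LatticePoints

section Incoming

variable {n : ℕ} {T : (Fin n → ℝ) ≃ₗ[ℝ] (Fin n → ℝ)} {φ ℓ : (Fin n → ℝ) →ₗ[ℝ] ℝ}

namespace IsShearPair

theorem exists_vecOf_quadrant (h : IsShearPair T φ ℓ) (g : SLR n) {s : ℝ} (hs : s ≠ 0) :
    ∃ m, 0 < φ (vecOf n g m) ∧ 0 < s * ℓ (vecOf n g m) := by
  obtain ⟨v, hφv, hℓv⟩ := h.exists_left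
  obtain ⟨w, hφw, hℓw⟩ := h.exists_right
  refine exists_vecOf_mem_of_isOpen g (U := {v | 0 < φ v ∧ 0 < s * ℓ v}) ?_ ⟨v + s • w, ?_⟩ ?_
  · exact (isOpen_lt continuous_const φ.continuous_of_finiteDimensional).inter
      (isOpen_lt continuous_const (continuous_const.mul ℓ.continuous_of_finiteDimensional))
  · simp [hφv, hφw, hℓv, hℓw, hs]
  · rintro v ⟨hφv, hℓv⟩ t ht
    simp only [Set.mem_ofPred_eq, map_smul, smul_eq_mul, mul_left_comm s t]
    exact ⟨mul_pos ht hφv, mul_pos ht hℓv⟩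

theorem exists_vecOf_incoming (h : IsShearPair T φ ℓ) {g : SLR n}
    (hg : ∀ m : Fin n → ℤ, m ≠ 0 → ℓ (vecOf n g m) ≠ 0) :
    ∃ D, ∀ B : ℝ, ∃ m : Fin n → ℤ, m ≠ 0 ∧ ∃ X ≥ B, φ (vecOf n g m) = -X * ℓ (vecOf n g m) ∧
      X * ℓ (vecOf n g m) ^ 2 ≤ D := by
  set vec : (Fin n → ℤ) →+ (Fin n → ℝ) := AddMonoidHom.mk' (vecOf n g) (vecOf_add g)
  obtain ⟨v, hφv, hℓv⟩ := h.exists_vecOf_quadrant g one_ne_zero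
  obtain ⟨w, hφw, hℓw⟩ := h.exists_vecOf_quadrant g (neg_ne_zero.2 one_ne_zero)
  rw [one_mul] at hℓv
  rw [neg_one_mul, neg_pos] at hℓw
  have hpair : IsEuclidPair (φ.toAddMonoidHom.comp vec) (ℓ.toAddMonoidHom.comp vec)
      (φ (vec w) * ℓ (vec v) - φ (vec v) * ℓ (vec w)) v w := ⟨hφv, hφw, hℓv, hℓw, rfl⟩
  have hvec {m : Fin n → ℤ} (hm : 0 < φ (vec m)) : m ≠ 0 := by
    rintro rfl
    simp only [map_zero, lt_irrefl] at hm
  refine ⟨φ (vec w) * ℓ (vec v) - φ (vec v) * ℓ (vec w), fun B => ?_⟩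
  obtain ⟨m, hφm, hℓm, hη, hD⟩ := hpair.exists_neg_lt_and_mul_le (fun m hm => hg m (hvec hm))
    (η := φ (vec w) / max B 1) (div_pos hφw (by positivity))
  change φ (vec w) ≤ φ (vec m) at hφm
  have hℓm' : 0 < -ℓ (vec m) := neg_pos.2 hℓm
  refine ⟨m, hvec (hφw.trans_le hφm), φ (vec m) / -ℓ (vec m), ?_, ?_, ?_⟩
  · calc B ≤ max B 1 := le_max_left B 1
      _ ≤ φ (vec w) / -ℓ (vec m) :=
        (le_div_comm₀ (by positivity) hℓm').2 hη.le
      _ ≤ φ (vec m) / -ℓ (vec m) := by gcongr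
  · change φ (vec m) = -(φ (vec m) / -ℓ (vec m)) * ℓ (vec m)
    rw [neg_mul_comm, div_mul_cancel₀ _ hℓm'.ne']
  · change φ (vec m) / -ℓ (vec m) * ℓ (vec m) ^ 2 ≤ _
    rwa [← neg_sq, sq, ← mul_assoc, div_mul_cancel₀ _ hℓm'.ne']

end IsShearPair

end Incoming

section Planar

variable {T : (Fin 2 → ℝ) ≃ₗ[ℝ] (Fin 2 → ℝ)} {φ ℓ : (Fin 2 → ℝ) →ₗ[ℝ] ℝ}

namespace IsShearPair

theorem exists_linearEquiv (h : IsShearPair T φ ℓ) :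
    ∃ e : (Fin 2 → ℝ) ≃ₗ[ℝ] ℝ × ℝ, ∀ v, e v = (φ v, ℓ v) := by
  obtain ⟨v, hφv, hℓv⟩ := h.exists_left
  obtain ⟨w, hφw, hℓw⟩ := h.exists_right
  have hsurj : Function.Surjective (φ.prod ℓ) := fun x =>
    ⟨x.1 • v + x.2 • w, by simp [hφv, hφw, hℓv, hℓw]⟩
  have hrank : Module.finrank ℝ (Fin 2 → ℝ) = Module.finrank ℝ (ℝ × ℝ) := by simp
  exact ⟨LinearEquiv.ofBijective (φ.prod ℓ)
    ⟨(LinearMap.injective_iff_surjective_of_finrank_eq_finrank hrank).2 hsurj, hsurj⟩,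
    fun _ => rfl⟩

theorem exists_norm_le (h : IsShearPair T φ ℓ) : ∃ C > 0, ∀ v, ‖v‖ ≤ C * max |φ v| |ℓ v| := by
  obtain ⟨e, he⟩ := h.exists_linearEquiv
  obtain ⟨C, hC, hbound⟩ :=
    (e.toContinuousLinearEquiv.symm : ℝ × ℝ →L[ℝ] (Fin 2 → ℝ)).bound
  refine ⟨C, hC, fun v => ?_⟩
  calc ‖v‖ = ‖e.toContinuousLinearEquiv.symm (e v)‖ := congrArg _ (e.symm_apply_apply v).symm
    _ ≤ C * ‖e v‖ := hbound (e v)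
    _ = C * max |φ v| |ℓ v| := by rw [he, Prod.norm_mk, Real.norm_eq_abs, Real.norm_eq_abs]

theorem exists_scaling (h : IsShearPair T φ ℓ) {s : ℝ} (hs : s ≠ 0) :
    ∃ a : SLR 2, ∀ v, φ (Matrix.SpecialLinearGroup.toLin' a v) = s * φ v ∧
      ℓ (Matrix.SpecialLinearGroup.toLin' a v) = s⁻¹ * ℓ v := by
  obtain ⟨e, he⟩ := h.exists_linearEquiv
  set S : ℝ × ℝ →ₗ[ℝ] ℝ × ℝ := (s • LinearMap.id).prodMap (s⁻¹ • LinearMap.id)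
  set L : Module.End ℝ (Fin 2 → ℝ) := e.symm ∘ₗ S ∘ₗ (e : (Fin 2 → ℝ) →ₗ[ℝ] ℝ × ℝ)
  have hdet : L.det = 1 := by
    have hconj := LinearMap.det_conj S e.symm
    rw [LinearEquiv.symm_symm] at hconj
    rw [hconj, LinearMap.det_prodMap]
    simp [hs]
  obtain ⟨a, ha⟩ : ∃ a : SLR 2, ∀ v, Matrix.SpecialLinearGroup.toLin' a v = e.symm (S (e v)) :=
    ⟨⟨LinearMap.toMatrix' L, (LinearMap.det_toMatrix' L).trans hdet⟩, LinearMap.toMatrix'_mulVec L⟩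
  refine ⟨a, fun v => ?_⟩
  rw [← Prod.mk.injEq, ← he, ha, e.apply_symm_apply, he]
  simp [S]

end IsShearPair

theorem measure_intersects_eq_zero_of_eventually_subset_ball {n : ℕ}
    {μ : Measure (LatticeSpace n)} [IsFiniteMeasure μ]
    [SMulInvariantMeasure (SLR n) (LatticeSpace n) μ] {A : Set (Fin n → ℝ)}
    (hA : MeasurableSet A) (a : ℕ → SLR n) (ha : ∀ c > 0, ∀ᶠ k in atTop,
      Matrix.SpecialLinearGroup.toLin' (a k) ⁻¹' A ⊆ Metric.ball 0 c) :
    μ {Λ | Intersects n Λ A} = 0 := by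
  set F : Set (LatticeSpace n) := {Λ | Intersects n Λ A}
  have hlim : Tendsto (fun k => μ ((a k • ·) ⁻¹' F)) atTop (nhds (μ ∅)) := by
    refine tendsto_measure_of_tendsto_indicator_of_isFiniteMeasure _ μ
      (fun k => measurable_const_smul (a k) (measurableSet_intersects hA)) fun Λ => ?_
    obtain ⟨g, rfl⟩ := QuotientGroup.mk_surjective Λ
    obtain ⟨c, hc, hlow⟩ := exists_pos_forall_le_norm_vecOf g
    filter_upwards [ha c hc] with k hk
    refine iff_of_false (fun hΛ => ?_) (Set.notMem_empty _)
    obtain ⟨m, hm, hmA⟩ := intersects_mk.1 (intersects_smul_iff.1 hΛ)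
    exact (hlow m hm).not_gt (mem_ball_zero_iff.1 (hk hmA))
  simp only [measure_preimage_smul, measure_empty] at hlim
  exact tendsto_nhds_unique tendsto_const_nhds hlim

namespace IsShearPair

theorem ae_not_intersects_ker (h : IsShearPair T φ ℓ) {μ : Measure (LatticeSpace 2)}
    [IsFiniteMeasure μ] [SMulInvariantMeasure (SLR 2) (LatticeSpace 2) μ] :
    ∀ᵐ Λ ∂μ, ¬ Intersects 2 Λ {v | ℓ v = 0} := by
  obtain ⟨C, hC, hnorm⟩ := h.exists_norm_le
  choose a ha using fun k : ℕ => h.exists_scaling (Nat.cast_add_one_ne_zero (R := ℝ) k)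
  set A : ℕ → Set (Fin 2 → ℝ) := fun N => {v | ℓ v = 0 ∧ |φ v| ≤ N}
  have hA (N : ℕ) : MeasurableSet (A N) :=
    ((isClosed_eq ℓ.continuous_of_finiteDimensional continuous_const).inter
      (isClosed_le φ.continuous_of_finiteDimensional.abs continuous_const)).measurableSet
  have hnull (N : ℕ) : ∀ᵐ Λ ∂μ, ¬ Intersects 2 Λ (A N) := by
    refine measure_eq_zero_iff_ae_notMem.1
      (measure_intersects_eq_zero_of_eventually_subset_ball (hA N) a fun c hc => ?_)
    filter_upwards [tendsto_natCast_atTop_atTop.eventually_gt_atTop (C * N / c)] with k hk v hv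
    obtain ⟨hℓv, hφv⟩ := hv
    have hk' : (0 : ℝ) < k + 1 := k.cast_add_one_pos
    rw [(ha k v).2, mul_eq_zero_iff_left (inv_ne_zero hk'.ne')] at hℓv
    rw [(ha k v).1, abs_mul, abs_of_pos hk', ← le_div_iff₀' hk'] at hφv
    rw [div_lt_iff₀' hc] at hk
    rw [mem_ball_zero_iff]
    calc ‖v‖ ≤ C * max |φ v| |ℓ v| := hnorm v
      _ = C * |φ v| := by rw [hℓv, abs_zero, max_eq_left (abs_nonneg _)]
      _ ≤ C * (N / (k + 1)) := by gcongr
      _ < c := by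
        rw [← mul_div_assoc, div_lt_iff₀ hk', mul_add_one]
        linarith
  filter_upwards [ae_all_iff.2 hnull] with Λ hΛ hker
  obtain ⟨g, rfl⟩ := QuotientGroup.mk_surjective Λ
  obtain ⟨m, hm, hℓm⟩ := intersects_mk.1 hker
  exact hΛ ⌈|φ (vecOf 2 g m)|⌉₊ (intersects_mk.2 ⟨m, hm, hℓm, Nat.le_ceil _⟩)

theorem abs_pow_floor_le {E : Type*} [AddCommGroup E] [Module ℝ E] {T : E ≃ₗ[ℝ] E}
    {φ ℓ : E →ₗ[ℝ] ℝ} (h : IsShearPair T φ ℓ) {v : E} {X : ℝ} (hX : 0 ≤ X)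
    (hv : φ v = -X * ℓ v) : |φ ((T ^ ⌊X⌋₊) v)| ≤ |ℓ v| := by
  have hfloor : |(⌊X⌋₊ : ℝ) - X| ≤ 1 := abs_le.2
    ⟨by linarith [Nat.lt_floor_add_one X], by linarith [Nat.floor_le hX]⟩
  calc |φ ((T ^ ⌊X⌋₊) v)| = |(⌊X⌋₊ : ℝ) - X| * |ℓ v| := by
        rw [h.pow_left, hv, ← add_mul, neg_add_eq_sub, abs_mul]
    _ ≤ |ℓ v| := mul_le_of_le_one_left (abs_nonneg _) hfloor

end IsShearPair

theorem eventually_const_mul_rpow_lt (M : ℝ) {α β : ℝ} (h : α < β) :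
    ∀ᶠ t : ℝ in atTop, M * t ^ α < t ^ β := by
  have hlim : Tendsto (fun t : ℝ => M * t ^ (-(β - α))) atTop (nhds 0) := by
    simpa only [mul_zero] using (tendsto_rpow_neg_atTop (sub_pos.2 h)).const_mul M
  filter_upwards [hlim.eventually_lt_const one_pos, eventually_gt_atTop 0] with t hlt ht
  calc M * t ^ α = M * t ^ (-(β - α)) * t ^ β := by
        rw [mul_assoc, ← Real.rpow_add ht]
        ring_nf
    _ < t ^ β := mul_lt_of_lt_one_left (Real.rpow_pos_of_pos ht β) hlt

namespace IsShearPair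

theorem exists_intersects_of_not_intersects_ker {g : SLR 2}
    (h : IsShearPair (Matrix.SpecialLinearGroup.toLin' g) φ ℓ) {Λ : LatticeSpace 2}
    (hΛ : ¬ Intersects 2 Λ {v | ℓ v = 0}) {β : ℝ} (hβ : β < 1 / 2) (K : ℕ) :
    ∃ j ≥ K, Intersects 2 (g ^ j • Λ) {w | ‖w‖ < (j : ℝ) ^ (-β)} := by
  obtain ⟨x, rfl⟩ := QuotientGroup.mk_surjective Λ
  obtain ⟨C, hC, hnorm⟩ := h.exists_norm_le
  obtain ⟨D, hD⟩ := h.exists_vecOf_incoming fun m hm h0 => hΛ (intersects_mk.2 ⟨m, hm, h0⟩)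
  obtain ⟨I, hI⟩ := eventually_atTop.1 (tendsto_natCast_atTop_atTop.eventually
    (eventually_const_mul_rpow_lt (C * √D) (neg_lt_neg hβ)))
  obtain ⟨m, hm, X, hX, hφ, hℓ⟩ := hD ((I + K + 1 : ℕ) : ℝ)
  set v := vecOf 2 x m
  have hX0 : 0 ≤ X := (Nat.cast_nonneg _).trans hX
  have hfloor : I + K + 1 ≤ ⌊X⌋₊ := Nat.le_floor hX
  have hpos : (0 : ℝ) < ⌊X⌋₊ := Nat.cast_pos.2 (by lia)
  have hℓv : |ℓ v| ≤ √D * (⌊X⌋₊ : ℝ) ^ (-(1 / 2) : ℝ) := by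
    rw [Real.rpow_neg hpos.le, ← Real.sqrt_eq_rpow, ← div_eq_mul_inv, ← Real.sqrt_div' D hpos.le]
    refine Real.abs_le_sqrt ((le_div_iff₀' hpos).2 (le_trans ?_ hℓ))
    exact mul_le_mul_of_nonneg_right (Nat.floor_le hX0) (sq_nonneg _)
  refine ⟨⌊X⌋₊, by lia, intersects_smul_iff.2 (intersects_mk.2 ⟨m, hm, ?_⟩)⟩
  rw [map_pow]
  set T := Matrix.SpecialLinearGroup.toLin' g
  calc ‖(T ^ ⌊X⌋₊) v‖ ≤ C * max |φ ((T ^ ⌊X⌋₊) v)| |ℓ ((T ^ ⌊X⌋₊) v)| := hnorm _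
    _ ≤ C * |ℓ v| := by
      rw [h.pow_right]
      gcongr
      exact max_le (h.abs_pow_floor_le hX0 hφ) le_rfl
    _ ≤ C * (√D * (⌊X⌋₊ : ℝ) ^ (-(1 / 2) : ℝ)) := by gcongr
    _ = C * √D * (⌊X⌋₊ : ℝ) ^ (-(1 / 2) : ℝ) := (mul_assoc _ _ _).symm
    _ < (⌊X⌋₊ : ℝ) ^ (-β) := hI _ (by lia)

end IsShearPair

end Planar

section Conclusion

variable {n : ℕ}

theorem isNilpotent_toLin'_sub_one {g : SLR n}
    (hg : IsNilpotent ((g : Matrix (Fin n) (Fin n) ℝ) - 1)) :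
    IsNilpotent ((Matrix.SpecialLinearGroup.toLin' g : Module.End ℝ (Fin n → ℝ)) - 1) := by
  have h := hg.map (Matrix.toLinAlgEquiv' : Matrix (Fin n) (Fin n) ℝ ≃ₐ[ℝ] _)
  rwa [map_sub, map_one] at h

theorem two_le_of_ne_one {g : SLR n} (hg : g ≠ 1) : 2 ≤ n := by
  by_contra! hn
  have : Subsingleton (Fin n) := Fin.subsingleton_iff_le_one.2 (Nat.le_of_lt_succ hn)
  exact hg (Subsingleton.elim g 1)

theorem ae_forall_exists_intersects {g : SLR n}
    (hg : IsNilpotent ((g : Matrix (Fin n) (Fin n) ℝ) - 1)) (hg1 : g ≠ 1)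
    {μ : Measure (LatticeSpace n)} [IsProbabilityMeasure μ]
    [SMulInvariantMeasure (SLR n) (LatticeSpace n) μ] {β : ℝ} (hβ : 0 ≤ β) (hβn : β * n < 1) :
    ∀ᵐ Λ ∂μ, ∀ K : ℕ, ∃ j ≥ K, Intersects n (g ^ j • Λ) {w | ‖w‖ < (j : ℝ) ^ (-β)} := by
  obtain ⟨φ, ℓ, h⟩ := exists_isShearPair (isNilpotent_toLin'_sub_one hg) fun h =>
    hg1 (Matrix.SpecialLinearGroup.toLin'_injective (h.trans (map_one _).symm))
  rcases (two_le_of_ne_one hg1).eq_or_lt with rfl | hn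
  · filter_upwards [h.ae_not_intersects_ker] with Λ hΛ
    exact h.exists_intersects_of_not_intersects_ker hΛ ((lt_div_iff₀ two_pos).2 hβn)
  · exact h.ae_forall_exists_intersects_of_three_le hn hβ hβn

theorem norm_le_eNorm (v : Fin n → ℝ) : ‖v‖ ≤ eNorm v :=
  (pi_norm_le_iff_of_nonneg (norm_nonneg _)).2 fun i =>
    PiLp.norm_apply_le ((WithLp.equiv 2 (Fin n → ℝ)).symm v) i

theorem eNorm_le_sqrt_mul_norm (v : Fin n → ℝ) : eNorm v ≤ √n * ‖v‖ := by
  rw [eNorm, EuclideanSpace.norm_eq]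
  refine Real.sqrt_le_iff.2 ⟨by positivity, ?_⟩
  calc ∑ i, ‖v i‖ ^ 2 ≤ ∑ _i : Fin n, ‖v‖ ^ 2 := by
        gcongr with i
        exact norm_le_pi_norm v i
    _ = (√n * ‖v‖) ^ 2 := by simp [mul_pow, Real.sq_sqrt n.cast_nonneg]

theorem inv_le_sqrt_mul_alpha1 {Λ : LatticeSpace n} {s : ℝ} (h : Intersects n Λ {w | ‖w‖ < s}) :
    s⁻¹ ≤ √n * alpha1 n Λ := by
  obtain ⟨g, rfl⟩ := QuotientGroup.mk_surjective Λ
  obtain ⟨c, hc, hlow⟩ := exists_pos_forall_le_norm_vecOf g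
  obtain ⟨m, hm, hs⟩ := intersects_mk.1 h
  have hpos : 0 < eNorm (vecOf n g m) := hc.trans_le ((hlow m hm).trans (norm_le_eNorm _))
  have hbdd : BddAbove {r : ℝ | ∃ g' : SLR n,
      (QuotientGroup.mk g' : LatticeSpace n) = QuotientGroup.mk g ∧
        ∃ m : Fin n → ℤ, m ≠ 0 ∧ r = 1 / eNorm (vecOf n g' m)} := by
    refine ⟨1 / c, ?_⟩
    rintro _ ⟨g', hg', m', hm', rfl⟩
    have hv : Intersects n (QuotientGroup.mk g) {vecOf n g' m'} :=
      hg' ▸ intersects_mk.2 ⟨m', hm', rfl⟩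
    obtain ⟨m'', hm'', hv⟩ := intersects_mk.1 hv
    rw [← Set.mem_singleton_iff.1 hv]
    exact one_div_le_one_div_of_le hc ((hlow m'' hm'').trans (norm_le_eNorm _))
  calc s⁻¹ ≤ √n * (1 / eNorm (vecOf n g m)) := by
        have hs0 : 0 < s := (norm_nonneg _).trans_lt hs
        rw [mul_one_div, le_div_iff₀ hpos, inv_mul_le_iff₀ hs0, mul_comm]
        exact (eNorm_le_sqrt_mul_norm _).trans
          (mul_le_mul_of_nonneg_left hs.le (Real.sqrt_nonneg _))
    _ ≤ √n * alpha1 n (QuotientGroup.mk g) := by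
        gcongr
        exact le_csSup hbdd ⟨g, rfl, m, hm, rfl⟩

theorem eventually_mul_natCast_mul_le_rpow {ψ : ℝ → ℝ} {β γ τ M : ℝ}
    (hψ : ψ =O[atTop] fun t => t ^ β) (hβγ : β < γ) (hτ : 0 < τ) (hM : 0 ≤ M) :
    ∀ᶠ j : ℕ in atTop, M * ψ (j * τ) ≤ (j : ℝ) ^ γ := by
  obtain ⟨C, hC⟩ := hψ.bound
  have hlim : Tendsto (fun j : ℕ => (j : ℝ) * τ) atTop atTop :=
    tendsto_natCast_atTop_atTop.atTop_mul_const hτ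
  filter_upwards [hlim.eventually hC,
    hlim.eventually (eventually_const_mul_rpow_lt (τ ^ γ * (M * C)) hβγ)] with j hψj hlt
  have hj' : (0 : ℝ) ≤ j := Nat.cast_nonneg j
  rw [Real.norm_of_nonneg (by positivity : 0 ≤ (j * τ) ^ β)] at hψj
  rw [Real.mul_rpow hj' hτ.le (z := γ)] at hlt
  calc M * ψ (j * τ) ≤ M * (C * (j * τ) ^ β) := by
        gcongr
        exact (le_abs_self _).trans hψj
    _ ≤ j ^ γ := by
        refine le_of_mul_le_mul_right (le_of_eq_of_le ?_ hlt.le) (Real.rpow_pos_of_pos hτ γ)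
        ring

theorem isBigO_mul_rpow_of_tendsto_div_rpow {r : ℝ → ℝ} {α a : ℝ}
    (h : Tendsto (fun t => r t / t ^ α) atTop (nhds a)) (M κ : ℝ) :
    (fun t => M * r t * t ^ κ) =O[atTop] fun t => t ^ (α + κ) := by
  have hr : r =O[atTop] fun t => t ^ α := by
    refine Asymptotics.isBigO_of_div_tendsto_nhds ?_ a h
    filter_upwards [eventually_gt_atTop 0] with t ht h0
    exact absurd h0 (Real.rpow_pos_of_pos ht α).ne'
  refine ((hr.const_mul_left M).mul (Asymptotics.isBigO_refl _ _)).congr' .rfl ?_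
  filter_upwards [eventually_gt_atTop 0] with t ht
  exact (Real.rpow_add ht α κ).symm

theorem map_natCast_mul_of_map_add {G : Type*} [Group G] {u : ℝ → G}
    (hu : ∀ s t, u (s + t) = u s * u t) (j : ℕ) (t : ℝ) : u (j * t) = u t ^ j := by
  induction j with
  | zero => simpa using hu 0 0
  | succ j ih => rw [Nat.cast_succ, add_one_mul, hu, ih, pow_succ]

theorem exists_pos_map_ne_one {G : Type*} [Group G] {u : ℝ → G}
    (hu : ∀ s t, u (s + t) = u s * u t) (hne : ∃ t, u t ≠ 1) : ∃ t > 0, u t ≠ 1 := by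
  obtain ⟨t, ht⟩ := hne
  have hu0 : u 0 = 1 := by simpa using hu 0 0
  rcases lt_trichotomy t 0 with hneg | rfl | hpos
  · refine ⟨-t, neg_pos.2 hneg, fun h => ht ?_⟩
    have hinv := hu t (-t)
    rwa [add_neg_cancel, hu0, h, mul_one, eq_comm] at hinv
  · exact absurd hu0 ht
  · exact ⟨t, hpos, ht⟩

end Conclusion

theorem sharpened_lower_bound_general {n : ℕ} {μ : Measure (LatticeSpace n)}
    [IsProbabilityMeasure μ] [SMulInvariantMeasure (SLR n) (LatticeSpace n) μ] {u : ℝ → SLR n}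
    (hu_hom : ∀ s t, u (s + t) = u s * u t)
    (hu_unip : ∀ t, IsNilpotent ((u t : Matrix (Fin n) (Fin n) ℝ) - 1)) (hu_ne : ∃ t, u t ≠ 1)
    {ψ : ℝ → ℝ} {β : ℝ} (hβ : β < 1 / n) (hψ : ψ =O[atTop] fun t => t ^ β) :
    ∀ᵐ Λ ∂μ, ∃ tk : ℕ → ℝ, Tendsto tk atTop atTop ∧
      ∀ k, ψ (tk k) ≤ alpha1 n (u (tk k) • Λ) := by
  obtain ⟨τ, hτ, huτ⟩ := exists_pos_map_ne_one hu_hom hu_ne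
  have hn : (0 : ℝ) < n := Nat.cast_pos.2 (two_pos.trans_le (two_le_of_ne_one huτ))
  obtain ⟨γ, hγ, hγn⟩ := exists_between (max_lt (one_div_pos.2 hn) hβ)
  obtain ⟨hγ0, hβγ⟩ := max_lt_iff.1 hγ
  obtain ⟨K, hK⟩ :=
    eventually_atTop.1 (eventually_mul_natCast_mul_le_rpow hψ hβγ hτ (Real.sqrt_nonneg n))
  filter_upwards [ae_forall_exists_intersects (hu_unip τ) huτ hγ0.le ((lt_div_iff₀ hn).1 hγn)]
    with Λ hΛ
  choose j hjk hj using fun k : ℕ => hΛ (K + k)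
  refine ⟨fun k => j k * τ, ?_, fun k => ?_⟩
  · refine (tendsto_natCast_atTop_atTop.comp ?_).atTop_mul_const hτ
    exact tendsto_atTop_mono (fun k => (Nat.le_add_left k K).trans (hjk k)) tendsto_id
  · have hle := inv_le_sqrt_mul_alpha1 (hj k)
    rw [Real.rpow_neg (j k).cast_nonneg, inv_inv, ← map_natCast_mul_of_map_add hu_hom] at hle
    exact le_of_mul_le_mul_left ((hK _ ((Nat.le_add_right K k).trans (hjk k))).trans hle)
      (Real.sqrt_pos.2 hn)

/-- **A sharpening of the lower bound.** Let `r : ℝ → ℝ⁺` satisfy, for constants `c, δ > 0`: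
`t ↦ r(t)/t^{1/n}` non-decreasing (for `t > 0`), `r(t)/t^{(1+δ)/n} → 0`, and
`liminf r(t) t^{2δ/n}/r(t^{1+2δ}) > c`. Then for almost every unimodular lattice `Λ` there is
a sequence `t_k → ∞` with `α₁(u_{t_k} Λ) ≥ (c/(n-1)) r(t_k) t_k^{-2δ/n}`. -/
theorem sharpened_lower_bound (n : ℕ) (hn : 2 ≤ n)
    (μ : Measure (LatticeSpace n)) [IsProbabilityMeasure μ]
    (hinv : ∀ (g : SLR n) (s : Set (LatticeSpace n)), μ ((fun x => g • x) ⁻¹' s) = μ s)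
    (u : ℝ → SLR n) (hu_hom : ∀ s t : ℝ, u (s + t) = u s * u t)
    (hu_cont : Continuous fun t => (u t : Matrix (Fin n) (Fin n) ℝ))
    (hu_unip : ∀ t, IsNilpotent ((u t : Matrix (Fin n) (Fin n) ℝ) - 1))
    (hu_ne : ∃ t, u t ≠ 1)
    (r : ℝ → ℝ) (hr_pos : ∀ t, 0 < r t) (c δ : ℝ) (hc : 0 < c) (hδ : 0 < δ)
    (h1 : MonotoneOn (fun t => r t / t ^ ((1 : ℝ) / n)) (Set.Ioi 0))
    (h2 : Tendsto (fun t => r t / t ^ ((1 + δ) / (n : ℝ))) atTop (nhds 0))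
    (h3 : c < Filter.liminf
      (fun t => r t * t ^ (2 * δ / (n : ℝ)) / r (t ^ (1 + 2 * δ))) atTop) :
    ∀ᵐ Λ ∂μ, ∃ tk : ℕ → ℝ, Tendsto tk atTop atTop ∧ ∀ k : ℕ,
      (c / ((n : ℝ) - 1)) * r (tk k) * (tk k) ^ (-(2 * δ) / (n : ℝ)) ≤
        alpha1 n (u (tk k) • Λ) := by
  have : SMulInvariantMeasure (SLR n) (LatticeSpace n) μ := ⟨fun g s _ => hinv g s⟩
  refine sharpened_lower_bound_general hu_hom hu_unip hu_ne ?_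
    (isBigO_mul_rpow_of_tendsto_div_rpow h2 _ _)
  rw [← add_div]
  exact div_lt_div_of_pos_right (by linarith) (Nat.cast_pos.2 (two_pos.trans_le hn))
end
end
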